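/- For every integer k ≥ 3 and every δ > 0, there exist c > 0, η > 0 and N₀ such that the following holds for all N ≥ N₀: if ν : Z_N → ℝ_{≥0} satisfies the k-linear forms condition within η, and f : Z_N → ℝ_{≥0} satisfies 0 ≤ f(x) ≤ ν(x) for all x ∈ Z_N and E[f(x) | x ∈ Z_N] ≥ δ, then E[f(x)·f(x+d)·f(x+2d)···f(x+(k−1)d) | x, d ∈ Z_N] ≥ c. -/

import Mathlib

/-!
The proof transfers Szemerédi's theorem in `ZMod N` from bounded functions to functions bounded
by `ν`, following the densification method of Conlon, Fox and Zhao.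

*Szemerédi's theorem* (`szemeredi`). The density Hales–Jewett theorem is proved by induction on the
alphabet (`DHJ.option`). At the critical density, all slices of a line-free set have nearly the same
density. The Graham–Rothschild theorem for lines (`graham_rothschild`) and the density theorem for
the smaller alphabet give a subspace all of whose lines over the smaller alphabet lie in a
substantial common set of slices. This produces an intersection of insensitive sets in which the
line-free set is almost absent, hence a density increment on the complement. Insensitive sets are
exhausted by subspaces (`part`, `compl_inter_le`), and the increment contradicts criticality.
Progressions come from lines by mapping words in `Fin k` linearly to `ZMod N`, and averaging over
the choice of the map gives a positive density of progressions.

*Transference.* The forms `Lf j x = ∑ i, (i - j) x_i` parametrize `k`-term progressions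
(`avg_Lf`), and `Lf j` does not involve `x_j`. A weighted Gowers–Cauchy–Schwarz inequality (`gcs`)
and the linear forms condition show that `ν - 1` is small in a cut norm (`exists_Nle_nu_sub_one`).
Finite-dimensional separation together with the approximation of the positive part by polynomials
gives a bounded model `0 ≤ f' ≤ 1` of `f` that is close to it in this norm (`dense_model`); the
point is that the dual functions span a bounded set closed under products. Finally `f` is replaced
by `f'` one form at a time (`relative_counting`). For the form `s`, the product of the
remaining factors is averaged over `x_s`; by `strong_linear_forms` the weight `ν` on the form `s`
can be replaced by `1` in the resulting second moment, and by `avg_dev_sq_le` the averaged product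
is essentially bounded, so that the statement for fewer forms applies with this average as a
bounded test function.

Since `N` need not be coprime to `(k - 1)!`, the cut norm `Nle` is defined with the step
`(k - 1)!`, a common multiple of all nonzero coefficients of the forms.
-/

open Finset

/-- The average (expectation with respect to the uniform measure) of `f` over `α`. -/
noncomputable def avg {α : Type*} [Fintype α] (f : α → ℝ) : ℝ :=
  (∑ x, f x) / (Fintype.card α)

/-- The linear form `∑_{i} (i - j) · x_i^{(ω_i)}` in `ZMod N`, where for `i ≠ j` the
variable `x_i^{(ω_i)}` equals `x₁ i` if `ω i` and `x₀ i` otherwise (the `i = j` term has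
coefficient zero). -/
noncomputable def kForm (k N : ℕ) [NeZero N] (j : Fin k)
    (x₀ x₁ : Fin k → ZMod N) (ω : {i : Fin k // i ≠ j} → Bool) : ZMod N :=
  ∑ i : Fin k, ((((i : ℕ) : ℤ) - ((j : ℕ) : ℤ) : ℤ) : ZMod N) *
    (if h : i = j then 0 else if ω ⟨i, h⟩ then x₁ i else x₀ i)

/-- `ν : ZMod N → ℝ` satisfies the `k`-linear forms condition within `η`: for every choice
of exponents `n (j, ω) ∈ {0,1}` (indexed by `j ∈ [k]` and `ω ∈ {0,1}^{[k]∖{j}}`),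
`|E[∏_{j} ∏_{ω} ν(∑_i (i-j) x_i^{(ω_i)})^{n_{j,ω}}] - 1| ≤ η`, the expectation being over
uniform independent `x₁⁽⁰⁾, x₁⁽¹⁾, …, x_k⁽⁰⁾, x_k⁽¹⁾ ∈ ZMod N`. -/
noncomputable def kLinearFormsCondition (k N : ℕ) [NeZero N] (ν : ZMod N → ℝ) (η : ℝ) :
    Prop :=
  ∀ n : (j : Fin k) → ({i : Fin k // i ≠ j} → Bool) → Bool,
    |avg (fun x : (Fin k → ZMod N) × (Fin k → ZMod N) =>
      ∏ j : Fin k, ∏ ω : {i : Fin k // i ≠ j} → Bool,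
        if n j ω then ν (kForm k N j x.1 x.2 ω) else 1) - 1| ≤ η

/-! ### Averages over finite types -/

namespace RelSz

section Avg
variable {α β : Type*} [Fintype α] [Fintype β]

lemma avg_const [Nonempty α] (c : ℝ) : avg (fun _ : α => c) = c := by
  have : (Fintype.card α : ℝ) ≠ 0 := by exact_mod_cast Fintype.card_ne_zero
  simp only [avg, sum_const, card_univ, nsmul_eq_mul]
  field_simp

lemma avg_add (f g : α → ℝ) : avg (fun x => f x + g x) = avg f + avg g := by
  simp only [avg, sum_add_distrib, add_div]

lemma avg_sub (f g : α → ℝ) : avg (fun x => f x - g x) = avg f - avg g := by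
  simp only [avg, sum_sub_distrib, sub_div]

lemma avg_neg (f : α → ℝ) : avg (fun x => - f x) = - avg f := by
  simp only [avg, sum_neg_distrib, neg_div]

lemma avg_mul_left (c : ℝ) (f : α → ℝ) : avg (fun x => c * f x) = c * avg f := by
  simp only [avg, ← mul_sum, mul_div_assoc]

lemma avg_mul_right (c : ℝ) (f : α → ℝ) : avg (fun x => f x * c) = avg f * c := by
  simp only [avg, ← sum_mul]; ring

lemma avg_sum {ι : Type*} (s : Finset ι) (f : ι → α → ℝ) :
    avg (fun x => ∑ i ∈ s, f i x) = ∑ i ∈ s, avg (f i) := by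
  simp only [avg, ← sum_div]
  rw [sum_comm]

lemma avg_mono {f g : α → ℝ} (h : ∀ x, f x ≤ g x) : avg f ≤ avg g := by
  unfold avg
  exact div_le_div_of_nonneg_right (sum_le_sum fun x _ => h x) (Nat.cast_nonneg _)

lemma avg_nonneg {f : α → ℝ} (h : ∀ x, 0 ≤ f x) : 0 ≤ avg f :=
  div_nonneg (sum_nonneg fun x _ => h x) (Nat.cast_nonneg _)

lemma avg_le_of_le [Nonempty α] {f : α → ℝ} {c : ℝ} (h : ∀ x, f x ≤ c) : avg f ≤ c :=
  (avg_mono h).trans_eq (avg_const c)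

lemma le_avg_of_le [Nonempty α] {f : α → ℝ} {c : ℝ} (h : ∀ x, c ≤ f x) : c ≤ avg f :=
  (avg_const c).symm.trans_le (avg_mono h)

lemma abs_avg_le_avg_abs (f : α → ℝ) : |avg f| ≤ avg (fun x => |f x|) := by
  unfold avg
  rw [abs_div, Nat.abs_cast]
  exact div_le_div_of_nonneg_right (abs_sum_le_sum_abs _ _) (Nat.cast_nonneg _)

lemma abs_avg_le [Nonempty α] {f : α → ℝ} {c : ℝ} (h : ∀ x, |f x| ≤ c) : |avg f| ≤ c :=
  (abs_avg_le_avg_abs f).trans (avg_le_of_le h)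

lemma exists_avg_le [Nonempty α] (f : α → ℝ) : ∃ x, avg f ≤ f x := by
  by_contra! h
  have hc : (0:ℝ) < Fintype.card α := by exact_mod_cast Fintype.card_pos
  have : ∑ x, f x < ∑ _x : α, avg f :=
    sum_lt_sum_of_nonempty univ_nonempty fun x _ => h x
  rw [sum_const, card_univ, nsmul_eq_mul, avg, mul_div_cancel₀ _ hc.ne'] at this
  exact lt_irrefl _ this

lemma avg_equiv (e : α ≃ β) (f : β → ℝ) : avg (fun x => f (e x)) = avg f := by
  unfold avg
  rw [Fintype.card_congr e, Equiv.sum_comp e f]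

lemma avg_prod (f : α × β → ℝ) : avg f = avg (fun a => avg fun b => f (a, b)) := by
  simp only [avg, ← sum_div, Fintype.sum_prod_type, Fintype.card_prod, Nat.cast_mul, div_div]
  rw [mul_comm]

lemma avg_comm (f : α → β → ℝ) :
    avg (fun a => avg fun b => f a b) = avg (fun b => avg fun a => f a b) := by
  simp only [avg, ← sum_div]
  rw [sum_comm, div_right_comm]

lemma avg_mul_sq_le (f g : α → ℝ) :
    (avg fun x => f x * g x) ^ 2 ≤ avg (fun x => f x ^ 2) * avg (fun x => g x ^ 2) := by
  simp only [avg, div_pow, div_mul_div_comm, ← sq]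
  exact div_le_div_of_nonneg_right (sum_mul_sq_le_sq_mul_sq _ _ _) (by positivity)

lemma avg_sq_le [Nonempty α] (f : α → ℝ) : (avg f) ^ 2 ≤ avg (fun x => f x ^ 2) := by
  have := avg_mul_sq_le f (fun _ => 1)
  simpa [avg_const] using this

/-- Weighted Cauchy–Schwarz inequality. -/
lemma avg_weight_sq_le (w A B : α → ℝ) (hA : ∀ x, |A x| ≤ w x) :
    (avg fun x => A x * B x) ^ 2 ≤ avg w * avg (fun x => w x * B x ^ 2) := by
  have hw : ∀ x, 0 ≤ w x := fun x => (abs_nonneg _).trans (hA x)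
  have h1 : |avg fun x => A x * B x| ≤ avg fun x => √(w x) * (√(w x) * |B x|) := by
    refine (abs_avg_le_avg_abs _).trans (avg_mono fun x => ?_)
    rw [abs_mul, ← mul_assoc, Real.mul_self_sqrt (hw x)]
    exact mul_le_mul_of_nonneg_right (hA x) (abs_nonneg _)
  calc (avg fun x => A x * B x) ^ 2 = |avg fun x => A x * B x| ^ 2 := (sq_abs _).symm
    _ ≤ (avg fun x => √(w x) * (√(w x) * |B x|)) ^ 2 :=
        pow_le_pow_left₀ (abs_nonneg _) h1 2
    _ ≤ _ := avg_mul_sq_le _ _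
    _ = _ := by
        congr 1
        · congr 1; funext x; exact Real.sq_sqrt (hw x)
        · congr 1; funext x; rw [mul_pow, Real.sq_sqrt (hw x), sq_abs]

lemma avg_unique [Unique α] (f : α → ℝ) : avg f = f default := by
  simp [avg]

lemma avg_update {ι X : Type*} [Fintype ι] [DecidableEq ι] [Fintype X] [Nonempty X]
    (i : ι) (F : (ι → X) → ℝ) :
    avg F = avg (fun x => avg fun t => F (Function.update x i t)) := by
  have h1 : ∀ G : (ι → X) → ℝ, avg G = avg fun z : ({j // j ≠ i} → X) =>
      avg fun t : X => G ((Equiv.funSplitAt i X).symm (t, z)) := by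
    intro G
    rw [← avg_equiv (Equiv.funSplitAt i X).symm G, avg_prod, avg_comm]
  rw [h1 F, h1 (fun x => avg fun t => F (Function.update x i t))]
  congr 1; funext z
  have : ∀ s t : X, Function.update ((Equiv.funSplitAt i X).symm (s, z)) i t
      = (Equiv.funSplitAt i X).symm (t, z) := by
    intro s t
    funext j
    by_cases hj : j = i
    · subst hj; simp [Equiv.funSplitAt, Equiv.piSplitAt]
    · simp [Equiv.funSplitAt, Equiv.piSplitAt, hj]
  simp only [this, avg_const]

lemma avg_sumElim {ι κ X : Type*} [Fintype ι] [Fintype κ] [DecidableEq ι] [DecidableEq κ]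
    [Fintype X] (F : (ι ⊕ κ → X) → ℝ) :
    avg F = avg (fun x : ι → X => avg fun y : κ → X => F (Sum.elim x y)) := by
  rw [← avg_equiv (Equiv.sumArrowEquivProdArrow ι κ X).symm F, avg_prod]
  rfl

end Avg

section Group
variable {G H : Type*} [AddCommGroup G] [Fintype G] [AddCommGroup H] [Fintype H]

lemma avg_add_right (a : G) (f : G → ℝ) : avg (fun x => f (x + a)) = avg f :=
  avg_equiv (Equiv.addRight a) f

lemma sum_hom_fiber [DecidableEq H] (φ : G →+ H) (f : H → ℝ) :
    ∑ x, f (φ x) = (Nat.card φ.ker : ℝ) * ∑ y ∈ univ.filter (fun y => y ∈ Set.range φ), f y := by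
  classical
  have h : ∀ y ∈ univ.image φ, ((univ.filter fun x => φ x = y).card : ℝ) = Nat.card φ.ker := by
    intro y hy
    obtain ⟨x₀, -, rfl⟩ := mem_image.1 hy
    rw [Nat.card_eq_fintype_card, Fintype.card_subtype]
    norm_cast
    refine card_bij (fun x _ => x - x₀) ?_ ?_ ?_
    · intro x hx; simp at hx; simp [AddMonoidHom.mem_ker, hx]
    · intro x _ y _ h; simpa using h
    · intro z hz
      refine ⟨z + x₀, ?_, by simp⟩
      simp [AddMonoidHom.mem_ker] at hz
      simp [hz]
  have h2 : univ.filter (fun y => y ∈ Set.range φ) = univ.image φ := by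
    ext; simp
  rw [h2, mul_sum, ← sum_fiberwise_of_maps_to (t := univ.image φ) (g := φ)
    (fun x _ => mem_image_of_mem _ (mem_univ x))]
  refine sum_congr rfl fun y hy => ?_
  rw [← h y hy, ← nsmul_eq_mul, ← sum_const]
  exact sum_congr rfl fun x hx => by rw [(mem_filter.1 hx).2]

lemma card_eq_ker_mul_range {G H : Type*} [AddCommGroup G] [Fintype G] [AddCommGroup H]
    (φ : G →+ H) :
    (Fintype.card G : ℝ) = (Nat.card φ.ker : ℝ) * Nat.card φ.range := by
  rw [← Nat.card_eq_fintype_card, ← Nat.cast_mul]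
  norm_cast
  rw [← φ.ker.card_mul_index, AddSubgroup.index_ker]

lemma avg_surjective_hom (φ : G →+ H) (hφ : Function.Surjective φ) (f : H → ℝ) :
    avg (fun x => f (φ x)) = avg f := by
  classical
  have h1 := sum_hom_fiber φ f
  have h2 := card_eq_ker_mul_range φ
  have h3 : univ.filter (fun y => y ∈ Set.range φ) = univ := by ext; simp [hφ _]
  rw [h3] at h1
  have h4 : (Nat.card φ.range) = Fintype.card H := by
    rw [AddMonoidHom.range_eq_top.2 hφ, ← Nat.card_eq_fintype_card]
    exact Nat.card_congr (Equiv.Set.univ H)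
  have h5 : (Nat.card φ.ker : ℝ) ≠ 0 := by exact_mod_cast Nat.card_pos.ne'
  unfold avg
  rw [h1, h2, h4, mul_div_mul_left _ _ h5]

/-- Precomposition with an endomorphism with at most `K` elements in the kernel increases the
average of a nonnegative function by a factor of at most `K`. -/
lemma avg_endo_le (φ : G →+ G) (f : G → ℝ) (hf : ∀ x, 0 ≤ f x) (K : ℕ)
    (hK : Nat.card φ.ker ≤ K) : avg (fun x => f (φ x)) ≤ K * avg f := by
  classical
  unfold avg
  rw [sum_hom_fiber φ f, ← mul_div_assoc]
  refine div_le_div_of_nonneg_right ?_ (Nat.cast_nonneg _)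
  refine mul_le_mul (by exact_mod_cast hK) ?_ (sum_nonneg fun x _ => hf x) (Nat.cast_nonneg _)
  exact sum_le_sum_of_subset_of_nonneg (filter_subset _ _) fun x _ _ => hf x

end Group

end RelSz

/-! ### Densities, combinatorial subspaces and the multidimensional density theorem -/

namespace RelSz
open Combinatorics

/-- The uniform probability of a set in a finite type. -/
noncomputable def mu {Ω : Type*} [Fintype Ω] (A : Set Ω) : ℝ := avg (A.indicator fun _ => 1)

section Mu
variable {Ω Ω' : Type*} [Fintype Ω] [Fintype Ω']

lemma mu_nonneg (A : Set Ω) : 0 ≤ mu A :=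
  avg_nonneg fun _ => Set.indicator_nonneg (fun _ _ => zero_le_one) _

lemma mu_mono {A B : Set Ω} (h : A ⊆ B) : mu A ≤ mu B :=
  avg_mono fun _ => Set.indicator_le_indicator_of_subset h (fun _ => zero_le_one) _

lemma mu_le_one [Nonempty Ω] (A : Set Ω) : mu A ≤ 1 :=
  avg_le_of_le fun _ => Set.indicator_le_self' (fun _ _ => zero_le_one) _

lemma mu_congr_avg (A : Set Ω) [DecidablePred (· ∈ A)] :
    mu A = avg fun x => if x ∈ A then (1:ℝ) else 0 := by
  unfold mu; congr 1; funext x; by_cases h : x ∈ A <;> simp [h]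

lemma mu_equiv (e : Ω ≃ Ω') (A : Set Ω') : mu (e ⁻¹' A) = mu A := by
  unfold mu; rw [← avg_equiv e]; rfl

lemma mu_union_le (A B : Set Ω) : mu (A ∪ B) ≤ mu A + mu B := by
  unfold mu; rw [← avg_add]
  refine avg_mono fun x => ?_
  by_cases h : x ∈ A <;> by_cases h' : x ∈ B <;> simp [h, h']

lemma mu_inter_add_diff (A B : Set Ω) : mu (A ∩ B) + mu (A \ B) = mu A := by
  unfold mu; rw [← avg_add]
  congr 1; funext x
  by_cases h : x ∈ A <;> by_cases h' : x ∈ B <;> simp [h, h']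

lemma mu_compl [Nonempty Ω] (A : Set Ω) : mu Aᶜ = 1 - mu A := by
  have := mu_inter_add_diff (Set.univ) A
  rw [Set.univ_inter, ← Set.compl_eq_univ_sdiff] at this
  have h1 : mu (Set.univ : Set Ω) = 1 := by simp [mu, avg_const]
  linarith

lemma mu_empty : mu (∅ : Set Ω) = 0 := by simp [mu, avg]

lemma nonempty_of_mu_pos {A : Set Ω} (h : 0 < mu A) : A.Nonempty := by
  by_contra h'
  rw [Set.not_nonempty_iff_eq_empty] at h'
  rw [h', mu_empty] at h; exact lt_irrefl _ h

lemma mu_sumElim {ι κ X : Type*} [Fintype ι] [Fintype κ] [DecidableEq ι] [DecidableEq κ]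
    [Fintype X] (A : Set (ι ⊕ κ → X)) :
    mu A = avg fun x : ι → X => mu {y : κ → X | Sum.elim x y ∈ A} := by
  unfold mu; rw [avg_sumElim]; rfl

lemma mu_sumElim' {ι κ X : Type*} [Fintype ι] [Fintype κ] [DecidableEq ι] [DecidableEq κ]
    [Fintype X] (A : Set (ι ⊕ κ → X)) :
    mu A = avg fun y : κ → X => mu {x : ι → X | Sum.elim x y ∈ A} := by
  unfold mu; rw [avg_sumElim, avg_comm]; rfl

lemma half_le_mu_of_le_avg [Nonempty Ω] {f : Ω → ℝ} {δ : ℝ} (hf : ∀ x, f x ≤ 1) (h0 : 0 ≤ δ)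
    (h : δ ≤ avg f) : δ / 2 ≤ mu {x | δ / 2 ≤ f x} := by
  classical
  have h1 : avg f ≤ δ / 2 + mu {x | δ / 2 ≤ f x} := by
    have : avg f ≤ avg fun x => δ / 2 + ({x | δ / 2 ≤ f x} : Set Ω).indicator (fun _ => (1:ℝ)) x := by
      refine avg_mono fun x => ?_
      by_cases hx : δ / 2 ≤ f x
      · simp [hx]; linarith [hf x]
      · simp [hx]; linarith
    rwa [avg_add, avg_const] at this
  linarith

lemma exists_pigeonhole {κ : Type*} [Fintype κ] (A : Set Ω) (R : κ → Set Ω)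
    (h : ∀ x ∈ A, ∃ c, x ∈ R c) {b : ℝ} (hb : ∀ c, mu (R c) ≤ b) :
    mu A ≤ Fintype.card κ * b := by
  have h1 : mu A ≤ ∑ c, mu (R c) := by
    unfold mu
    rw [← avg_sum]
    refine avg_mono fun x => ?_
    by_cases hx : x ∈ A
    · obtain ⟨c, hc⟩ := h x hx
      calc A.indicator (fun _ => (1:ℝ)) x = (R c).indicator (fun _ => (1:ℝ)) x := by simp [hx, hc]
        _ ≤ _ := single_le_sum (f := fun c => (R c).indicator (fun _ => (1:ℝ)) x)
          (fun _ _ => Set.indicator_nonneg (fun _ _ => zero_le_one) _) (mem_univ c)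
    · rw [Set.indicator_of_notMem hx]
      exact sum_nonneg fun _ _ => Set.indicator_nonneg (fun _ _ => zero_le_one) _
  calc mu A ≤ _ := h1
    _ ≤ ∑ _c : κ, b := sum_le_sum fun c _ => hb c
    _ = _ := by simp

end Mu

lemma exists_equiv_sum (ι : Type) [Fintype ι] {n : ℕ} (h : n ≤ Fintype.card ι) :
    Nonempty (ι ≃ Fin n ⊕ Fin (Fintype.card ι - n)) := by
  refine ⟨Fintype.equivOfCardEq ?_⟩
  simp; omega

section Sub
variable {η θ α ι κ : Type*}

/-- Composition of combinatorial subspaces. -/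
def subComp (V : Subspace η α ι) (W : Subspace θ α η) : Subspace θ α ι where
  idxFun i := (V.idxFun i).elim Sum.inl W.idxFun
  proper e := by
    obtain ⟨j, hj⟩ := W.proper e
    obtain ⟨i, hi⟩ := V.proper j
    exact ⟨i, by simp [hi, hj]⟩

lemma subComp_apply (V : Subspace η α ι) (W : Subspace θ α η) (x : θ → α) :
    subComp V W x = V (W x) := by
  funext i
  simp only [Subspace.apply_def, subComp]
  cases V.idxFun i <;> simp [Subspace.apply_def]

/-- The image of a combinatorial line under a combinatorial subspace. -/
def subLine (V : Subspace η α ι) (l : Line α η) : Line α ι where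
  idxFun i := (V.idxFun i).elim some l.idxFun
  proper := by
    obtain ⟨j, hj⟩ := l.proper
    obtain ⟨i, hi⟩ := V.proper j
    exact ⟨i, by simp [hi, hj]⟩

lemma subLine_apply (V : Subspace η α ι) (l : Line α η) (a : α) :
    subLine V l a = V (l a) := by
  funext i
  simp only [Subspace.apply_def, Line.coe_apply, subLine]
  cases V.idxFun i <;> simp

/-- The subspace of words on `ι ⊕ κ` with the second part equal to `y`. -/
def sliceL (y : κ → α) : Subspace ι α (ι ⊕ κ) where
  idxFun := Sum.elim Sum.inr (fun j => Sum.inl (y j))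
  proper e := ⟨Sum.inl e, rfl⟩

lemma sliceL_apply (y : κ → α) (x : ι → α) : (sliceL y : Subspace ι α (ι ⊕ κ)) x = Sum.elim x y := by
  funext i; cases i <;> rfl

/-- The subspace of words on `ι ⊕ κ` with the first part equal to `x`. -/
def sliceR (x : ι → α) : Subspace κ α (ι ⊕ κ) where
  idxFun := Sum.elim (fun j => Sum.inl (x j)) Sum.inr
  proper e := ⟨Sum.inr e, rfl⟩

lemma sliceR_apply (x : ι → α) (y : κ → α) : (sliceR x : Subspace κ α (ι ⊕ κ)) y = Sum.elim x y := by
  funext i; cases i <;> rfl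

/-- The full subspace, with coordinates renamed by an equivalence. -/
def subEquiv (e : ι ≃ κ) : Subspace κ α ι where
  idxFun i := Sum.inr (e i)
  proper j := ⟨e.symm j, by simp⟩

lemma subEquiv_apply (e : ι ≃ κ) (x : κ → α) : (subEquiv e : Subspace κ α ι) x = x ∘ e := rfl

/-- A set of words is line-free if it contains no combinatorial line. -/
def LineFree (A : Set (ι → α)) : Prop := ∀ l : Line α ι, ∃ a, l a ∉ A

lemma LineFree.pullback {A : Set (ι → α)} (h : LineFree A) (V : Subspace η α ι) :
    LineFree {x | V x ∈ A} := by
  intro l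
  obtain ⟨a, ha⟩ := h (subLine V l)
  rw [subLine_apply] at ha
  exact ⟨a, ha⟩

end Sub

lemma mu_subEquiv {ι κ α : Type*} [Fintype ι] [DecidableEq ι] [Fintype κ] [DecidableEq κ]
    [Fintype α] (e : ι ≃ κ) (A : Set (ι → α)) :
    mu {x : κ → α | (subEquiv e : Subspace κ α ι) x ∈ A} = mu A :=
  mu_equiv (Equiv.arrowCongr e.symm (Equiv.refl α)) A

/-- The conclusion of the density Hales–Jewett theorem for the alphabet `α` and density `δ`. -/
def DHJAt (α : Type) [Fintype α] (δ : ℝ) : Prop :=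
  ∃ n₀ : ℕ, ∀ (ι : Type) [Fintype ι] [DecidableEq ι], n₀ ≤ Fintype.card ι →
    ∀ A : Set (ι → α), LineFree A → mu A < δ

/-- The density Hales–Jewett theorem for the alphabet `α`. -/
def DHJ (α : Type) [Fintype α] : Prop := ∀ δ : ℝ, 0 < δ → DHJAt α δ

instance {α ι : Type*} [Finite α] [Finite ι] : Finite (Line α ι) :=
  Finite.of_injective (fun l => l.idxFun) (fun _ _ h => Line.ext h)

instance {η α ι : Type*} [Finite α] [Finite ι] [Finite η] : Finite (Subspace η α ι) :=
  Finite.of_injective (fun l => l.idxFun) (fun _ _ h => Subspace.ext h)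

/-- The multidimensional density Hales–Jewett theorem follows from the one-dimensional one: fix a
popular line on a first block of coordinates and recurse on the remaining coordinates. -/
lemma mdhj {α : Type} [Fintype α] [Nonempty α] (h : DHJ α) (m : ℕ) : ∀ δ : ℝ, 0 < δ →
    ∃ n₀ : ℕ, ∀ (ι : Type) [Fintype ι] [DecidableEq ι], n₀ ≤ Fintype.card ι →
      ∀ A : Set (ι → α), δ ≤ mu A → ∃ V : Subspace (Fin m) α ι, ∀ x, V x ∈ A := by
  induction m with
  | zero =>
    intro δ hδ
    refine ⟨0, fun ι _ _ _ A hA => ?_⟩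
    obtain ⟨p, hp⟩ := nonempty_of_mu_pos (hδ.trans_le hA)
    exact ⟨⟨fun i => Sum.inl (p i), fun e => e.elim0⟩, fun x => hp⟩
  | succ m ih =>
    intro δ hδ
    classical
    obtain ⟨n₁, hn₁⟩ := h (δ / 2) (by positivity)
    have := Fintype.ofFinite (Line α (Fin n₁))
    set L : ℝ := ((Fintype.card (Line α (Fin n₁)) : ℕ) : ℝ) with hL
    obtain ⟨n₂, hn₂⟩ := ih (δ / 2 / (L + 1)) (by positivity)
    refine ⟨n₁ + n₂, fun ι _ _ hι A hA => ?_⟩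
    obtain ⟨e⟩ := exists_equiv_sum ι (n := n₁) (by omega)
    set r := Fintype.card ι - n₁ with hr
    set A' : Set (Fin n₁ ⊕ Fin r → α) := {x | (subEquiv e : Subspace _ α ι) x ∈ A} with hA'
    have hA1 : δ ≤ mu A' := by rw [hA', mu_subEquiv]; exact hA
    rw [mu_sumElim'] at hA1
    have h2 := half_le_mu_of_le_avg (fun y => mu_le_one _) hδ.le hA1
    have h3 : ∃ l : Line α (Fin n₁), δ / 2 / (L + 1) ≤
        mu {y : Fin r → α | ∀ a, Sum.elim (l a) y ∈ A'} := by
      by_contra! hcon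
      have h4 := exists_pigeonhole {y : Fin r → α | δ / 2 ≤ mu {x : Fin n₁ → α | Sum.elim x y ∈ A'}}
        (fun l : Line α (Fin n₁) => {y : Fin r → α | ∀ a, Sum.elim (l a) y ∈ A'}) ?_
        (fun l => (hcon l).le)
      · have h5 : L * (δ / 2 / (L + 1)) < δ / 2 := by
          have : 0 ≤ L := Nat.cast_nonneg _
          rw [mul_div_assoc', div_lt_iff₀ (by positivity)]
          nlinarith
        linarith
      · intro y hy
        by_contra! hcon2
        have := hn₁ (Fin n₁) (by simp) {x : Fin n₁ → α | Sum.elim x y ∈ A'} (by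
          intro l
          have := hcon2 l
          simpa using this)
        simp only [Set.mem_ofPred_eq] at hy
        linarith
    obtain ⟨l, hl⟩ := h3
    obtain ⟨W, hW⟩ := hn₂ (Fin r) (by simp; omega) _ hl
    refine ⟨⟨fun i => Sum.elim (fun i => (l.idxFun i).elim (Sum.inr 0) Sum.inl)
      (fun j => (W.idxFun j).map id Fin.succ) (e i), ?_⟩, ?_⟩
    · intro j
      refine Fin.cases ?_ ?_ j
      · obtain ⟨i, hi⟩ := l.proper
        exact ⟨e.symm (Sum.inl i), by simp [hi]⟩
      · intro j
        obtain ⟨i, hi⟩ := W.proper j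
        exact ⟨e.symm (Sum.inr i), by simp [hi]⟩
    · intro x
      have := hW (fun j => x j.succ) (x 0)
      rw [hA', Set.mem_ofPred_eq] at this
      convert this using 1
      funext i
      rw [subEquiv_apply]
      simp only [Subspace.apply_def, Function.comp]
      rcases e i with i | j
      · simp only [Sum.elim_inl, Line.coe_apply]
        cases l.idxFun i <;> simp
      · simp only [Sum.elim_inr, Subspace.apply_def]
        cases W.idxFun j <;> simp

end RelSz

/-! ### Insensitive sets contain large subspaces -/

namespace RelSz
open Combinatorics

lemma avg_pi_prod {ι X : Type*} [Fintype ι] [DecidableEq ι] [Fintype X] (f : X → ℝ) :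
    avg (fun x : ι → X => ∏ j, f (x j)) = (avg f) ^ Fintype.card ι := by
  unfold avg
  have h := Finset.prod_univ_sum (fun _ : ι => (univ : Finset X)) (fun _ x => f x)
  rw [Fintype.piFinset_univ, prod_const, card_univ] at h
  rw [div_pow, h, Fintype.card_fun]
  push_cast; rfl

/-- A set of words over `Option β` is `i`-insensitive if membership does not change when letters
`none` are changed to `some i` or vice versa. -/
def Insens {β ι : Type*} (i : β) (D : Set (ι → Option β)) : Prop :=
  ∀ x y : ι → Option β, (∀ j, (x j).getD i = (y j).getD i) → x ∈ D → y ∈ D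

section Insens
variable {β ι κ : Type*} {i : β}

lemma Insens.compl {D : Set (ι → Option β)} (h : Insens i D) : Insens i Dᶜ :=
  fun x y hxy hx hy => hx (h y x (fun j => (hxy j).symm) hy)

lemma Insens.pullback {D : Set (ι → Option β)} (h : Insens i D) (V : Subspace κ (Option β) ι) :
    Insens i {x | V x ∈ D} := by
  intro x y hxy hx
  refine h _ _ (fun j => ?_) hx
  simp only [Subspace.apply_def]
  cases V.idxFun j <;> simp [hxy]

lemma Insens.mem_iff {D : Set (ι → Option β)} (h : Insens i D) {x y : ι → Option β}
    (hxy : ∀ j, (x j).getD i = (y j).getD i) : x ∈ D ↔ y ∈ D :=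
  ⟨h x y hxy, h y x fun j => (hxy j).symm⟩

end Insens

/-- The number of letters other than `none` in a random word over `Option β` is large with high
probability. -/
lemma exists_mu_few_some (β : Type) [Fintype β] [Nonempty β] (M : ℕ) (ε : ℝ) (hε : 0 < ε) :
    ∃ n₀ : ℕ, ∀ (ι : Type) [Fintype ι] [DecidableEq ι], n₀ ≤ Fintype.card ι →
      mu {u : ι → Option β | Fintype.card {j // (u j).isSome} < M} < ε := by
  classical
  set q : ℝ := avg fun a : Option β => if a.isSome then (1/2 : ℝ) else 1 with hq
  have hq0 : 0 ≤ q := avg_nonneg fun a => by split_ifs <;> norm_num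
  have hq1 : q < 1 := by
    rw [hq]; unfold avg
    rw [div_lt_one (by positivity), Fintype.sum_option, Fintype.card_option]
    have : (0:ℝ) < Fintype.card β := by exact_mod_cast Fintype.card_pos
    simp; linarith
  obtain ⟨n₀, hn₀⟩ := exists_pow_lt_of_lt_one (show 0 < ε / 2 ^ M by positivity) hq1
  refine ⟨n₀, fun ι _ _ hι => ?_⟩
  have h1 : mu {u : ι → Option β | Fintype.card {j // (u j).isSome} < M} ≤
      2 ^ M * avg fun u : ι → Option β => ∏ j, if (u j).isSome then (1/2 : ℝ) else 1 := by
    unfold mu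
    rw [← avg_mul_left]
    refine avg_mono fun u => ?_
    rw [Finset.prod_ite, prod_const, prod_const_one, mul_one]
    have hc : #{j | (u j).isSome = true} = Fintype.card {j // (u j).isSome} :=
      (Fintype.card_subtype _).symm
    rw [hc]
    by_cases hu : Fintype.card {j // (u j).isSome} < M
    · simp only [Set.indicator, Set.mem_ofPred_eq, hu, if_true]
      rw [one_div, inv_pow, ← div_eq_mul_inv, le_div_iff₀ (by positivity), one_mul]
      exact pow_le_pow_right₀ (by norm_num) hu.le
    · simp only [Set.indicator, Set.mem_ofPred_eq, hu, if_false]; positivity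
  rw [avg_pi_prod (fun a : Option β => if a.isSome then (1/2 : ℝ) else 1)] at h1
  have h2 : q ^ Fintype.card ι ≤ q ^ n₀ := pow_le_pow_of_le_one hq0 hq1.le hι
  calc _ ≤ _ := h1
    _ ≤ 2 ^ M * q ^ n₀ := by gcongr
    _ < 2 ^ M * (ε / 2 ^ M) := by gcongr
    _ = ε := by field_simp

/-- A uniform word over `Option β` can be sampled by choosing a uniform pattern of `none`s and
then filling the remaining positions with independent uniform letters. -/
lemma avg_combine {β ι : Type*} [Fintype β] [Fintype ι] [DecidableEq ι] [Nonempty β]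
    (F : (ι → Option β) → ℝ) :
    avg F = avg fun u : ι → Option β => avg fun x : ι → β =>
      F fun j => (u j).map fun _ => x j := by
  let e₀ : Option β × β ≃ Option β × β :=
    { toFun := fun p => (p.1.map fun _ => p.2, p.1.getD p.2)
      invFun := fun p => (p.1.map fun _ => p.2, p.1.getD p.2)
      left_inv := by rintro ⟨_ | a, b⟩ <;> simp
      right_inv := by rintro ⟨_ | a, b⟩ <;> simp }
  have h1 := avg_prod (fun p : (ι → Option β) × (ι → β) => F fun j => (p.1 j).map fun _ => p.2 j)
  simp only at h1
  rw [← h1]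
  have h2 := avg_prod (fun p : (ι → Option β) × (ι → β) => F p.1)
  simp only [avg_const] at h2
  rw [← h2]
  let e : (ι → Option β) × (ι → β) ≃ (ι → Option β) × (ι → β) :=
    (Equiv.arrowProdEquivProdArrow ι (fun _ => Option β) (fun _ => β)).symm.trans
      ((Equiv.arrowCongr (Equiv.refl ι) e₀).trans
        (Equiv.arrowProdEquivProdArrow ι (fun _ => Option β) (fun _ => β)))
  rw [← avg_equiv e]
  rfl

/-- Dense `i`-insensitive sets contain subspaces of large dimension, by the density theorem for
the alphabet `β`. -/
lemma rich {β : Type} [Fintype β] [Nonempty β] (h : DHJ β) (m : ℕ) (ε : ℝ) (hε : 0 < ε) :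
    ∃ n₀ : ℕ, ∀ (ι : Type) [Fintype ι] [DecidableEq ι], n₀ ≤ Fintype.card ι →
      ∀ (i : β) (D : Set (ι → Option β)), Insens i D → ε ≤ mu D →
        ∃ V : Subspace (Fin m) (Option β) ι, ∀ x, V x ∈ D := by
  classical
  obtain ⟨M, hM⟩ := mdhj h m (ε / 2) (by positivity)
  obtain ⟨n₀, hn₀⟩ := exists_mu_few_some β M (ε / 2) (by positivity)
  refine ⟨n₀, fun ι _ _ hι i D hD hmu => ?_⟩
  set g : (ι → Option β) → ℝ := fun u => mu {x : ι → β | (fun j => (u j).map fun _ => x j) ∈ D}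
    with hg
  have h1 : mu D = avg g := by
    unfold mu; rw [avg_combine]; rfl
  obtain ⟨u, hu1, hu2⟩ : ∃ u : ι → Option β, M ≤ Fintype.card {j // (u j).isSome} ∧ ε / 2 ≤ g u := by
    by_contra! hcon
    have h2 : avg g ≤ avg fun u => ε / 2 +
        ({u : ι → Option β | Fintype.card {j // (u j).isSome} < M}.indicator (fun _ => (1:ℝ)) u) := by
      refine avg_mono fun u => ?_
      by_cases hu : Fintype.card {j // (u j).isSome} < M
      · simp only [Set.indicator, Set.mem_ofPred_eq, hu, if_true]
        have : g u ≤ 1 := mu_le_one _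
        linarith
      · simp only [Set.indicator, Set.mem_ofPred_eq, hu, if_false]
        linarith [hcon u (not_lt.1 hu)]
    rw [avg_add, avg_const] at h2
    have := hn₀ ι hι
    unfold mu at this
    rw [h1] at hmu
    linarith
  have h3 : g u = mu {x : {j // (u j).isSome} → β |
      (fun j => if hj : (u j).isSome then some (x ⟨j, hj⟩) else none) ∈ D} := by
    rw [hg]
    simp only
    rw [← mu_equiv (Equiv.piEquivPiSubtypeProd (fun j => (u j).isSome = true) fun _ => β).symm]
    unfold mu
    rw [avg_prod]
    congr 1; funext x
    rw [← avg_const (α := {j // ¬ (u j).isSome = true} → β)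
      (Set.indicator {x : {j // (u j).isSome} → β |
      (fun j => if hj : (u j).isSome then some (x ⟨j, hj⟩) else none) ∈ D} (fun _ => (1:ℝ)) x)]
    congr 1; funext z
    have : (fun j => (u j).map fun _ => (Equiv.piEquivPiSubtypeProd
        (fun j => (u j).isSome = true) fun _ => β).symm (x, z) j) =
        (fun j => if hj : (u j).isSome then some (x ⟨j, hj⟩) else none) := by
      funext j
      by_cases hj : (u j).isSome
      · obtain ⟨b, hb⟩ := Option.isSome_iff_exists.1 hj
        simp [Equiv.piEquivPiSubtypeProd, hb]
      · have : u j = none := by simpa using hj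
        simp [this]
    simp only [Set.indicator, Set.mem_preimage, Set.mem_ofPred_eq, this]
  rw [h3] at hu2
  obtain ⟨V, hV⟩ := hM _ hu1 _ hu2
  refine ⟨⟨fun j => if hj : (u j).isSome then (V.idxFun ⟨j, hj⟩).map some id else Sum.inl none,
    ?_⟩, ?_⟩
  · intro e
    obtain ⟨⟨j, hj⟩, hj'⟩ := V.proper e
    exact ⟨j, by simp [hj, hj']⟩
  · intro x
    refine hD _ _ (fun j => ?_) (hV fun e => (x e).getD i)
    simp only [Subspace.apply_def]
    by_cases hj : (u j).isSome
    · simp only [hj, dif_pos]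
      cases V.idxFun ⟨j, hj⟩ <;> simp
    · simp [hj]

end RelSz

/-! ### Density on intersections of insensitive sets -/

namespace RelSz
open Combinatorics

lemma subspace_injective {η α ι : Type*} (V : Subspace η α ι) :
    Function.Injective (fun x : η → α => V x) := by
  intro x y hxy
  funext e
  obtain ⟨i, hi⟩ := V.proper e
  have := congrFun hxy i
  simpa [Subspace.apply_def, hi] using this

/-- The integral over the range of a subspace, in terms of its parametrisation. -/
lemma avg_indicator_range {η α ι : Type*} [Fintype η] [DecidableEq η] [Fintype ι] [DecidableEq ι]
    [Fintype α] [Nonempty α] (V : Subspace η α ι) (g : (ι → α) → ℝ) :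
    avg ((Set.range fun x : η → α => V x).indicator g) =
      ((Fintype.card α : ℝ) ^ Fintype.card η / (Fintype.card α : ℝ) ^ Fintype.card ι) *
        avg (fun x : η → α => g (V x)) := by
  classical
  have hα : (Fintype.card α : ℝ) ≠ 0 := by
    have := Fintype.card_pos (α := α); positivity
  unfold avg
  rw [Fintype.card_fun, Fintype.card_fun]
  have h : ∑ x, (Set.range fun x : η → α => V x).indicator g x = ∑ x : η → α, g (V x) := by
    rw [← Finset.sum_image (s := univ) (g := fun x : η → α => V x) (f := g)
      (fun x _ y _ h => subspace_injective V h)]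
    rw [← Finset.sum_indicator_subset (s := univ.image fun x : η → α => V x) (t := univ) _
      (subset_univ _)]
    congr 1; funext x; congr 1; ext z; simp
  rw [h]
  push_cast
  field_simp

/-- If `g ≤ 1` has nonpositive mean on every `m`-dimensional subspace inside an insensitive set
`D`, then the integral of `g` over `D` is small: `D` is exhausted, up to a small remainder, by
disjoint `m`-dimensional subspaces. The induction on `T` uses one block of coordinates at a
time. -/
lemma part_aux {β : Type} [Fintype β] [Nonempty β] {m M : ℕ} {ε c : ℝ} (hε : 0 < ε)
    (hc : c = (Fintype.card (Option β) : ℝ) ^ m / (Fintype.card (Option β) : ℝ) ^ M)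
    (hc1 : c ≤ 1)
    (i : β) (hM : ∀ (D : Set (Fin M → Option β)), Insens i D → ε ≤ mu D →
        ∃ V : Subspace (Fin m) (Option β) (Fin M), ∀ x, V x ∈ D) (T : ℕ) :
    ∀ (ι : Type) [Fintype ι] [DecidableEq ι], T * M ≤ Fintype.card ι →
      ∀ (D : Set (ι → Option β)), Insens i D →
      ∀ g : (ι → Option β) → ℝ, (∀ x, g x ≤ 1) →
      (∀ V : Subspace (Fin m) (Option β) ι, (∀ x, V x ∈ D) → avg (fun x => g (V x)) ≤ 0) →
      avg (D.indicator g) ≤ (1 - c) ^ T * mu D + ε * (1 - (1 - c) ^ T) := by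
  classical
  have hc0 : 0 ≤ c := by rw [hc]; positivity
  induction T with
  | zero =>
    intro ι _ _ _ D hD g hg _
    simp only [pow_zero, one_mul, sub_self, mul_zero, add_zero]
    exact avg_mono fun x => by by_cases hx : x ∈ D <;> simp [hx, hg]
  | succ T ih =>
    intro ι _ _ hι D hD g hg hV
    have hι' : M ≤ Fintype.card ι := le_trans (by nlinarith) hι
    obtain ⟨e⟩ := exists_equiv_sum ι (n := M) hι'
    set r := Fintype.card ι - M with hr
    have hr' : T * M ≤ r := by rw [hr]; rw [Nat.succ_mul] at hι; omega
    -- the subspace removed from a slice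
    have hR : ∀ E : Set (Fin M → Option β), ∃ R : Set (Fin M → Option β), R ⊆ E ∧
        (Insens i E → ε ≤ mu E → c ≤ mu R) ∧
        ∀ g' : (Fin M → Option β) → ℝ, (∀ V : Subspace (Fin m) (Option β) (Fin M),
          (∀ x, V x ∈ E) → avg (fun x => g' (V x)) ≤ 0) → avg (R.indicator g') ≤ 0 := by
      intro E
      by_cases hE : Insens i E ∧ ε ≤ mu E
      · obtain ⟨V, hV⟩ := hM E hE.1 hE.2
        refine ⟨Set.range fun x => V x, ?_, fun _ _ => ?_, fun g' hg' => ?_⟩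
        · rintro _ ⟨x, rfl⟩; exact hV x
        · unfold mu; rw [avg_indicator_range, avg_const, hc]; simp
        · rw [avg_indicator_range]
          exact mul_nonpos_of_nonneg_of_nonpos (by positivity) (hg' V hV)
      · exact ⟨∅, Set.empty_subset _, fun h1 h2 => absurd ⟨h1, h2⟩ hE, fun g' _ => by simp [avg]⟩
    choose R hR1 hR2 hR3 using hR
    let emb : Subspace (Fin M ⊕ Fin r) (Option β) ι := subEquiv e
    let W : (Fin M → Option β) → (Fin r → Option β) → (ι → Option β) := fun x y => emb (Sum.elim x y)
    have hW : ∀ F : (ι → Option β) → ℝ, avg F = avg fun y => avg fun x => F (W x y) := by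
      intro F
      rw [avg_comm, ← avg_sumElim (fun z : Fin M ⊕ Fin r → Option β => F (emb z))]
      exact (avg_equiv (Equiv.arrowCongr e.symm (Equiv.refl (Option β))) F).symm
    let Dy : (Fin r → Option β) → Set (Fin M → Option β) := fun y => {x | W x y ∈ D}
    have hWx : ∀ y x, W x y = (subComp emb (sliceL y) : Subspace (Fin M) (Option β) ι) x := by
      intro y x; rw [subComp_apply, sliceL_apply]
    have hWy : ∀ x y, W x y = (subComp emb (sliceR x) : Subspace (Fin r) (Option β) ι) y := by
      intro x y; rw [subComp_apply, sliceR_apply]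
    have hDy : ∀ y, Insens i (Dy y) := by
      intro y
      have := hD.pullback (subComp emb (sliceL y))
      simpa only [← hWx] using this
    have hDyy : ∀ y y' : Fin r → Option β, (∀ j, (y j).getD i = (y' j).getD i) → Dy y = Dy y' := by
      intro y y' h
      ext x
      have := (hD.pullback (subComp emb (sliceR x))).mem_iff h
      simp only [← hWy] at this
      exact this
    let Dx : (Fin M → Option β) → Set (Fin r → Option β) := fun x => {y | x ∈ Dy y \ R (Dy y)}
    have hDx : ∀ x, Insens i (Dx x) := by
      intro x y y' h hy
      change x ∈ Dy y' \ R (Dy y')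
      rw [← hDyy y y' h]; exact hy
    -- the removed part contributes nonpositively
    have h1 : ∀ y, avg ((R (Dy y)).indicator fun x => g (W x y)) ≤ 0 := by
      intro y
      refine hR3 _ _ fun V hV' => ?_
      have := hV (subComp (subComp emb (sliceL y)) V) (fun x => by
        rw [subComp_apply, ← hWx]; exact hV' x)
      simpa only [subComp_apply, ← hWx] using this
    have h2 : ∀ x, avg ((Dx x).indicator fun y => g (W x y)) ≤
        (1 - c) ^ T * mu (Dx x) + ε * (1 - (1 - c) ^ T) := by
      intro x
      refine ih (Fin r) (by simpa using hr') _ (hDx x) _ (fun y => hg _) fun V hV' => ?_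
      have := hV (subComp (subComp emb (sliceR x)) V) (fun z => by
        rw [subComp_apply, ← hWy]; exact (hV' z).1)
      simpa only [subComp_apply, ← hWy] using this
    have hp0 : 0 ≤ (1 - c) ^ T := pow_nonneg (by linarith) _
    have h3 : ∀ y, (1 - c) ^ T * mu (Dy y \ R (Dy y)) ≤
        (1 - c) ^ (T + 1) * mu (Dy y) + ε * ((1 - c) ^ T - (1 - c) ^ (T + 1)) := by
      intro y
      have h4 := mu_inter_add_diff (Dy y) (R (Dy y))
      rw [Set.inter_eq_right.2 (hR1 _)] at h4
      have h5 : mu (Dy y) ≤ 1 := mu_le_one _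
      have h6 := mu_nonneg (R (Dy y))
      rw [pow_succ]
      by_cases hE : ε ≤ mu (Dy y)
      · have h7 := hR2 _ (hDy y) hE
        have h8 : mu (Dy y \ R (Dy y)) ≤ (1 - c) * mu (Dy y) := by nlinarith
        have h9 := mul_le_mul_of_nonneg_left h8 hp0
        have h10 : 0 ≤ ε * ((1 - c) ^ T * c) := by positivity
        linarith
      · push Not at hE
        have h8 : mu (Dy y \ R (Dy y)) ≤ (1 - c) * mu (Dy y) + ε * c := by nlinarith
        have h9 := mul_le_mul_of_nonneg_left h8 hp0
        linarith
    have h4 : avg (D.indicator g) = avg (fun y => avg ((R (Dy y)).indicator fun x => g (W x y))) +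
        avg (fun x => avg ((Dx x).indicator fun y => g (W x y))) := by
      rw [hW, avg_comm (fun x y => (Dx x).indicator (fun y => g (W x y)) y), ← avg_add]
      congr 1; funext y
      rw [← avg_add]
      congr 1; funext x
      have hx1 : x ∈ Dy y ↔ W x y ∈ D := Iff.rfl
      have hx2 : y ∈ Dx x ↔ x ∈ Dy y ∧ x ∉ R (Dy y) := Iff.rfl
      have hx3 := hR1 (Dy y) (a := x)
      simp only [Set.indicator, hx2, hx1]
      rw [hx1] at hx3
      by_cases ha : x ∈ R (Dy y)
      · simp [ha, hx3 ha]
      · by_cases hb : W x y ∈ D <;> simp [ha, hb]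
    have h5 : avg (fun x => mu (Dx x)) = avg fun y => mu (Dy y \ R (Dy y)) := by
      unfold mu; rw [avg_comm]; rfl
    have h6 : avg (fun y => mu (Dy y)) = mu D := by
      unfold mu; rw [hW]; rfl
    calc avg (D.indicator g) ≤ 0 + avg (fun x => (1 - c) ^ T * mu (Dx x) + ε * (1 - (1 - c) ^ T)) := by
          rw [h4]
          exact add_le_add ((avg_mono h1).trans_eq (avg_const 0)) (avg_mono h2)
      _ = avg (fun y => (1 - c) ^ T * mu (Dy y \ R (Dy y))) + ε * (1 - (1 - c) ^ T) := by
          rw [avg_add, avg_const, avg_mul_left, avg_mul_left, h5, zero_add]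
      _ ≤ avg (fun y => (1 - c) ^ (T + 1) * mu (Dy y) + ε * ((1 - c) ^ T - (1 - c) ^ (T + 1))) +
          ε * (1 - (1 - c) ^ T) := by gcongr; exact avg_mono h3
      _ = _ := by rw [avg_add, avg_const, avg_mul_left, h6]; ring

lemma part {β : Type} [Fintype β] [Nonempty β] (h : DHJ β) (m : ℕ) (ε : ℝ) (hε : 0 < ε) :
    ∃ n₀ : ℕ, ∀ (ι : Type) [Fintype ι] [DecidableEq ι], n₀ ≤ Fintype.card ι →
      ∀ (i : β) (D : Set (ι → Option β)), Insens i D →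
      ∀ g : (ι → Option β) → ℝ, (∀ x, g x ≤ 1) →
      (∀ V : Subspace (Fin m) (Option β) ι, (∀ x, V x ∈ D) → avg (fun x => g (V x)) ≤ 0) →
      avg (D.indicator g) ≤ ε := by
  obtain ⟨M₀, hM₀⟩ := rich h m (ε / 2) (by positivity)
  set M := max M₀ m with hMdef
  set K : ℝ := (Fintype.card (Option β) : ℝ) with hK
  have hK1 : 1 ≤ K := by
    rw [hK]; exact_mod_cast Fintype.card_pos
  set c : ℝ := K ^ m / K ^ M with hc
  have hc0 : 0 < c := by positivity
  have hc1 : c ≤ 1 := by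
    rw [hc, div_le_one (by positivity)]
    exact pow_le_pow_right₀ hK1 (le_max_right _ _)
  obtain ⟨T, hT⟩ := exists_pow_lt_of_lt_one (show 0 < ε / 2 by positivity) (show 1 - c < 1 by linarith)
  refine ⟨T * M, fun ι _ _ hι i D hD g hg hV => ?_⟩
  have h1 := part_aux (ε := ε / 2) (c := c) (m := m) (M := M) (by positivity) hc hc1 i
    (fun D hD hmu => hM₀ (Fin M) (by simp [hMdef]) i D hD hmu) T ι hι D hD g hg hV
  have h2 : mu D ≤ 1 := mu_le_one _
  have h3 := mu_nonneg D
  have h4 : 0 ≤ (1 - c) ^ T := pow_nonneg (by linarith) _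
  nlinarith

/-- `E` is an intersection of sets that are insensitive to the letters in the list. -/
def IsInt {β ι : Type*} : List β → Set (ι → Option β) → Prop
  | [], E => E = Set.univ
  | i :: L, E => ∃ D E', Insens i D ∧ IsInt L E' ∧ E = D ∩ E'

lemma IsInt.pullback {β ι κ : Type*} (V : Subspace κ (Option β) ι) (L : List β) :
    ∀ {E : Set (ι → Option β)}, IsInt L E → IsInt L {x | V x ∈ E} := by
  induction L with
  | nil => intro E h; simp only [IsInt] at h ⊢; simp [h]
  | cons i L ih =>
    rintro E ⟨D, E', hD, hE', rfl⟩
    exact ⟨_, _, hD.pullback V, ih hE', rfl⟩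

/-- A set with density at most `ρ` on all `m`-dimensional subspaces has relative density at most
about `ρ` on an intersection of insensitive sets. -/
lemma inter_le {β : Type} [Fintype β] [Nonempty β] (h : DHJ β) (m : ℕ) (ρ : ℝ) (hρ0 : 0 ≤ ρ)
    (L : List β) : ∀ ε : ℝ, 0 < ε →
    ∃ n₀ : ℕ, ∀ (ι : Type) [Fintype ι] [DecidableEq ι], n₀ ≤ Fintype.card ι →
      ∀ E : Set (ι → Option β), IsInt L E → ∀ A : Set (ι → Option β),
      (∀ V : Subspace (Fin m) (Option β) ι, mu {x | V x ∈ A} ≤ ρ) →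
      mu (A ∩ E) ≤ ρ * mu E + ε := by
  induction L with
  | nil =>
    intro ε hε
    refine ⟨m, fun ι _ _ hι E hE A hA => ?_⟩
    simp only [IsInt] at hE
    subst hE
    obtain ⟨e⟩ := exists_equiv_sum ι (n := m) hι
    have h1 : mu A ≤ ρ := by
      rw [← mu_subEquiv e, mu_sumElim']
      refine avg_le_of_le fun y => ?_
      have := hA (subComp (subEquiv e) (sliceL y))
      simpa only [subComp_apply, sliceL_apply, Set.mem_ofPred_eq] using this
    have h2 : mu (Set.univ : Set (ι → Option β)) = 1 := by simp [mu, avg_const]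
    rw [Set.inter_univ, h2]; linarith
  | cons i L ih =>
    intro ε hε
    obtain ⟨m', hm'⟩ := ih (ε / 2) (by positivity)
    obtain ⟨n₀, hn₀⟩ := part h m' (ε / 2) (by positivity)
    refine ⟨n₀, fun ι _ _ hι E hE A hA => ?_⟩
    obtain ⟨D, E', hD, hE', rfl⟩ := hE
    set g : (ι → Option β) → ℝ := fun x =>
      (A ∩ E').indicator (fun _ => 1) x - ρ * E'.indicator (fun _ => 1) x - ε / 2 with hg
    have h1 := hn₀ ι hι i D hD g ?_ ?_
    · have h2 : avg (D.indicator g) = mu (A ∩ (D ∩ E')) - ρ * mu (D ∩ E') - ε / 2 * mu D := by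
        unfold mu
        rw [← avg_mul_left, ← avg_mul_left, ← avg_sub, ← avg_sub]
        congr 1; funext x
        by_cases ha : x ∈ A <;> by_cases hb : x ∈ D <;> by_cases hc : x ∈ E' <;>
          simp [hg, ha, hb, hc]
      have h3 : mu D ≤ 1 := mu_le_one _
      nlinarith
    · intro x
      by_cases ha : x ∈ A <;> by_cases hc : x ∈ E' <;> simp [hg, ha, hc] <;> linarith
    · intro V _
      have h2 : avg (fun x => g (V x)) =
          mu ({x | V x ∈ A} ∩ {x | V x ∈ E'}) - ρ * mu {x | V x ∈ E'} - ε / 2 := by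
        rw [← avg_const (α := Fin m' → Option β) (ε / 2)]
        unfold mu
        rw [← avg_mul_left, ← avg_sub, ← avg_sub]
        rfl
      have h3 := hm' (Fin m') (by simp) _ (hE'.pullback V) {x | V x ∈ A} (fun U => by
        simpa only [Set.mem_ofPred_eq, subComp_apply] using hA (subComp V U))
      rw [h2]; linarith

/-- The same bound on the complement of an intersection of insensitive sets. -/
lemma compl_inter_le {β : Type} [Fintype β] [Nonempty β] (h : DHJ β) (m : ℕ) (ρ : ℝ) (hρ0 : 0 ≤ ρ)
    (L : List β) : ∀ ε : ℝ, 0 < ε →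
    ∃ n₀ : ℕ, ∀ (ι : Type) [Fintype ι] [DecidableEq ι], n₀ ≤ Fintype.card ι →
      ∀ E : Set (ι → Option β), IsInt L E → ∀ A : Set (ι → Option β),
      (∀ V : Subspace (Fin m) (Option β) ι, mu {x | V x ∈ A} ≤ ρ) →
      mu (A \ E) ≤ ρ * mu Eᶜ + ε := by
  induction L with
  | nil =>
    intro ε hε
    refine ⟨0, fun ι _ _ _ E hE A _ => ?_⟩
    simp only [IsInt] at hE
    subst hE
    rw [Set.sdiff_univ, mu_empty, Set.compl_univ, mu_empty]; linarith
  | cons i L ih =>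
    intro ε hε
    obtain ⟨n₁, hn₁⟩ := ih (ε / 2) (by positivity)
    obtain ⟨n₂, hn₂⟩ := inter_le h m ρ hρ0 (i :: L) (ε / 2) (by positivity)
    refine ⟨max n₁ n₂, fun ι _ _ hι E hE A hA => ?_⟩
    obtain ⟨D, E', hD, hE', rfl⟩ := hE
    have h1 := hn₁ ι ((le_max_left _ _).trans hι) E' hE' A hA
    have h2 := hn₂ ι ((le_max_right _ _).trans hι) (Dᶜ ∩ E') ⟨Dᶜ, E', hD.compl, hE', rfl⟩ A hA
    have h3 : mu (A \ (D ∩ E')) = mu (A \ E') + mu (A ∩ (Dᶜ ∩ E')) := by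
      rw [← mu_inter_add_diff (A \ (D ∩ E')) E', add_comm]
      congr 2 <;> ext x <;> simp <;> tauto
    have h4 : mu (D ∩ E')ᶜ = mu E'ᶜ + mu (Dᶜ ∩ E') := by
      rw [← mu_inter_add_diff (D ∩ E')ᶜ E', add_comm]
      congr 2 <;> ext x <;> simp <;> tauto
    rw [h3, h4]; linarith

end RelSz

/-! ### A partition theorem for combinatorial lines -/

namespace RelSz
open Combinatorics

section Lift
variable {η θ β ι : Type*}

/-- A subspace over `β`, acting on words over `Option β`; the letter `none` plays the role of a
wildcard. -/
def liftS (σ : Subspace η β ι) : Subspace η (Option β) ι where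
  idxFun i := (σ.idxFun i).map some id
  proper e := by
    obtain ⟨i, hi⟩ := σ.proper e
    exact ⟨i, by simp [hi]⟩

lemma liftS_subComp (σ : Subspace η β ι) (τ : Subspace θ β η) (w : θ → Option β) :
    liftS (subComp σ τ) w = liftS σ (liftS τ w) := by
  funext i
  simp only [Subspace.apply_def, liftS, subComp]
  cases σ.idxFun i <;> simp [Subspace.apply_def]

end Lift

/-- A colouring of words with wildcards is prefix-determined if the colour of a word depends only
on any prefix that ends with a wildcard. -/
def PrefixDet {β κ : Type*} {n : ℕ} (C : (Fin n → Option β) → κ) : Prop :=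
  ∀ (w w' : Fin n → Option β) (j : Fin n), w j = none → (∀ i ≤ j, w i = w' i) → C w = C w'

lemma exists_prefixDet (β : Type) [Finite β] (m : ℕ) : ∀ (κ : Type) [Finite κ],
    ∃ M : ℕ, ∀ C : (Fin M → Option β) → κ, ∃ σ : Subspace (Fin m) β (Fin M),
      PrefixDet fun w => C (liftS σ w) := by
  induction m with
  | zero =>
    intro κ _
    exact ⟨0, fun C => ⟨⟨fun i => i.elim0, fun e => e.elim0⟩, fun w w' j => j.elim0⟩⟩
  | succ m ih =>
    intro κ _
    obtain ⟨M', hM'⟩ := ih (β → κ)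
    obtain ⟨R, hR⟩ := Subspace.exists_mono_in_high_dimension_fin (Option β) κ (Fin M')
    refine ⟨R + 1, fun C => ?_⟩
    obtain ⟨W, c, hW⟩ := hR fun z => C (Fin.cons none z)
    -- constants `none` of `W` are merged with the new first variable
    let τ : Subspace (Fin (M' + 1)) β (Fin (R + 1)) :=
      { idxFun := Fin.cons (Sum.inr 0) fun i => (W.idxFun i).elim
          (fun a => a.elim (Sum.inr 0) Sum.inl) (fun e => Sum.inr e.succ)
        proper := fun e => by
          refine Fin.cases ⟨0, rfl⟩ (fun e => ?_) e
          obtain ⟨i, hi⟩ := W.proper e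
          exact ⟨i.succ, by simp [hi]⟩ }
    have hτ : ∀ z : Fin M' → Option β, C (liftS τ (Fin.cons none z)) = c := by
      intro z
      rw [← hW z]
      congr 1
      funext i
      refine Fin.cases ?_ (fun i => ?_) i
      · simp [Subspace.apply_def, liftS, τ]
      · simp only [Subspace.apply_def, liftS, τ, Fin.cons_succ]
        rcases W.idxFun i with (_ | a) | e <;> simp
    obtain ⟨σ', hσ'⟩ := hM' fun z b => C (liftS τ (Fin.cons (some b) z))
    let ρ : Subspace (Fin (m + 1)) β (Fin (M' + 1)) :=
      { idxFun := Fin.cons (Sum.inr 0) fun i => (σ'.idxFun i).map id Fin.succ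
        proper := fun e => by
          refine Fin.cases ⟨0, rfl⟩ (fun e => ?_) e
          obtain ⟨i, hi⟩ := σ'.proper e
          exact ⟨i.succ, by simp [hi]⟩ }
    have hρ : ∀ w : Fin (m + 1) → Option β,
        liftS ρ w = (Fin.cons (w 0) (liftS σ' (Fin.tail w)) : Fin (M' + 1) → Option β) := by
      intro w
      funext i
      refine Fin.cases ?_ (fun i => ?_) i
      · simp [Subspace.apply_def, liftS, ρ]
      · simp only [Subspace.apply_def, liftS, ρ, Fin.cons_succ]
        rcases σ'.idxFun i with a | e <;> simp [Fin.tail]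
    refine ⟨subComp τ ρ, ?_⟩
    intro w w' j hj hw
    simp only [liftS_subComp, hρ]
    have h0 : w 0 = w' 0 := hw 0 (Fin.zero_le _)
    rw [← h0]
    rcases hw0 : w 0 with _ | b
    · rw [hτ, hτ]
    · revert hj hw
      refine Fin.cases (fun hj => by simp [hw0] at hj) (fun j hj hw => ?_) j
      have := hσ' (Fin.tail w) (Fin.tail w') j hj (fun i hi => hw i.succ (by simpa using hi))
      exact congrFun this b

/-- For a prefix-determined colouring there is a subspace on which the colour of a word depends
only on the position of its first wildcard. -/
lemma exists_first_det (β : Type) [Finite β] (m : ℕ) : ∀ (κ : Type) [Finite κ],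
    ∃ M : ℕ, ∀ C : (Fin M → Option β) → κ, PrefixDet C →
      ∃ (σ : Subspace (Fin m) β (Fin M)) (c : Fin m → κ), ∀ (w : Fin m → Option β) (j : Fin m),
        w j = none → (∀ i < j, w i ≠ none) → C (liftS σ w) = c j := by
  induction m with
  | zero =>
    intro κ _
    exact ⟨0, fun C _ => ⟨⟨fun i => i.elim0, fun e => e.elim0⟩, fun i => i.elim0,
      fun w j => j.elim0⟩⟩
  | succ m ih =>
    intro κ _
    classical
    obtain ⟨n, hn⟩ := Subspace.exists_mono_in_high_dimension_fin β (Fin m → κ) (Fin 1)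
    obtain ⟨M', hM'⟩ := ih ((Fin n → β) → κ)
    refine ⟨n + M', fun C hC => ?_⟩
    obtain ⟨σ', c, hc⟩ := hM' (fun z u => C (Fin.append (fun i => some (u i)) z)) (by
      intro w w' j hj hw
      funext u
      refine hC _ _ (Fin.natAdd n j) (by simpa using hj) ?_
      intro i hi
      induction i using Fin.addCases with
      | left i => simp
      | right i => simpa using hw i (by simpa using hi))
    obtain ⟨l, d, hl⟩ := hn fun u j => c j u
    let ρ : Subspace (Fin (m + 1)) β (Fin (n + M')) :=
      { idxFun := Fin.append (fun i => (l.idxFun i).map id fun _ => 0)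
          (fun i => (σ'.idxFun i).map id Fin.succ)
        proper := fun e => by
          refine Fin.cases ?_ (fun e => ?_) e
          · obtain ⟨i, hi⟩ := l.proper 0
            exact ⟨Fin.castAdd _ i, by simp [hi]⟩
          · obtain ⟨i, hi⟩ := σ'.proper e
            exact ⟨Fin.natAdd _ i, by simp [hi]⟩ }
    have hρ : ∀ w : Fin (m + 1) → Option β,
        liftS ρ w = Fin.append (liftS l fun _ => w 0) (liftS σ' (Fin.tail w)) := by
      intro w
      funext i
      induction i using Fin.addCases with
      | left i =>
        simp only [Subspace.apply_def, liftS, ρ, Fin.append_left]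
        rcases l.idxFun i with a | e <;> simp
      | right i =>
        simp only [Subspace.apply_def, liftS, ρ, Fin.append_right]
        rcases σ'.idxFun i with a | e <;> simp [Fin.tail]
    obtain ⟨i₀, hi₀⟩ := l.proper 0
    have hsome : ∀ b : β, (liftS l fun _ => some b) = fun i => some (l (fun _ => b) i) := by
      intro b; funext i
      simp only [Subspace.apply_def, liftS]
      rcases l.idxFun i with a | e <;> simp
    obtain ⟨w₀, hw₀⟩ : ∃ w₀ : Fin (m + 1) → Option β, w₀ 0 = none := ⟨fun _ => none, rfl⟩
    refine ⟨ρ, Fin.cons (C (liftS ρ w₀)) d, fun w j => ?_⟩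
    refine Fin.cases (fun hj _ => ?_) (fun j hj hlt => ?_) j
    · rw [Fin.cons_zero, hρ, hρ, hj, hw₀]
      refine hC _ _ (Fin.castAdd M' i₀) (by simp [Subspace.apply_def, liftS, hi₀]) ?_
      intro i hi
      induction i using Fin.addCases with
      | left i => simp
      | right i =>
        exfalso
        have h1 : n + (i : ℕ) ≤ i₀ := hi
        omega
    · obtain ⟨b, hb⟩ := Option.ne_none_iff_exists'.1 (hlt 0 (Fin.succ_pos j))
      rw [Fin.cons_succ, hρ, hb, hsome]
      have h1 := hc (Fin.tail w) j hj (fun i hi => hlt i.succ (by simpa using hi))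
      have h2 := congrFun h1 (l fun _ => b)
      rw [h2]
      exact congrFun (hl fun _ => b) j

/-- The Graham–Rothschild theorem for combinatorial lines: for every finite colouring of the lines
over `β`, encoded as words over `Option β` with at least one `none`, all lines inside some
`m`-dimensional subspace have the same colour. -/
lemma graham_rothschild (β : Type) [Finite β] [Nonempty β] (m : ℕ) (κ : Type) [Finite κ] :
    ∃ M : ℕ, ∀ C : (Fin M → Option β) → κ, ∃ (σ : Subspace (Fin m) β (Fin M)) (c : κ),
      ∀ w : Fin m → Option β, (∃ j, w j = none) → C (liftS σ w) = c := by
  classical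
  have := Fintype.ofFinite κ
  rcases isEmpty_or_nonempty κ with hκ | hκ
  · exact ⟨0, fun C => hκ.elim (C fun i => i.elim0)⟩
  set m₂ := Fintype.card κ * m with hm₂
  obtain ⟨M₁, hM₁⟩ := exists_first_det β m₂ κ
  obtain ⟨M, hM⟩ := exists_prefixDet β M₁ κ
  refine ⟨M, fun C => ?_⟩
  obtain ⟨σ, hσ⟩ := hM C
  obtain ⟨τ, c, hc⟩ := hM₁ _ hσ
  obtain ⟨a, -, ha⟩ := exists_le_card_fiber_of_mul_le_card_of_maps_to (s := (univ : Finset (Fin m₂)))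
    (t := (univ : Finset κ)) (f := c) (n := m) (fun _ _ => mem_univ _) univ_nonempty
    (by simp [hm₂])
  obtain ⟨S, hS, hSm⟩ := exists_subset_card_eq ha
  let e : S ≃ Fin m := S.equivFinOfCardEq hSm
  obtain ⟨b₀⟩ := ‹Nonempty β›
  let ρ : Subspace (Fin m) β (Fin m₂) :=
    { idxFun := fun i => if h : i ∈ S then Sum.inr (e ⟨i, h⟩) else Sum.inl b₀
      proper := fun j => ⟨e.symm j, by simp⟩ }
  refine ⟨subComp (subComp σ τ) ρ, a, fun w hw => ?_⟩
  rw [liftS_subComp, liftS_subComp]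
  set w' := liftS ρ w with hw'
  have hT : ({i | w' i = none} : Finset (Fin m₂)).Nonempty := by
    obtain ⟨j, hj⟩ := hw
    exact ⟨e.symm j, by simp [hw', Subspace.apply_def, liftS, ρ, hj]⟩
  set j := ({i | w' i = none} : Finset (Fin m₂)).min' hT with hj
  have hj1 : w' j = none := by
    have := min'_mem _ hT
    rw [← hj] at this
    simpa using this
  have hjS : j ∈ S := by
    by_contra hjS
    simp [hw', Subspace.apply_def, liftS, ρ, hjS] at hj1
  have := hc w' j hj1 (fun i hi hi' => by
    have := min'_le ({i | w' i = none} : Finset (Fin m₂)) i (by simpa using hi')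
    rw [← hj] at this
    exact absurd hi (not_lt.2 this))
  rw [this]
  simpa using hS hjS

end RelSz

/-! ### The density Hales–Jewett theorem -/

namespace RelSz
open Combinatorics

/-- Substitute the letter `b` for the wildcard `none`. -/
def fillW {β ι : Type*} (w : ι → Option β) (b : β) : ι → Option β := fun j => some ((w j).getD b)

lemma fillW_liftS {β ι η : Type*} (σ : Subspace η β ι) (w : η → Option β) (b : β) :
    fillW (liftS σ w) b = liftS σ (fillW w b) := by
  funext i
  simp only [fillW, Subspace.apply_def, liftS]
  rcases σ.idxFun i with a | e <;> simp [fillW]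

lemma LineFree.not_fill {β ι : Type*} {A : Set (ι → Option β)} (hA : LineFree A)
    {w : ι → Option β} (hw : ∃ j, w j = none) (h : w ∈ A) (h' : ∀ b, fillW w b ∈ A) : False := by
  let l : Line (Option β) ι :=
    { idxFun := fun j => (w j).map some
      proper := by obtain ⟨j, hj⟩ := hw; exact ⟨j, by simp [hj]⟩ }
  obtain ⟨a, ha⟩ := hA l
  apply ha
  rcases a with _ | b
  · convert h using 1
    funext j
    simp only [l, Line.coe_apply]
    cases w j <;> simp
  · convert h' b using 1
    funext j
    simp only [l, Line.coe_apply, fillW]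
    cases w j <;> simp

lemma DHJAt.mono {α : Type} [Fintype α] {δ δ' : ℝ} (h : DHJAt α δ) (hδ : δ ≤ δ') : DHJAt α δ' := by
  obtain ⟨n, hn⟩ := h
  exact ⟨n, fun ι _ _ hι A hA => (hn ι hι A hA).trans_le hδ⟩

lemma lower_of_avg {Ω : Type*} [Fintype Ω] [Nonempty Ω] {f : Ω → ℝ} {a b : ℝ} (hb : ∀ x, f x ≤ b)
    (ha : a ≤ avg f) (x : Ω) : b - Fintype.card Ω * (b - a) ≤ f x := by
  have hc : (0 : ℝ) < Fintype.card Ω := by exact_mod_cast Fintype.card_pos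
  unfold avg at ha
  rw [le_div_iff₀ hc] at ha
  have h1 : b - f x ≤ ∑ y, (b - f y) :=
    single_le_sum (f := fun y => b - f y) (fun y _ => by linarith [hb y]) (mem_univ x)
  rw [sum_sub_distrib, sum_const, card_univ, nsmul_eq_mul] at h1
  linarith

/-- A long random word over `Option β` contains the letter `none` with high probability. -/
lemma exists_mu_none (β : Type) [Fintype β] (ε : ℝ) (hε : 0 < ε) :
    ∃ n₀ : ℕ, ∀ (ι : Type) [Fintype ι] [DecidableEq ι], n₀ ≤ Fintype.card ι →
      mu {w : ι → Option β | ∀ j, w j ≠ none} < ε := by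
  classical
  set q : ℝ := avg fun a : Option β => if a.isSome then (1 : ℝ) else 0 with hq
  have hq0 : 0 ≤ q := avg_nonneg fun a => by split_ifs <;> norm_num
  have hq1 : q < 1 := by
    rw [hq]; unfold avg
    rw [div_lt_one (by positivity), Fintype.sum_option, Fintype.card_option]
    simp
  obtain ⟨n₀, hn₀⟩ := exists_pow_lt_of_lt_one hε hq1
  refine ⟨n₀, fun ι _ _ hι => ?_⟩
  have h1 : mu {w : ι → Option β | ∀ j, w j ≠ none} =
      avg fun u : ι → Option β => ∏ j, if (u j).isSome then (1 : ℝ) else 0 := by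
    unfold mu
    congr 1; funext u
    rw [Finset.prod_ite_zero]
    by_cases hu : ∀ j, u j ≠ none
    · simp [Set.indicator, hu, Option.isSome_iff_ne_none]
    · simp [Set.indicator, hu, Option.isSome_iff_ne_none]
  rw [h1, avg_pi_prod (fun a : Option β => if a.isSome then (1 : ℝ) else 0)]
  exact (pow_le_pow_of_le_one hq0 hq1.le hι).trans_lt hn₀

/-- If all the sets `A t` are dense then, by the density theorem for `β`, some line over `β`
inside `σ` has a substantial common intersection. -/
lemma exists_good_line {β : Type} [Fintype β] {M m₁ : ℕ} {Y : Type*} [Fintype Y]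
    [Nonempty Y] [Nonempty β] {δ θ : ℝ} (hδ : 0 < δ)
    (hm₁ : ∀ A : Set (Fin m₁ → β), LineFree A → mu A < δ / 4)
    (hθ : θ * (Nat.card (Line β (Fin m₁)) + 1) = δ / 4)
    (A : (Fin M → Option β) → Set Y) (hA : ∀ t, δ / 2 ≤ mu (A t)) (σ : Subspace (Fin m₁) β (Fin M)) :
    ∃ w : Fin m₁ → Option β, (∃ j, w j = none) ∧
      θ ≤ mu {y | ∀ b, y ∈ A (fillW (liftS σ w) b)} := by
  classical
  have := Fintype.ofFinite (Line β (Fin m₁))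
  rw [Nat.card_eq_fintype_card] at hθ
  have hL : (0:ℝ) ≤ Fintype.card (Line β (Fin m₁)) := Nat.cast_nonneg _
  have hθ0 : 0 < θ := by
    by_contra! hcon
    nlinarith
  set f : Y → ℝ := fun y => mu {x : Fin m₁ → β | y ∈ A (liftS σ fun j => some (x j))} with hf
  have h1 : δ / 2 ≤ avg f := by
    have : avg f = avg fun x : Fin m₁ → β => mu (A (liftS σ fun j => some (x j))) := by
      rw [hf]; unfold mu; rw [avg_comm]; rfl
    rw [this]
    exact le_avg_of_le fun x => hA _
  have h2 := half_le_mu_of_le_avg (fun y => mu_le_one _) (by positivity) h1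
  by_contra! hcon
  have h4 := exists_pigeonhole {y : Y | δ / 2 / 2 ≤ f y}
    (fun l : Line β (Fin m₁) => {y : Y | ∀ b, y ∈ A (fillW (liftS σ l.idxFun) b)}) ?_
    (fun l => (hcon l.idxFun l.proper).le)
  · nlinarith
  · intro y hy
    by_contra! hcon2
    have h5 := hm₁ {x : Fin m₁ → β | y ∈ A (liftS σ fun j => some (x j))} (by
      intro l
      have h6 := hcon2 l
      simp only [Set.mem_ofPred_eq, not_forall] at h6
      obtain ⟨b, hb⟩ := h6
      refine ⟨b, ?_⟩
      rw [fillW_liftS] at hb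
      exact hb)
    simp only [Set.mem_ofPred_eq, hf] at hy
    linarith

/-- The induction step of the density Hales–Jewett theorem, by contradiction at the critical
density. All slices of a line-free set close to the critical density have nearly that density,
so the lines over `β` may be assumed to have substantial intersections; a line-free set then
avoids an intersection `D` of insensitive sets, which forces a density increment on the
complement of `D`. -/
lemma DHJ.option {β : Type} [Fintype β] [Nonempty β] (h : DHJ β) : DHJ (Option β) := by
  classical
  by_contra hcon
  simp only [DHJ, not_forall] at hcon
  obtain ⟨δ₀, hδ₀, hδ₀'⟩ := hcon
  set S : Set ℝ := {δ | DHJAt (Option β) δ} with hS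
  have hS2 : (2:ℝ) ∈ S := ⟨0, fun ι _ _ _ A _ => (mu_le_one A).trans_lt (by norm_num)⟩
  have hSb : ∀ x ∈ S, δ₀ ≤ x := by
    intro x hx
    by_contra! hlt
    exact hδ₀' (DHJAt.mono hx hlt.le)
  have hbdd : BddBelow S := ⟨δ₀, hSb⟩
  set δ := sInf S with hδdef
  have hδ : 0 < δ := hδ₀.trans_le (le_csInf ⟨2, hS2⟩ hSb)
  have hδ2 : δ ≤ 2 := csInf_le hbdd hS2
  have hup : ∀ ε : ℝ, 0 < ε → DHJAt (Option β) (δ + ε) := by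
    intro ε hε
    obtain ⟨x, hx, hlt⟩ := exists_lt_of_csInf_lt (s := S) ⟨2, hS2⟩ (show sInf S < δ + ε by linarith)
    exact DHJAt.mono hx hlt.le
  have hdown : ∀ ε : ℝ, 0 < ε → ¬ DHJAt (Option β) (δ - ε) := by
    intro ε hε hx
    have := csInf_le hbdd hx
    linarith
  obtain ⟨m₁, hm₁⟩ := h (δ / 4) (by positivity)
  have hm₁' := hm₁ (Fin m₁) (by simp)
  set L : ℝ := (Nat.card (Line β (Fin m₁)) : ℝ) with hL
  have hL0 : 0 ≤ L := Nat.cast_nonneg _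
  set θ := δ / 4 / (L + 1) with hθdef
  have hθ : θ * (L + 1) = δ / 4 := by rw [hθdef]; field_simp
  have hθ0 : 0 < θ := by positivity
  have hθ1 : θ ≤ 1 := by
    rw [hθdef, div_le_one (by positivity)]; linarith
  set ε := δ * θ ^ 2 / 100 with hεdef
  have hε : 0 < ε := by positivity
  have hε1 : ε ≤ δ / 100 := by
    rw [hεdef]
    have : θ ^ 2 ≤ 1 := pow_le_one₀ hθ0.le hθ1
    have := mul_le_mul_of_nonneg_left this hδ.le
    linarith
  obtain ⟨mε, hmε⟩ := hup ε hε
  obtain ⟨m₂, hm₂⟩ := compl_inter_le h mε (δ + ε) (by positivity) (univ : Finset β).toList ε hε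
  obtain ⟨m₃, hm₃⟩ := exists_mu_none β ε hε
  set m := max (max m₁ mε) (max m₂ m₃) with hm
  have hmm₁ : m₁ ≤ m := (le_max_left _ _).trans (le_max_left _ _)
  have hmmε : mε ≤ m := (le_max_right _ _).trans (le_max_left _ _)
  have hmm₂ : m₂ ≤ m := (le_max_left _ _).trans (le_max_right _ _)
  have hmm₃ : m₃ ≤ m := (le_max_right _ _).trans (le_max_right _ _)
  obtain ⟨M, hM⟩ := graham_rothschild β m Prop
  set K : ℝ := (Fintype.card (Fin M → Option β) : ℝ) with hK
  have hK0 : 1 ≤ K := by rw [hK]; exact_mod_cast Fintype.card_pos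
  set ε₂ := ε / K with hε₂def
  have hε₂ : 0 < ε₂ := by positivity
  have hε₂' : ε₂ ≤ ε := div_le_self hε.le hK0
  obtain ⟨n₂, hn₂⟩ := hup ε₂ hε₂
  have hd := hdown ε₂ hε₂
  simp only [DHJAt, not_exists, not_forall, not_lt] at hd
  obtain ⟨ι, _, _, hι, A₀, hA₀free, hA₀⟩ := hd (M + n₂)
  obtain ⟨e⟩ := exists_equiv_sum ι (n := M) (by omega)
  set r := Fintype.card ι - M with hr
  set A₁ : Set (Fin M ⊕ Fin r → Option β) := {x | (subEquiv e : Subspace _ (Option β) ι) x ∈ A₀}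
    with hA₁
  have hA₁free : LineFree A₁ := hA₀free.pullback _
  have hA₁mu : δ - ε₂ ≤ mu A₁ := by rw [hA₁, mu_subEquiv]; exact hA₀
  set A : (Fin M → Option β) → Set (Fin r → Option β) := fun t => {y | Sum.elim t y ∈ A₁} with hA
  have hAup : ∀ t, mu (A t) ≤ δ + ε₂ := by
    intro t
    refine (hn₂ (Fin r) (by rw [Fintype.card_fin]; omega) (A t) ?_).le
    have := hA₁free.pullback (sliceR t)
    simpa only [sliceR_apply] using this
  have hAlow : ∀ t, δ - 2 * ε ≤ mu (A t) := by
    intro t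
    have h1 := lower_of_avg (f := fun t => mu (A t)) (a := δ - ε₂) hAup
      (by rwa [mu_sumElim] at hA₁mu) t
    have h2 : K * ε₂ = ε := by rw [hε₂def]; field_simp
    rw [← hK] at h1
    nlinarith
  obtain ⟨σ, c, hc⟩ := hM fun w => θ ≤ mu {y | ∀ b, y ∈ A (fillW w b)}
  -- the lines inside `σ` are good
  have hgood : ∀ w : Fin m → Option β, (∃ j, w j = none) →
      θ ≤ mu {y | ∀ b, y ∈ A (fillW (liftS σ w) b)} := by
    obtain ⟨b₀⟩ := ‹Nonempty β›
    let emb : Subspace (Fin m₁) β (Fin m) :=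
      { idxFun := fun i => if hi : (i : ℕ) < m₁ then Sum.inr ⟨i, hi⟩ else Sum.inl b₀
        proper := fun j => ⟨⟨j, by omega⟩, by simp⟩ }
    have : Nonempty β := ⟨b₀⟩
    obtain ⟨w₀, ⟨j₀, hw₀⟩, hw_fill⟩ := exists_good_line hδ hm₁' hθ A
      (fun t => by linarith [hAlow t]) (subComp σ emb)
    intro w hw
    rw [liftS_subComp] at hw_fill
    have h1 := hc (liftS emb w₀) ⟨⟨j₀, by omega⟩, by simp [Subspace.apply_def, liftS, emb, hw₀]⟩
    have h2 := hc w hw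
    rw [← h1] at h2
    exact h2.mpr hw_fill
  -- slices in the `σ` direction
  set Ay : (Fin r → Option β) → Set (Fin m → Option β) := fun y => {w | y ∈ A (liftS σ w)} with hAy
  set Dy : (Fin r → Option β) → Set (Fin m → Option β) :=
    fun y => {w | ∀ b, y ∈ A (fillW (liftS σ w) b)} with hDy
  have hfree : ∀ y, LineFree (Ay y) := by
    intro y
    have := (hA₁free.pullback (sliceL y)).pullback (liftS σ)
    simp only [sliceL_apply] at this
    exact this
  have hAyup : ∀ y, mu (Ay y) ≤ δ + ε := fun y => (hmε (Fin m) (by simpa using hmmε) _ (hfree y)).le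
  have havgA : δ - 2 * ε ≤ avg fun y => mu (Ay y) := by
    have : avg (fun y => mu (Ay y)) = avg fun w => mu (A (liftS σ w)) := by
      unfold mu; rw [avg_comm]; rfl
    rw [this]
    exact le_avg_of_le fun w => hAlow _
  have hnone := hm₃ (Fin m) (by simpa using hmm₃)
  have havgD : θ / 2 ≤ avg fun y => mu (Dy y) := by
    have h1 : avg (fun y => mu (Dy y)) =
        avg fun w => mu {y | ∀ b, y ∈ A (fillW (liftS σ w) b)} := by
      unfold mu; rw [avg_comm]; rfl
    rw [h1]
    have h2 : avg (fun w : Fin m → Option β => θ * (1 -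
        ({w : Fin m → Option β | ∀ j, w j ≠ none}.indicator (fun _ => (1:ℝ)) w))) ≤
        avg fun w => mu {y | ∀ b, y ∈ A (fillW (liftS σ w) b)} := by
      refine avg_mono fun w => ?_
      by_cases hw : ∀ j, w j ≠ none
      · rw [Set.indicator_of_mem (show w ∈ {w : Fin m → Option β | ∀ j, w j ≠ none} from hw),
          sub_self, mul_zero]
        exact mu_nonneg _
      · rw [Set.indicator_of_notMem (show w ∉ {w : Fin m → Option β | ∀ j, w j ≠ none} from hw),
          sub_zero, mul_one]
        push Not at hw
        exact hgood w hw
    rw [avg_mul_left, avg_sub, avg_const] at h2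
    unfold mu at hnone
    nlinarith
  obtain ⟨y, hy⟩ := exists_avg_le fun y => mu (Ay y) + 12 * ε / θ * mu (Dy y)
  rw [avg_add, avg_mul_left] at hy
  have hlam : 12 * ε / θ * θ = 12 * ε := by field_simp
  have hlam0 : 0 < 12 * ε / θ := by positivity
  have hD4 : θ / 4 ≤ mu (Dy y) := by
    by_contra! hlt
    nlinarith [hAyup y]
  have hA4 : δ - 2 * ε - 12 * ε / θ ≤ mu (Ay y) := by
    have h1 : mu (Dy y) ≤ 1 := mu_le_one _
    have h2 : 0 ≤ avg fun y => mu (Dy y) := by linarith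
    nlinarith
  -- inside `D` the line-free set has no word with a wildcard
  have hAD : mu (Ay y ∩ Dy y) ≤ ε := by
    refine (mu_mono ?_).trans hnone.le
    rintro w ⟨hw1, hw2⟩ j hj
    refine (hfree y).not_fill ⟨j, hj⟩ hw1 fun b => ?_
    have := hw2 b
    rw [fillW_liftS] at this
    exact this
  have hInt : ∀ l : List β, IsInt l {w : Fin m → Option β | ∀ b ∈ l, y ∈ A (fillW (liftS σ w) b)} := by
    intro l
    induction l with
    | nil => simp [IsInt]
    | cons b l ih =>
      refine ⟨{w | y ∈ A (fillW (liftS σ w) b)}, _, ?_, ih, ?_⟩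
      · intro w w' hww hw
        have : fillW w b = fillW w' b := by funext j; simp [fillW, hww]
        simp only [Set.mem_ofPred_eq, fillW_liftS, ← this] at hw ⊢
        exact hw
      · ext w; simp
  have hcompl := hm₂ (Fin m) (by simpa using hmm₂) _ (hInt _) (Ay y) (fun V =>
    (hmε (Fin mε) (by simp) _ ((hfree y).pullback V)).le)
  have hDeq : {w : Fin m → Option β | ∀ b ∈ (univ : Finset β).toList,
      y ∈ A (fillW (liftS σ w) b)} = Dy y := by ext w; simp [hDy]
  rw [hDeq, mu_compl] at hcompl
  have hsum := mu_inter_add_diff (Ay y) (Dy y)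
  have hfin : δ * θ / 4 ≤ 5 * ε + 12 * ε / θ := by
    have h1 := mul_le_mul_of_nonneg_left hD4 hδ.le
    have h2 := mul_nonneg hε.le (mu_nonneg (Dy y))
    linarith
  have h17 : 12 * ε / θ = 12 * (δ * θ / 100) := by rw [hεdef]; field_simp
  have h18 : ε ≤ δ * θ / 100 := by
    rw [hεdef]
    have : θ ^ 2 ≤ θ := by rw [sq]; exact mul_le_of_le_one_left hθ0.le hθ1
    have := mul_le_mul_of_nonneg_left this hδ.le
    linarith
  have : 0 < δ * θ := by positivity
  linarith

end RelSz

/-! ### Szemerédi's theorem for weights on cyclic groups -/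

namespace RelSz
open Combinatorics

lemma DHJ.congr {α β : Type} [Fintype α] [Fintype β] (e : α ≃ β) (h : DHJ α) : DHJ β := by
  intro δ hδ
  obtain ⟨n, hn⟩ := h δ hδ
  refine ⟨n, fun ι _ _ hι A hA => ?_⟩
  have h1 := hn ι hι {x | (fun j => e (x j)) ∈ A} (by
    intro l
    obtain ⟨b, hb⟩ := hA (l.map e)
    refine ⟨e.symm b, fun hmem => hb ?_⟩
    have := Line.map_apply (e : α → β) l (e.symm b)
    rw [Equiv.apply_symm_apply] at this
    rw [this]
    exact hmem)
  have h2 := mu_equiv (Equiv.arrowCongr (Equiv.refl ι) e) A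
  rw [← h2]
  exact h1

/-- The density Hales–Jewett theorem. -/
lemma dhj_fin (k : ℕ) : DHJ (Fin (k + 1)) := by
  induction k with
  | zero =>
    intro δ hδ
    refine ⟨1, fun ι _ _ hι A hA => ?_⟩
    have hne : Nonempty ι := Fintype.card_pos_iff.1 hι
    obtain ⟨a, ha⟩ := hA ⟨fun _ => none, hne.elim fun j => ⟨j, rfl⟩⟩
    have : A = ∅ := by
      ext x
      simp only [Set.mem_empty_iff_false, iff_false]
      intro hx
      apply ha
      convert hx using 1
      funext j
      exact Subsingleton.elim (α := Fin 1) _ _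
    rw [this, mu_empty]; exact hδ
  | succ k ih => exact (DHJ.option ih).congr (finSuccEquiv (k + 1)).symm

lemma card_ker_nsmul_le (N : ℕ) [NeZero N] (r : ℕ) (hr : 0 < r) :
    Nat.card (nsmulAddMonoidHom (α := ZMod N) r).ker ≤ r := by
  classical
  refine le_trans (le_of_eq ?_) (IsAddCyclic.card_nsmul_eq_zero_le (α := ZMod N) hr)
  rw [Nat.card_eq_fintype_card, Fintype.card_subtype]
  simp [AddMonoidHom.mem_ker]

/-- Szemerédi's theorem for `[0,1]`-valued functions on `ZMod N`, with a uniform lower bound on the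
density of progressions. -/
theorem szemeredi (k : ℕ) (hk : 1 ≤ k) (δ : ℝ) (hδ : 0 < δ) :
    ∃ c : ℝ, 0 < c ∧ ∀ N : ℕ, ∀ [NeZero N], ∀ f : ZMod N → ℝ, (∀ x, 0 ≤ f x ∧ f x ≤ 1) →
      δ ≤ avg f → c ≤ avg fun p : ZMod N × ZMod N =>
        ∏ i ∈ Finset.range k, f (p.1 + (i : ZMod N) * p.2) := by
  classical
  obtain ⟨k, rfl⟩ : ∃ k', k = k' + 1 := ⟨k - 1, by omega⟩
  obtain ⟨n, hn⟩ := dhj_fin k (δ / 4) (by positivity)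
  have := Fintype.ofFinite (Line (Fin (k + 1)) (Fin n))
  set L : ℝ := ((Fintype.card (Line (Fin (k + 1)) (Fin n)) : ℕ) : ℝ) with hL
  have hL0 : 0 ≤ L := Nat.cast_nonneg _
  refine ⟨(δ / 4) ^ (k + 1) * (δ / 2) / (L * n + 1), by positivity, fun N _ f hf hfδ => ?_⟩
  set Λ := avg fun p : ZMod N × ZMod N =>
        ∏ i ∈ Finset.range (k + 1), f (p.1 + (i : ZMod N) * p.2) with hΛ
  have hΛ0 : 0 ≤ Λ := avg_nonneg fun p => prod_nonneg fun i _ => (hf _).1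
  let s : (Fin n → Fin (k + 1)) → ℕ := fun w => ∑ j, (w j : ℕ)
  let r : Line (Fin (k + 1)) (Fin n) → ℕ := fun l => #{j | l.idxFun j = none}
  have hs : ∀ (l : Line (Fin (k + 1)) (Fin n)) (i : Fin (k + 1)), s (l i) = s (l 0) + i * r l := by
    intro l i
    simp only [s, r]
    rw [card_filter, mul_sum, ← sum_add_distrib]
    refine sum_congr rfl fun j _ => ?_
    rw [Line.coe_apply, Line.coe_apply]
    cases l.idxFun j <;> simp
  have hr0 : ∀ l, 0 < r l := by
    intro l
    obtain ⟨j, hj⟩ := l.proper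
    exact card_pos.2 ⟨j, by simp [hj]⟩
  have hrn : ∀ l, r l ≤ n := fun l => (card_le_univ _).trans (by simp)
  set F : ZMod N × ZMod N → ℝ := fun p => avg fun w : Fin n → Fin (k + 1) =>
    f (p.1 + (s w : ZMod N) * p.2) with hF
  have hFavg : avg F = avg f := by
    rw [hF, avg_comm]
    have : ∀ w : Fin n → Fin (k + 1), (avg fun p : ZMod N × ZMod N =>
        f (p.1 + (s w : ZMod N) * p.2)) = avg f := by
      intro w
      rw [avg_prod, avg_comm]
      simp only [avg_add_right, avg_const]
    simp only [this, avg_const]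
  have h1 := half_le_mu_of_le_avg (f := F) (fun p => avg_le_of_le fun w => (hf _).2) hδ.le
    (by rw [hFavg]; exact hfδ)
  set G : Line (Fin (k + 1)) (Fin n) → ZMod N × ZMod N → ℝ := fun l p =>
    ∏ i ∈ Finset.range (k + 1), f (p.1 + ((s (l 0) : ℕ) : ZMod N) * p.2 + (i : ZMod N) * (r l • p.2))
    with hG
  have hG0 : ∀ l p, 0 ≤ G l p := fun l p => prod_nonneg fun i _ => (hf _).1
  -- good pairs `(a, d)` yield a line
  have h2 : ∀ p, (δ / 4) ^ (k + 1) * ({p | δ / 2 ≤ F p}.indicator (fun _ => (1:ℝ)) p) ≤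
      ∑ l, G l p := by
    intro p
    by_cases hp : δ / 2 ≤ F p
    · have h3 := half_le_mu_of_le_avg (fun w => (hf _).2) (by positivity) hp
      obtain ⟨l, hl⟩ : ∃ l : Line (Fin (k + 1)) (Fin n), ∀ i,
          δ / 2 / 2 ≤ f (p.1 + (s (l i) : ZMod N) * p.2) := by
        by_contra! hcon
        have := hn (Fin n) (by simp) {w | δ / 2 / 2 ≤ f (p.1 + (s w : ZMod N) * p.2)}
          (fun l => by simpa using hcon l)
        linarith
      rw [Set.indicator_of_mem (show p ∈ {p | δ / 2 ≤ F p} from hp), mul_one]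
      refine le_trans ?_ (single_le_sum (f := fun l => G l p) (fun l _ => hG0 l p) (mem_univ l))
      simp only [hG]
      have h6 : (δ / 4) ^ (k + 1) = ∏ _i ∈ range (k + 1), δ / 4 := by rw [prod_const, card_range]
      rw [h6]
      refine prod_le_prod (fun _ _ => by positivity) fun i hi => ?_
      have h4 := hl ⟨i, mem_range.1 hi⟩
      rw [hs] at h4
      push_cast at h4
      have h5 : p.1 + ((s (l 0) : ℕ) : ZMod N) * p.2 + (i : ZMod N) * (r l • p.2) =
          p.1 + (((s (l 0) : ℕ) : ZMod N) + (i : ZMod N) * (r l : ℕ)) * p.2 := by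
        rw [nsmul_eq_mul]; ring
      rw [h5]; linarith
    · rw [Set.indicator_of_notMem (show p ∉ {p | δ / 2 ≤ F p} from hp), mul_zero]
      exact sum_nonneg fun l _ => hG0 l p
  have h3 : ∀ l, avg (G l) ≤ n * Λ := by
    intro l
    have e1 : avg (G l) = avg fun d : ZMod N => avg fun a : ZMod N =>
        ∏ i ∈ Finset.range (k + 1), f (a + (i : ZMod N) * (r l • d)) := by
      rw [avg_prod, avg_comm]
      congr 1; funext d
      exact avg_add_right (((s (l 0) : ℕ) : ZMod N) * d) fun a =>
        ∏ i ∈ Finset.range (k + 1), f (a + (i : ZMod N) * (r l • d))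
    have e2 : Λ = avg fun d : ZMod N => avg fun a : ZMod N =>
        ∏ i ∈ Finset.range (k + 1), f (a + (i : ZMod N) * d) := by
      rw [hΛ, avg_prod, avg_comm]
    rw [e1, e2]
    refine (avg_endo_le (nsmulAddMonoidHom (α := ZMod N) (r l))
      (fun d => avg fun a : ZMod N => ∏ i ∈ Finset.range (k + 1), f (a + (i : ZMod N) * d))
      (fun d => avg_nonneg fun a => prod_nonneg fun i _ => (hf _).1) (r l)
      (card_ker_nsmul_le N (r l) (hr0 l))).trans ?_
    rw [← e2]
    have := hrn l
    gcongr
  have h4 : (δ / 4) ^ (k + 1) * (δ / 2) ≤ L * (n * Λ) := by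
    calc (δ / 4) ^ (k + 1) * (δ / 2) ≤ (δ / 4) ^ (k + 1) * mu {p | δ / 2 ≤ F p} := by gcongr
      _ ≤ avg fun p => ∑ l, G l p := by
        unfold mu; rw [← avg_mul_left]; exact avg_mono h2
      _ = ∑ l, avg (G l) := avg_sum _ _
      _ ≤ ∑ _l : Line (Fin (k + 1)) (Fin n), n * Λ := sum_le_sum fun l _ => h3 l
      _ = _ := by simp [hL]
  rw [div_le_iff₀ (by positivity)]
  nlinarith

end RelSz

/-! ### The Gowers–Cauchy–Schwarz inequality with weights -/

namespace RelSz

set_option linter.unusedSectionVars false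

section GCS
variable {ι X P : Type*} [Fintype ι] [DecidableEq ι] [Fintype X] [Nonempty X] [Fintype P]
  [Nonempty P]

lemma piecewise_update_right {U : Finset ι} {i : ι} (hi : i ∉ U) (x₀ x₁ : ι → X) (t : X) :
    U.piecewise x₁ (Function.update x₀ i t) = Function.update (U.piecewise x₁ x₀) i t := by
  funext j
  by_cases hj : j = i
  · subst hj; simp [Finset.piecewise, hi]
  · simp [Finset.piecewise, hj]

lemma piecewise_update_left {U : Finset ι} {i : ι} (hi : i ∉ U) (x₀ x₁ : ι → X) (t : X) :
    U.piecewise (Function.update x₁ i t) x₀ = U.piecewise x₁ x₀ := by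
  funext j
  by_cases hj : j = i
  · subst hj; simp [Finset.piecewise, hi]
  · simp [Finset.piecewise, hj]

lemma piecewise_insert_right {U : Finset ι} {i : ι} (hi : i ∉ U) (x₀ x₁ : ι → X) :
    (insert i U).piecewise x₁ x₀ = U.piecewise x₁ (Function.update x₀ i (x₁ i)) := by
  rw [piecewise_update_right hi, Finset.piecewise_insert]

/-- Squaring the average over the coordinate `i` of `x₀`: the second copy of the variable is
stored in the coordinate `i` of `x₁`, which `w` and `R` do not use. -/
lemma avg_square_expand (i : ι) (w R : P × (ι → X) × (ι → X) → ℝ)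
    (hw0 : ∀ p x₀ x₁ t, w (p, Function.update x₀ i t, x₁) = w (p, x₀, x₁))
    (hw1 : ∀ p x₀ x₁ t, w (p, x₀, Function.update x₁ i t) = w (p, x₀, x₁))
    (hR1 : ∀ p x₀ x₁ t, R (p, x₀, Function.update x₁ i t) = R (p, x₀, x₁)) :
    (avg fun q : P × (ι → X) × (ι → X) => w q *
      (avg fun t => R (q.1, Function.update q.2.1 i t, q.2.2)) ^ 2) =
    avg fun q : P × (ι → X) × (ι → X) => w q * (R q *
      R (q.1, Function.update q.2.1 i (q.2.2 i), q.2.2)) := by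
  rw [avg_prod, avg_prod (fun q : P × (ι → X) × (ι → X) => w q * (R q *
      R (q.1, Function.update q.2.1 i (q.2.2 i), q.2.2)))]
  congr 1; funext p
  rw [avg_prod, avg_prod (fun q : (ι → X) × (ι → X) => w (p, q) * (R (p, q) *
      R (p, Function.update q.1 i (q.2 i), q.2)))]
  simp only
  symm
  rw [avg_update i]
  congr 1; funext x₀
  rw [avg_comm, avg_update i]
  congr 1; funext x₁
  simp only [hw0, hw1, hR1, Function.update_idem, Function.update_self, avg_mul_left,
    avg_mul_right, sq]

/-- **Weighted Gowers–Cauchy–Schwarz inequality.** If `a i` is bounded by `b i` and neither depends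
on the coordinate `i`, then the factors `a i`, `i ∈ J`, can be eliminated by doubling the
coordinates in `J`, at the price of inserting the weights `b i` at the doubled points. -/
lemma gcs (J : Finset ι) (b : ι → P → (ι → X) → ℝ) (C : ℝ) (hC0 : 0 ≤ C)
    (hbi : ∀ i ∈ J, ∀ p x t, b i p (Function.update x i t) = b i p x)
    (hC : ∀ i ∈ J, ∀ T ⊆ J.erase i, (avg fun q : P × (ι → X) × (ι → X) =>
      ∏ U ∈ T.powerset, b i q.1 (U.piecewise q.2.2 q.2.1)) ≤ C) :
    ∀ (F : P → (ι → X) → ℝ) (a : ι → P → (ι → X) → ℝ),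
    (∀ i ∈ J, ∀ p x, |a i p x| ≤ b i p x) →
    (∀ i ∈ J, ∀ p x t, a i p (Function.update x i t) = a i p x) →
    |avg fun q : P × (ι → X) => F q.1 q.2 * ∏ i ∈ J, a i q.1 q.2| ^ (2 ^ #J) ≤
      C ^ (2 ^ #J - 1) * |avg fun q : P × (ι → X) × (ι → X) =>
        (∏ U ∈ J.powerset, F q.1 (U.piecewise q.2.2 q.2.1)) *
          ∏ j ∈ J, ∏ U ∈ (J.erase j).powerset, b j q.1 (U.piecewise q.2.2 q.2.1)| := by
  induction J using Finset.induction_on with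
  | empty =>
    intro F a _ _
    have : (avg fun q : P × (ι → X) × (ι → X) => F q.1 q.2.1) =
        avg fun q : P × (ι → X) => F q.1 q.2 := by
      rw [avg_prod, avg_prod (fun q : P × (ι → X) => F q.1 q.2)]
      congr 1; funext p
      rw [avg_prod]
      simp only [avg_const]
    simp [this]
  | insert i J hiJ ih =>
    intro F a ha hai
    have ih' := ih (fun j hj => hbi j (mem_insert_of_mem hj))
      (fun j hj T hT => hC j (mem_insert_of_mem hj) T
        (hT.trans (erase_subset_erase _ (subset_insert _ _))))
      (fun p x => F p x * a i p x) a (fun j hj => ha j (mem_insert_of_mem hj))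
      (fun j hj => hai j (mem_insert_of_mem hj))
    have hnot : ∀ U ∈ J.powerset, i ∉ U := fun U hU h => hiJ (mem_powerset.1 hU h)
    set w : P × (ι → X) × (ι → X) → ℝ := fun q =>
      ∏ U ∈ J.powerset, b i q.1 (U.piecewise q.2.2 q.2.1) with hw
    set A : P × (ι → X) × (ι → X) → ℝ := fun q =>
      ∏ U ∈ J.powerset, a i q.1 (U.piecewise q.2.2 q.2.1) with hA
    set R : P × (ι → X) × (ι → X) → ℝ := fun q =>
      (∏ U ∈ J.powerset, F q.1 (U.piecewise q.2.2 q.2.1)) *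
          ∏ j ∈ J, ∏ U ∈ (J.erase j).powerset, b j q.1 (U.piecewise q.2.2 q.2.1) with hR
    have hA0 : ∀ p x₀ x₁ t, A (p, Function.update x₀ i t, x₁) = A (p, x₀, x₁) := by
      intro p x₀ x₁ t
      refine prod_congr rfl fun U hU => ?_
      simp only [piecewise_update_right (hnot U hU), hai i (mem_insert_self i J)]
    have hw0 : ∀ p x₀ x₁ t, w (p, Function.update x₀ i t, x₁) = w (p, x₀, x₁) := by
      intro p x₀ x₁ t
      refine prod_congr rfl fun U hU => ?_
      simp only [piecewise_update_right (hnot U hU), hbi i (mem_insert_self i J)]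
    have hw1 : ∀ p x₀ x₁ t, w (p, x₀, Function.update x₁ i t) = w (p, x₀, x₁) := by
      intro p x₀ x₁ t
      refine prod_congr rfl fun U hU => ?_
      simp only [piecewise_update_left (hnot U hU)]
    have hR1 : ∀ p x₀ x₁ t, R (p, x₀, Function.update x₁ i t) = R (p, x₀, x₁) := by
      intro p x₀ x₁ t
      simp only [hR]
      congr 1
      · refine prod_congr rfl fun U hU => ?_
        simp only [piecewise_update_left (hnot U hU)]
      · refine prod_congr rfl fun j _ => prod_congr rfl fun U hU => ?_
        simp only [piecewise_update_left (hnot U (powerset_mono.2 (erase_subset _ _) hU))]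
    have hAw : ∀ q, |A q| ≤ w q := fun q => by
      simp only [hA, hw, abs_prod]
      exact prod_le_prod (fun _ _ => abs_nonneg _) fun U _ => ha i (mem_insert_self i J) _ _
    have hwC : avg w ≤ C := hC i (mem_insert_self i J) J (by rw [erase_insert hiJ])
    -- the left-hand side for `J`, with the factor `a i` absorbed into `F`
    have e1 : (avg fun q : P × (ι → X) => F q.1 q.2 * ∏ j ∈ insert i J, a j q.1 q.2) =
        avg fun q : P × (ι → X) => F q.1 q.2 * a i q.1 q.2 * ∏ j ∈ J, a j q.1 q.2 := by
      simp only [prod_insert hiJ, mul_assoc]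
    have e2 : (avg fun q : P × (ι → X) × (ι → X) =>
        (∏ U ∈ J.powerset, F q.1 (U.piecewise q.2.2 q.2.1) * a i q.1 (U.piecewise q.2.2 q.2.1)) *
          ∏ j ∈ J, ∏ U ∈ (J.erase j).powerset, b j q.1 (U.piecewise q.2.2 q.2.1)) =
        avg fun q => A q * avg fun t => R (q.1, Function.update q.2.1 i t, q.2.2) := by
      have : ∀ q : P × (ι → X) × (ι → X),
        (∏ U ∈ J.powerset, F q.1 (U.piecewise q.2.2 q.2.1) * a i q.1 (U.piecewise q.2.2 q.2.1)) *
          ∏ j ∈ J, ∏ U ∈ (J.erase j).powerset, b j q.1 (U.piecewise q.2.2 q.2.1) = A q * R q := by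
        intro q; simp only [hA, hR, prod_mul_distrib]; ring
      simp only [this]
      rw [avg_prod, avg_prod (fun q : P × (ι → X) × (ι → X) => A q *
        avg fun t => R (q.1, Function.update q.2.1 i t, q.2.2))]
      congr 1; funext p
      rw [avg_prod, avg_prod (fun q : (ι → X) × (ι → X) => A (p, q) *
        avg fun t => R (p, Function.update q.1 i t, q.2)), avg_update i]
      congr 1; funext x₀
      rw [avg_comm]
      simp only [hA0, avg_mul_left]
    have e3 : ∀ q : P × (ι → X) × (ι → X),
        w q * (R q * R (q.1, Function.update q.2.1 i (q.2.2 i), q.2.2)) =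
        (∏ U ∈ (insert i J).powerset, F q.1 (U.piecewise q.2.2 q.2.1)) *
          ∏ j ∈ insert i J, ∏ U ∈ ((insert i J).erase j).powerset,
            b j q.1 (U.piecewise q.2.2 q.2.1) := by
      intro q
      have h1 : ∏ j ∈ J, ∏ U ∈ ((insert i J).erase j).powerset,
            b j q.1 (U.piecewise q.2.2 q.2.1) = ∏ j ∈ J, ((∏ U ∈ (J.erase j).powerset,
            b j q.1 (U.piecewise q.2.2 q.2.1)) * ∏ U ∈ (J.erase j).powerset,
            b j q.1 (U.piecewise q.2.2 (Function.update q.2.1 i (q.2.2 i)))) := by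
        refine prod_congr rfl fun j hj => ?_
        have hij : i ≠ j := fun h => hiJ (h ▸ hj)
        rw [erase_insert_of_ne hij, prod_powerset_insert (fun h => hiJ (mem_of_mem_erase h))]
        congr 1
        refine prod_congr rfl fun U hU => ?_
        rw [piecewise_insert_right (hnot U (powerset_mono.2 (erase_subset _ _) hU))]
      have h2 : ∏ U ∈ (insert i J).powerset, F q.1 (U.piecewise q.2.2 q.2.1) =
          (∏ U ∈ J.powerset, F q.1 (U.piecewise q.2.2 q.2.1)) * ∏ U ∈ J.powerset,
            F q.1 (U.piecewise q.2.2 (Function.update q.2.1 i (q.2.2 i))) := by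
        rw [prod_powerset_insert hiJ]
        congr 1
        refine prod_congr rfl fun U hU => ?_
        rw [piecewise_insert_right (hnot U hU)]
      rw [prod_insert hiJ, erase_insert hiJ, h1, h2, prod_mul_distrib]
      simp only [hw, hR]
      ring
    rw [e1, card_insert_of_notMem hiJ, pow_succ, pow_mul]
    rw [e2] at ih'
    have h4 := avg_weight_sq_le w A (fun q => avg fun t => R (q.1, Function.update q.2.1 i t, q.2.2))
      hAw
    rw [avg_square_expand i w R hw0 hw1 hR1] at h4
    have h5 : 0 ≤ avg fun q : P × (ι → X) × (ι → X) =>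
        w q * (R q * R (q.1, Function.update q.2.1 i (q.2.2 i), q.2.2)) := by
      rw [← avg_square_expand i w R hw0 hw1 hR1]
      exact avg_nonneg fun q => mul_nonneg ((abs_nonneg _).trans (hAw q)) (sq_nonneg _)
    simp only [e3] at h4 h5
    have h6 : 2 ^ #J * 2 - 1 = (2 ^ #J - 1) * 2 + 1 := by
      have := Nat.one_le_two_pow (n := #J)
      omega
    rw [h6]
    calc _ ≤ (C ^ (2 ^ #J - 1) * |avg fun q => A q *
            avg fun t => R (q.1, Function.update q.2.1 i t, q.2.2)|) ^ 2 :=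
          pow_le_pow_left₀ (by positivity) ih' 2
      _ ≤ (C ^ (2 ^ #J - 1)) ^ 2 * (C * _) := by
          rw [mul_pow, sq_abs]
          exact mul_le_mul_of_nonneg_left (h4.trans (mul_le_mul_of_nonneg_right hwC h5))
            (by positivity)
      _ = _ := by rw [abs_of_nonneg h5, pow_succ C, pow_mul]; ring

end GCS

end RelSz

/-! ### The linear forms condition -/

namespace RelSz

set_option linter.unusedSectionVars false

variable {k N : ℕ} [NeZero N]

/-- The linear form `x ↦ ∑ i, (i - j) x_i`. -/
def Lf (j : Fin k) (x : Fin k → ZMod N) : ZMod N :=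
  ∑ i : Fin k, ((((i : ℕ) : ℤ) - ((j : ℕ) : ℤ) : ℤ) : ZMod N) * x i

lemma Lf_update (j : Fin k) (x : Fin k → ZMod N) (t : ZMod N) :
    Lf j (Function.update x j t) = Lf j x := by
  refine sum_congr rfl fun i _ => ?_
  by_cases h : i = j
  · subst h; simp
  · simp [h]

/-- The linear forms condition in terms of an arbitrary set of pairs `(j, U)`, where `U` is the set
of coordinates taken from the second copy of the variables. -/
lemma lfc {ν : ZMod N → ℝ} {η : ℝ} (h : kLinearFormsCondition k N ν η)
    (S : Finset (Fin k × Finset (Fin k))) (hS : ∀ p ∈ S, p.1 ∉ p.2) :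
    |(avg fun x : (Fin k → ZMod N) × (Fin k → ZMod N) =>
      ∏ p ∈ S, ν (Lf p.1 (p.2.piecewise x.2 x.1))) - 1| ≤ η := by
  classical
  let e : (j : Fin k) → ({i : Fin k // i ≠ j} → Bool) → Finset (Fin k) := fun j ω =>
    univ.filter fun i => ∃ h : i ≠ j, ω ⟨i, h⟩ = true
  have he : ∀ j ω x₀ x₁, kForm k N j x₀ x₁ ω = Lf j ((e j ω).piecewise x₁ x₀) := by
    intro j ω x₀ x₁
    refine sum_congr rfl fun i _ => ?_
    by_cases hij : i = j
    · subst hij; simp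
    · simp [Finset.piecewise, e, hij]
  have hinj : ∀ j, Function.Injective (e j) := by
    intro j ω ω' hω
    funext i
    have := Finset.ext_iff.1 hω i.1
    simp only [e, mem_filter, mem_univ, true_and] at this
    have h3 : (ω i = true) ↔ (ω' i = true) := by
      simpa [i.2] using this
    exact Bool.eq_iff_iff.2 h3
  convert h (fun j ω => decide ((j, e j ω) ∈ S)) using 4
  funext x
  simp only [decide_eq_true_eq, he]
  have h1 : ∀ j, (∏ ω : {i : Fin k // i ≠ j} → Bool,
      if (j, e j ω) ∈ S then ν (Lf j ((e j ω).piecewise x.2 x.1)) else 1) =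
      ∏ U : Finset (Fin k), if (j, U) ∈ S then ν (Lf j (U.piecewise x.2 x.1)) else 1 := by
    intro j
    rw [← prod_subset (subset_univ (univ.image (e j)))]
    · rw [prod_image (fun a _ b _ hab => hinj j hab)]
    · intro U _ hU
      rw [if_neg]
      intro hmem
      apply hU
      rw [mem_image]
      refine ⟨fun i => decide (i.1 ∈ U), mem_univ _, ?_⟩
      ext i
      simp only [e, mem_filter, mem_univ, true_and, decide_eq_true_eq]
      refine ⟨fun ⟨_, h⟩ => h, fun h => ⟨fun hij => hS _ hmem (hij ▸ h), h⟩⟩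
  simp only [h1]
  rw [← Fintype.prod_prod_type', ← prod_filter]
  simp

/-- If all products of the `v p` have average `1 + O(η)`, then a product with at least one factor
`v p - 1` has average `O(η)`. -/
lemma abs_avg_prod_sub_one_le {Ω σ : Type*} [Fintype Ω] [DecidableEq σ] (v : σ → Ω → ℝ) (D : Finset σ)
    (η : ℝ) (h : ∀ S ⊆ D, |(avg fun x => ∏ p ∈ S, v p x) - 1| ≤ η) (A : Finset σ)
    (hA : A.Nonempty) : ∀ B : Finset σ, A ⊆ D → B ⊆ D → Disjoint A B →
    |avg fun x => (∏ p ∈ A, (v p x - 1)) * ∏ p ∈ B, v p x| ≤ 2 ^ #A * η := by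
  induction hA using Finset.Nonempty.cons_induction with
  | singleton a =>
    intro B hAD hBD hd
    have ha : a ∉ B := disjoint_singleton_left.1 hd
    have h1 := h B hBD
    have h2 := h (insert a B) (insert_subset (singleton_subset_iff.1 hAD) hBD)
    have : (avg fun x => (∏ p ∈ {a}, (v p x - 1)) * ∏ p ∈ B, v p x) =
        (avg fun x => ∏ p ∈ insert a B, v p x) - avg fun x => ∏ p ∈ B, v p x := by
      rw [← avg_sub]
      simp only [prod_singleton, prod_insert ha, sub_mul, one_mul]
    rw [this, card_singleton, pow_one]
    rw [abs_le] at *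
    constructor <;> linarith [h1.1, h1.2, h2.1, h2.2]
  | cons a A haA hA ih =>
    intro B hAD hBD hd
    rw [cons_eq_insert] at hAD hd ⊢
    rw [disjoint_insert_left] at hd
    have h1 := ih B ((subset_insert _ _).trans hAD) hBD hd.2
    have h2 := ih (insert a B) ((subset_insert _ _).trans hAD)
      (insert_subset (hAD (mem_insert_self _ _)) hBD) (disjoint_insert_right.2 ⟨haA, hd.2⟩)
    have : (avg fun x => (∏ p ∈ insert a A, (v p x - 1)) * ∏ p ∈ B, v p x) =
        (avg fun x => (∏ p ∈ A, (v p x - 1)) * ∏ p ∈ insert a B, v p x) -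
          avg fun x => (∏ p ∈ A, (v p x - 1)) * ∏ p ∈ B, v p x := by
      rw [← avg_sub]
      congr 1; funext x
      rw [prod_insert haA, prod_insert hd.1]; ring
    rw [this, card_insert_of_notMem haA, pow_succ]
    rw [abs_le] at *
    constructor <;> linarith [h1.1, h1.2, h2.1, h2.2]

/-- The linear forms condition with some of the factors `ν` replaced by `ν - 1`. -/
lemma lfc_sub_one {ν : ZMod N → ℝ} {η : ℝ} (h : kLinearFormsCondition k N ν η)
    (A B : Finset (Fin k × Finset (Fin k))) (hA : A.Nonempty) (hAS : ∀ p ∈ A, p.1 ∉ p.2)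
    (hBS : ∀ p ∈ B, p.1 ∉ p.2) (hd : Disjoint A B) :
    |avg fun x : (Fin k → ZMod N) × (Fin k → ZMod N) =>
      (∏ p ∈ A, (ν (Lf p.1 (p.2.piecewise x.2 x.1)) - 1)) *
        ∏ p ∈ B, ν (Lf p.1 (p.2.piecewise x.2 x.1))| ≤ 2 ^ #A * η := by
  have key : ∀ S ⊆ A ∪ B, |(avg fun x : (Fin k → ZMod N) × (Fin k → ZMod N) =>
      ∏ p ∈ S, ν (Lf p.1 (p.2.piecewise x.2 x.1))) - 1| ≤ η := fun S hS => lfc h S fun p hp => by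
    rcases mem_union.1 (hS hp) with h | h
    · exact hAS p h
    · exact hBS p h
  set v : Fin k × Finset (Fin k) → (Fin k → ZMod N) × (Fin k → ZMod N) → ℝ :=
    fun p x => ν (Lf p.1 (p.2.piecewise x.2 x.1)) with hv
  exact abs_avg_prod_sub_one_le v (A ∪ B) η key A hA B subset_union_left subset_union_right hd

end RelSz

/-! ### The box norm of `ν - 1` and a cut norm -/

namespace RelSz

set_option linter.unusedSectionVars false

variable {k N : ℕ} [NeZero N] {κ : Type*} [Fintype κ] [DecidableEq κ]

/-- Counting progressions through the linear forms `Lf`. -/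
lemma avg_Lf (hk : 2 ≤ k) (h : ZMod N → ℝ) :
    (avg fun x : Fin k → ZMod N => ∏ j, h (Lf j x)) =
      avg fun p : ZMod N × ZMod N => ∏ i ∈ range k, h (p.1 + (i : ZMod N) * p.2) := by
  let φ : (Fin k → ZMod N) →+ ZMod N × ZMod N := AddMonoidHom.mk'
    (fun x => (∑ i : Fin k, ((i : ℕ) : ZMod N) * x i, - ∑ i, x i)) (by
      intro x y
      simp [mul_add, sum_add_distrib, add_comm])
  have hφ : Function.Surjective φ := by
    rintro ⟨a, d⟩
    refine ⟨Pi.single (⟨1, by omega⟩ : Fin k) a + Pi.single (⟨0, by omega⟩ : Fin k) (-d - a), ?_⟩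
    simp only [φ, AddMonoidHom.mk'_apply, Pi.add_apply, mul_add, sum_add_distrib]
    rw [Fintype.sum_eq_single (⟨1, by omega⟩ : Fin k) (by intro i hi; simp [hi]),
      Fintype.sum_eq_single (⟨0, by omega⟩ : Fin k) (by intro i hi; simp [hi])]
    simp
  rw [← avg_surjective_hom φ hφ]
  congr 1; funext x
  rw [prod_range fun i => h ((φ x).1 + (i : ZMod N) * (φ x).2)]
  refine prod_congr rfl fun j _ => ?_
  congr 1
  simp only [Lf, φ, AddMonoidHom.mk'_apply, mul_neg, mul_sum, ← sub_eq_add_neg, ← sum_sub_distrib]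
  refine sum_congr rfl fun i _ => ?_
  push_cast; ring

lemma sum_mul_piecewise (c x₀ x₁ : κ → ZMod N) (U : Finset κ) :
    ∑ i, c i * U.piecewise x₁ x₀ i = ∑ i, c i * x₀ i + ∑ i ∈ U, c i * (x₁ i - x₀ i) := by
  rw [← sum_filter_add_sum_filter_not univ (fun i => i ∈ U) fun i => c i * U.piecewise x₁ x₀ i,
    ← sum_filter_add_sum_filter_not univ (fun i => i ∈ U) fun i => c i * x₀ i]
  rw [add_right_comm]
  congr 1
  · simp only [filter_mem_eq_inter, univ_inter]
    rw [← sum_add_distrib]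
    refine sum_congr rfl fun i hi => ?_
    rw [piecewise_eq_of_mem _ _ _ hi]; ring
  · refine sum_congr rfl fun i hi => ?_
    simp [(mem_filter.1 hi).2]

/-- The box norm of `h` along the directions with steps `c`, raised to the power `2 ^ |κ|`. -/
noncomputable def box (c : κ → ZMod N) (h : ZMod N → ℝ) : ℝ :=
  avg fun p : ZMod N × (κ → ZMod N) => ∏ U : Finset κ, h (p.1 + ∑ i ∈ U, c i * p.2 i)

/-- The contribution of a line in direction `i₁` to `box c h`. -/
noncomputable def boxLine (c : κ → ZMod N) (h : ZMod N → ℝ) (i₁ : κ) (d : κ → ZMod N) : ℝ :=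
  avg fun t => avg fun y => ∏ U : Finset κ, h (y + ∑ i ∈ U, c i * Function.update d i₁ t i)

lemma box_eq_avg_boxLine (c : κ → ZMod N) (h : ZMod N → ℝ) (i₁ : κ) :
    box c h = avg (boxLine c h i₁) := by
  unfold box boxLine
  rw [avg_prod, avg_comm, avg_update i₁]

lemma avg_corr_nonneg (P : ZMod N → ℝ) (c : ZMod N) :
    0 ≤ avg fun t => avg fun y => P y * P (y + c * t) := by
  have h1 : 0 ≤ avg fun y => (avg fun t => P (y + c * t)) ^ 2 := avg_nonneg fun y => sq_nonneg _
  have h2 : (avg fun y => (avg fun t => P (y + c * t)) ^ 2) =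
      avg fun t => avg fun s => avg fun y => P (y + c * t) * P (y + c * s) := by
    rw [avg_comm (fun t s => avg fun y => P (y + c * t) * P (y + c * s))]
    simp only [sq, ← avg_mul_left, ← avg_mul_right]
    rw [avg_comm]
    congr 1; funext s
    rw [avg_comm]
  have h3 : ∀ t, (avg fun s => avg fun y => P (y + c * t) * P (y + c * s)) =
      avg fun s => avg fun y => P y * P (y + c * s) := by
    intro t
    rw [← avg_add_right t]
    congr 1; funext s
    rw [← avg_add_right (c * t) (fun y => P y * P (y + c * s))]
    congr 1; funext y
    rw [show y + c * (s + t) = y + c * t + c * s by ring]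
  rw [h2] at h1
  simpa only [h3, avg_const] using h1

lemma boxLine_nonneg (c : κ → ZMod N) (h : ZMod N → ℝ) (i₁ : κ) (d : κ → ZMod N) :
    0 ≤ boxLine c h i₁ d := by
  let P : ZMod N → ℝ := fun y => ∏ U ∈ (univ.erase i₁).powerset, h (y + ∑ i ∈ U, c i * d i)
  have : boxLine c h i₁ d = avg fun t => avg fun y => P y * P (y + c i₁ * t) := by
    unfold boxLine
    congr 1; funext t; congr 1; funext y
    have h1 : (univ : Finset (Finset κ)) = (insert i₁ (univ.erase i₁)).powerset := by
      rw [insert_erase (mem_univ _), powerset_univ]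
    rw [h1, prod_powerset_insert (notMem_erase _ _)]
    have h2 : ∀ U ∈ (univ.erase i₁).powerset, ∑ i ∈ U, c i * Function.update d i₁ t i =
        ∑ i ∈ U, c i * d i := by
      intro U hU
      refine sum_congr rfl fun i hi => ?_
      rw [Function.update_of_ne (ne_of_mem_erase (mem_powerset.1 hU hi))]
    congr 1
    · exact prod_congr rfl fun U hU => by rw [h2 U hU]
    · refine prod_congr rfl fun U hU => ?_
      rw [sum_insert (fun hi => notMem_erase i₁ univ (mem_powerset.1 hU hi)), h2 U hU,
        Function.update_self]
      congr 1; ring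
  rw [this]
  exact avg_corr_nonneg P (c i₁)

/-- Multiplying one step by `e` increases the box norm by a factor at most `e`, since the integrand
is nonnegative after averaging in another direction. -/
lemma box_scale (c : κ → ZMod N) (h : ZMod N → ℝ) (i i₁ : κ) (hi : i ≠ i₁) (e : ℕ) (he : 0 < e) :
    box (Function.update c i (e * c i)) h ≤ e * box c h := by
  rw [box_eq_avg_boxLine _ h i₁, box_eq_avg_boxLine _ h i₁, avg_update i, avg_update i (boxLine c h i₁),
    ← avg_mul_left]
  refine avg_mono fun d => ?_
  refine le_trans (le_of_eq ?_) (avg_endo_le (nsmulAddMonoidHom (α := ZMod N) e)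
    (fun t => boxLine c h i₁ (Function.update d i t)) (fun t => boxLine_nonneg _ _ _ _) e
    (card_ker_nsmul_le N e he))
  congr 1; funext t
  unfold boxLine
  congr 1; funext s; congr 1; funext y
  refine prod_congr rfl fun U _ => ?_
  congr 2
  refine sum_congr rfl fun j _ => ?_
  rw [Function.update_comm hi, Function.update_comm hi]
  by_cases hj : j = i
  · subst hj
    simp only [Function.update_self, nsmulAddMonoidHom_apply, nsmul_eq_mul]; ring
  · simp only [Function.update_of_ne hj]

lemma box_scale_all [Nontrivial κ] (c : κ → ZMod N) (h : ZMod N → ℝ) (e : κ → ℕ)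
    (he : ∀ i, 0 < e i) : box (fun i => (e i : ZMod N) * c i) h ≤ (∏ i, (e i : ℝ)) * box c h := by
  have : ∀ s : Finset κ, box (s.piecewise (fun i => (e i : ZMod N) * c i) c) h ≤
      (∏ i ∈ s, (e i : ℝ)) * box c h := by
    intro s
    induction s using Finset.induction_on with
    | empty => simp
    | insert i s hi ih =>
      obtain ⟨i₁, hi₁⟩ := exists_ne i
      rw [prod_insert hi, piecewise_insert, mul_assoc]
      have h1 := box_scale (s.piecewise (fun i => (e i : ZMod N) * c i) c) h i i₁ hi₁.symm (e i) (he i)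
      rw [piecewise_eq_of_notMem _ _ _ hi] at h1
      exact h1.trans (mul_le_mul_of_nonneg_left ih (Nat.cast_nonneg _))
  have h2 := this univ
  rwa [piecewise_univ] at h2

/-- `Nle M h c` says that `h` has cut norm at most `c`: the function `(y, x) ↦ h (y + M ∑ x_i)`
correlates at most `c` with products of bounded functions each of which ignores one of the
coordinates of `x`. -/
def Nle (κ : Type*) [Fintype κ] [DecidableEq κ] (M : ℕ) (h : ZMod N → ℝ) (c : ℝ) : Prop :=
  ∀ g : κ → ZMod N → (κ → ZMod N) → ℝ, (∀ i y x, |g i y x| ≤ 1) →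
    (∀ i y x t, g i y (Function.update x i t) = g i y x) →
    (avg fun p : ZMod N × (κ → ZMod N) => h (p.1 + M * ∑ i, p.2 i) * ∏ i, g i p.1 p.2) ≤ c

/-- The box norm controls the cut norm. -/
lemma Nle_of_box (M : ℕ) (h : ZMod N → ℝ) (c : ℝ) (hc : 0 ≤ c)
    (hb : |box (fun _ : κ => (M : ZMod N)) h| ≤ c ^ (2 ^ Fintype.card κ)) : Nle κ M h c := by
  intro g hg hgi
  have h1 := gcs (P := ZMod N) (univ : Finset κ) (fun _ _ _ => 1) 1 zero_le_one
    (fun _ _ _ _ _ => rfl) (fun i _ T _ => by simp [avg_const])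
    (fun y x => h (y + M * ∑ i, x i)) g (fun i _ y x => hg i y x) (fun i _ y x t => hgi i y x t)
  have h2 : (avg fun q : ZMod N × (κ → ZMod N) × (κ → ZMod N) =>
      ∏ U : Finset κ, h (q.1 + M * ∑ i, U.piecewise q.2.2 q.2.1 i)) =
      box (fun _ : κ => (M : ZMod N)) h := by
    let φ : ZMod N × (κ → ZMod N) × (κ → ZMod N) →+ ZMod N × (κ → ZMod N) := AddMonoidHom.mk'
      (fun q => (q.1 + M * ∑ i, q.2.1 i, q.2.2 - q.2.1)) (by
        intro x y
        ext
        · simp [mul_add, sum_add_distrib]; ring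
        · simp; ring)
    have hφ : Function.Surjective φ := by
      rintro ⟨y, d⟩
      exact ⟨(y, 0, d), by simp [φ]⟩
    unfold box
    rw [← avg_surjective_hom φ hφ]
    congr 1; funext q
    refine prod_congr rfl fun U _ => ?_
    congr 1
    rw [mul_sum, sum_mul_piecewise (fun _ => (M : ZMod N))]
    simp only [φ, AddMonoidHom.mk'_apply, Pi.sub_apply, mul_sum, add_assoc]
  simp only [powerset_univ, prod_const_one, mul_one, one_pow, one_mul] at h1
  rw [h2, card_univ] at h1
  have h3 := h1.trans hb
  refine (le_abs_self _).trans ?_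
  exact le_of_pow_le_pow_left₀ (by positivity) hc h3

end RelSz

/-! ### Cut norm estimates for the linear forms -/

namespace RelSz

set_option linter.unusedSectionVars false

variable {r N : ℕ} [NeZero N]

lemma Lf_zero (x : Fin (r + 1) → ZMod N) :
    Lf 0 x = ∑ i : Fin r, (((i : ℕ) + 1 : ℕ) : ZMod N) * x i.succ := by
  unfold Lf
  rw [Fin.sum_univ_succ]
  simp

/-- The linear forms condition bounds the box norm of `ν - 1` with steps `1, …, r`. -/
lemma box_nu_sub_one (hr : 1 ≤ r) {ν : ZMod N → ℝ} {η : ℝ}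
    (h : kLinearFormsCondition (r + 1) N ν η) :
    |box (fun i : Fin r => (((i : ℕ) + 1 : ℕ) : ZMod N)) (fun z => ν z - 1)| ≤ 2 ^ (2 ^ r) * η := by
  classical
  have hinj : Function.Injective fun V : Finset (Fin r) =>
      ((0 : Fin (r + 1)), V.map (Fin.succEmb r)) := fun V W hVW => by simpa using hVW
  have h1 := lfc_sub_one h
    (univ.image fun V : Finset (Fin r) => ((0 : Fin (r + 1)), V.map (Fin.succEmb r))) ∅ (by simp) (by
    intro p hp
    obtain ⟨V, -, rfl⟩ := mem_image.1 hp
    simp [Fin.succ_ne_zero]) (by simp) (disjoint_empty_right _)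
  rw [card_image_of_injective _ hinj, card_univ, Fintype.card_finset, Fintype.card_fin] at h1
  simp only [prod_image (fun a _ b _ hab => hinj hab), prod_empty, mul_one] at h1
  let φ : (Fin (r + 1) → ZMod N) × (Fin (r + 1) → ZMod N) →+ ZMod N × (Fin r → ZMod N) :=
    AddMonoidHom.mk' (fun q => (Lf 0 q.1, fun i => q.2 i.succ - q.1 i.succ)) (by
      intro x y
      ext
      · simp [Lf, mul_add, sum_add_distrib]
      · simp; ring)
  have hφ : Function.Surjective φ := by
    rintro ⟨y, d⟩
    refine ⟨(Fin.cons 0 (Pi.single ⟨0, by omega⟩ y),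
      Fin.cons 0 (d + Pi.single ⟨0, by omega⟩ y)), ?_⟩
    simp only [φ, AddMonoidHom.mk'_apply, Lf_zero, Fin.cons_succ]
    ext
    · simp only
      rw [Fintype.sum_eq_single (⟨0, by omega⟩ : Fin r) (by intro i hi; simp [hi])]
      simp
    · simp
  unfold box
  rw [← avg_surjective_hom φ hφ]
  convert h1 using 3
  funext q
  refine prod_congr rfl fun V _ => ?_
  congr 2
  simp only [Lf_zero, φ, AddMonoidHom.mk'_apply]
  have h2 : ∀ i : Fin r, (V.map (Fin.succEmb r)).piecewise q.2 q.1 i.succ =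
      V.piecewise (fun i => q.2 i.succ) (fun i => q.1 i.succ) i := by
    intro i
    by_cases hi : i ∈ V
    · rw [piecewise_eq_of_mem _ _ _ hi, piecewise_eq_of_mem]
      exact mem_map.2 ⟨i, hi, rfl⟩
    · rw [piecewise_eq_of_notMem _ _ _ hi, piecewise_eq_of_notMem]
      intro hmem
      obtain ⟨j, hj, hji⟩ := mem_map.1 hmem
      exact hi (Fin.succ_injective _ hji ▸ hj)
  simp only [h2]
  rw [sum_mul_piecewise (fun i : Fin r => (((i : ℕ) + 1 : ℕ) : ZMod N))]

/-- Under the linear forms condition, `ν - 1` has small cut norm. -/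
lemma exists_Nle_nu_sub_one (r : ℕ) (hr : 2 ≤ r) (c : ℝ) (hc : 0 < c) :
    ∃ ρ : ℝ, 0 < ρ ∧ ∀ (N : ℕ) [NeZero N] (ν : ZMod N → ℝ) (η : ℝ), η ≤ ρ →
      kLinearFormsCondition (r + 1) N ν η → Nle (Fin r) r.factorial (fun z => ν z - 1) c := by
  have : Nontrivial (Fin r) := Fin.nontrivial_iff_two_le.2 hr
  let e : Fin r → ℕ := fun i => r.factorial / ((i : ℕ) + 1)
  have he : ∀ i : Fin r, e i * ((i : ℕ) + 1) = r.factorial := fun i =>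
    Nat.div_mul_cancel (Nat.dvd_factorial (Nat.succ_pos _) i.2)
  have he0 : ∀ i, 0 < e i := fun i => by
    rcases Nat.eq_zero_or_pos (e i) with h | h
    · have := he i
      rw [h, zero_mul] at this
      exact absurd this.symm (Nat.factorial_ne_zero r)
    · exact h
  set K : ℝ := ∏ i, (e i : ℝ) with hK
  have hK0 : 0 < K := prod_pos fun i _ => by exact_mod_cast he0 i
  refine ⟨c ^ (2 ^ r) / (K * 2 ^ (2 ^ r)), by positivity, fun N _ ν η hη hν => ?_⟩
  refine Nle_of_box _ _ _ hc.le ?_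
  rw [Fintype.card_fin]
  have h1 := box_scale_all (fun i : Fin r => (((i : ℕ) + 1 : ℕ) : ZMod N)) (fun z => ν z - 1) e he0
  have h2 : (fun i : Fin r => (e i : ZMod N) * (((i : ℕ) + 1 : ℕ) : ZMod N)) =
      fun _ => ((r.factorial : ℕ) : ZMod N) := by
    funext i
    rw [← Nat.cast_mul, he i]
  rw [h2] at h1
  have h3 : 0 ≤ box (fun _ : Fin r => ((r.factorial : ℕ) : ZMod N)) (fun z => ν z - 1) := by
    rw [box_eq_avg_boxLine _ _ (⟨0, by omega⟩ : Fin r)]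
    exact avg_nonneg fun d => boxLine_nonneg _ _ _ _
  rw [abs_of_nonneg h3]
  have h4 := (le_abs_self _).trans (box_nu_sub_one (by omega) hν)
  calc _ ≤ _ := h1
    _ ≤ K * (2 ^ (2 ^ r) * (c ^ (2 ^ r) / (K * 2 ^ (2 ^ r)))) := by
        refine mul_le_mul_of_nonneg_left (h4.trans ?_) hK0.le
        gcongr
    _ = _ := by field_simp

lemma eq_of_indep {ι X : Type*} [DecidableEq ι] {g : (ι → X) → ℝ} {j : ι}
    (hg : ∀ x t, g (Function.update x j t) = g x) {x y : ι → X} (h : ∀ i, i ≠ j → x i = y i) :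
    g x = g y := by
  rw [← hg x (y j)]
  congr 1
  funext i
  by_cases hi : i = j
  · subst hi; simp
  · simp [hi, h i hi]

lemma avg_affine (u c : ZMod N) (hu : u * u = 1) (f : ZMod N → ℝ) :
    (avg fun y => f (u * (y - c))) = avg f :=
  avg_equiv ⟨fun y => u * (y - c), fun v => u * v + c,
    fun y => by
      change u * (u * (y - c)) + c = y
      rw [← mul_assoc, hu]; ring,
    fun v => by
      change u * (u * v + c - c) = v
      rw [add_sub_cancel_right, ← mul_assoc, hu, one_mul]⟩ f

/-- The cut norm of `h` controls the correlation of `h (Lf s x)` with products of functions each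
ignoring one coordinate. Shifting `x_i` by `(r! / (i - s)) t_i` turns all coefficients into `r!`,
and a coordinate adjacent to `s`, having coefficient `± 1`, supplies the variable `y`. -/
lemma cut_bound (hr : 1 ≤ r) (s : Fin (r + 1)) (h : ZMod N → ℝ) (c : ℝ)
    (hN : Nle (Fin r) r.factorial h c) (g : Fin (r + 1) → (Fin (r + 1) → ZMod N) → ℝ)
    (hg : ∀ j x, |g j x| ≤ 1) (hgi : ∀ j x t, g j (Function.update x j t) = g j x) :
    (avg fun x : Fin (r + 1) → ZMod N => h (Lf s x) * ∏ j ∈ univ.erase s, g j x) ≤ c := by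
  obtain ⟨i₀, hi₀, u, hu, hcoef⟩ : ∃ i₀ : Fin (r + 1), i₀ ≠ s ∧ ∃ u : ZMod N, u * u = 1 ∧
      ((((i₀ : ℕ) : ℤ) - ((s : ℕ) : ℤ) : ℤ) : ZMod N) = u := by
    by_cases hs : (s : ℕ) = 0
    · refine ⟨⟨1, by omega⟩, fun h => ?_, 1, by ring, by simp [hs]⟩
      have := congrArg Fin.val h
      simp only at this
      omega
    · refine ⟨⟨s - 1, by omega⟩, fun h => ?_, -1, by ring, ?_⟩
      · have := congrArg Fin.val h
        simp only at this
        omega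
      · have : (((((s : ℕ) - 1 : ℕ) : ℕ) : ℤ) - ((s : ℕ) : ℤ)) = -1 := by omega
        simp only [this]
        simp
  have hE : ∀ i : Fin r, ∃ e : ℤ, ((((s.succAbove i : Fin (r + 1)) : ℕ) : ℤ) - ((s : ℕ) : ℤ)) * e =
      (r.factorial : ℤ) := by
    intro i
    have h1 : ((((s.succAbove i : Fin (r + 1)) : ℕ) : ℤ) - ((s : ℕ) : ℤ)) ∣ (r.factorial : ℤ) := by
      rw [← Int.natAbs_dvd_natAbs, Int.natAbs_natCast]
      refine Nat.dvd_factorial ?_ ?_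
      · have : (s.succAbove i : Fin (r + 1)) ≠ s := Fin.succAbove_ne s i
        have h2 : ((s.succAbove i : Fin (r + 1)) : ℕ) ≠ s := fun h => this (Fin.ext h)
        omega
      · have := (s.succAbove i).2
        have := s.2
        omega
    obtain ⟨e, he⟩ := h1
    exact ⟨e, he.symm⟩
  choose e he using hE
  let sh : (Fin r → ZMod N) → Fin (r + 1) → ZMod N := fun t =>
    s.insertNth (α := fun _ => ZMod N) 0 fun i => (e i : ZMod N) * t i
  have hsh : ∀ x t, Lf s (x + sh t) = Lf s x + (r.factorial : ZMod N) * ∑ i, t i := by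
    intro x t
    simp only [Lf, Pi.add_apply, mul_add, sum_add_distrib, mul_sum]
    congr 1
    rw [Fin.sum_univ_succAbove _ s]
    simp only [sh, Fin.insertNth_apply_same, mul_zero, zero_add, Fin.insertNth_apply_succAbove]
    refine sum_congr rfl fun i _ => ?_
    rw [← mul_assoc, ← Int.cast_mul, he i, Int.cast_natCast]
  set H : (Fin (r + 1) → ZMod N) → ℝ := fun x => h (Lf s x) * ∏ j ∈ univ.erase s, g j x with hH
  let z : (Fin (r + 1) → ZMod N) → ZMod N → Fin (r + 1) → ZMod N := fun x y =>
    Function.update x i₀ (u * (y - Lf s (Function.update x i₀ 0)))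
  have hz : ∀ x y, Lf s (z x y) = y := by
    intro x y
    have h1 : ∀ v, Lf s (Function.update x i₀ v) = Lf s (Function.update x i₀ 0) + u * v := by
      intro v
      simp only [Lf]
      rw [← hcoef, ← add_sum_erase univ _ (mem_univ i₀), ← add_sum_erase univ
        (fun i : Fin (r + 1) => ((((i : ℕ) : ℤ) - ((s : ℕ) : ℤ) : ℤ) : ZMod N) *
          Function.update x i₀ 0 i)
        (mem_univ i₀)]
      simp only [Function.update_self, mul_zero, zero_add]
      rw [add_comm]
      congr 1
      refine sum_congr rfl fun i hi => ?_
      rw [Function.update_of_ne (ne_of_mem_erase hi), Function.update_of_ne (ne_of_mem_erase hi)]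
    rw [h1, ← mul_assoc, hu]; ring
  have e1 : avg H = avg fun x => avg fun y => avg fun t => H (z x y + sh t) := by
    have a1 : avg H = avg fun t : Fin r → ZMod N => avg fun x => H (x + sh t) := by
      simp only [avg_add_right, avg_const]
    rw [a1, avg_comm, avg_update i₀]
    congr 1; funext x
    rw [← avg_affine u (Lf s (Function.update x i₀ 0)) hu]
  rw [e1]
  refine avg_le_of_le fun x => ?_
  have h2 := hN (fun i y t => g (s.succAbove i) (z x y + sh t)) (fun i y t => hg _ _)
    (fun i y t v => eq_of_indep (hgi (s.succAbove i)) fun j hj => by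
      simp only [Pi.add_apply]
      congr 1
      rcases eq_or_ne j s with rfl | hjs
      · simp only [sh, Fin.insertNth_apply_same]
      · obtain ⟨i', rfl⟩ := Fin.exists_succAbove_eq hjs
        simp only [sh, Fin.insertNth_apply_succAbove]
        rw [Function.update_of_ne (fun h => hj (by rw [h]))])
  rw [avg_prod] at h2
  refine le_trans (le_of_eq ?_) h2
  congr 1; funext y; congr 1; funext t
  simp only [hH, hsh, hz]
  congr 1
  have h3 : univ.erase s = univ.map s.succAboveEmb := by
    ext j
    simp only [mem_erase, mem_univ, and_true, mem_map, true_and, Fin.succAboveEmb_apply]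
    exact ⟨fun h => Fin.exists_succAbove_eq h, fun ⟨i, hi⟩ => hi ▸ Fin.succAbove_ne s i⟩
  rw [h3, prod_map]
  rfl

end RelSz

/-! ### The dense model theorem -/

namespace RelSz

set_option linter.unusedSectionVars false

section Model
variable {X : Type*} [Fintype X] [Nonempty X]

lemma continuous_avg_mul (h : X → ℝ) : Continuous fun φ : X → ℝ => avg fun z => h z * φ z := by
  unfold avg
  fun_prop

/-- If `ν - 1` is nearly orthogonal to a convex algebra-like family `Φ` of bounded functions,
then every `0 ≤ f ≤ ν` is indistinguishable by `Φ` from a function with values in `[0,1]`.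
By the minimax theorem it is enough to find a model for a single `φ ∈ Φ`, where the indicator of
`φ > 0` works since the positive part of `φ` is approximated by a polynomial in `φ`. -/
lemma dense_model_abstract (ε : ℝ) (hε : 0 < ε) : ∃ c : ℝ, 0 < c ∧ ∀ (X : Type) [Fintype X]
    [Nonempty X] (Φ : Set (X → ℝ)), Convex ℝ Φ → IsCompact Φ → (fun _ => 1) ∈ Φ →
    (∀ φ ∈ Φ, ∀ ψ ∈ Φ, (fun z => φ z * ψ z) ∈ Φ) → (∀ φ ∈ Φ, ∀ z, |φ z| ≤ 1) →
    ∀ ν f : X → ℝ, (∀ z, 0 ≤ f z ∧ f z ≤ ν z) → (∀ φ ∈ Φ, |avg fun z => (ν z - 1) * φ z| ≤ c) →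
    ∃ f' : X → ℝ, (∀ z, 0 ≤ f' z ∧ f' z ≤ 1) ∧ ∀ φ ∈ Φ, (avg fun z => (f z - f' z) * φ z) ≤ ε := by
  obtain ⟨p, hp⟩ := exists_polynomial_near_of_continuousOn (-1) 1 (fun t : ℝ => max t 0)
    (by fun_prop) (ε / 8) (by positivity)
  set K : ℝ := ∑ n ∈ range (p.natDegree + 1), |p.coeff n| with hK
  have hK0 : 0 ≤ K := sum_nonneg fun _ _ => abs_nonneg _
  refine ⟨min 1 (ε / 4 / (K + 1)), by positivity, ?_⟩
  intro X _ _ Φ hconv hcomp hone hmul hbd ν f hf hν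
  set c := min 1 (ε / 4 / (K + 1)) with hc
  have hc0 : 0 < c := by positivity
  have hc1 : c ≤ 1 := min_le_left _ _
  have hcK : K * c ≤ ε / 4 := by
    have h1 : c ≤ ε / 4 / (K + 1) := min_le_right _ _
    have h2 : (K + 1) * c ≤ ε / 4 := by
      rw [le_div_iff₀ (by positivity)] at h1
      linarith
    linarith
  have hν0 : ∀ z, 0 ≤ ν z := fun z => (hf z).1.trans (hf z).2
  have hνavg : avg ν ≤ 2 := by
    have h1 := hν _ hone
    simp only [mul_one] at h1
    rw [avg_sub, avg_const] at h1
    linarith [(abs_le.1 h1).2]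
  have hpow : ∀ φ ∈ Φ, ∀ n : ℕ, (fun z => φ z ^ n) ∈ Φ := by
    intro φ hφ n
    induction n with
    | zero => simpa using hone
    | succ n ih => simpa only [pow_succ] using hmul _ ih _ hφ
  have hpos : ∀ φ ∈ Φ, (avg fun z => (ν z - 1) * max (φ z) 0) ≤ ε := by
    intro φ hφ
    have h1 : |avg fun z => (ν z - 1) * p.eval (φ z)| ≤ ε / 4 := by
      have : (avg fun z => (ν z - 1) * p.eval (φ z)) =
          ∑ n ∈ range (p.natDegree + 1), p.coeff n * avg fun z => (ν z - 1) * φ z ^ n := by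
        simp only [← avg_mul_left]
        rw [← avg_sum]
        congr 1; funext z
        rw [Polynomial.eval_eq_sum_range, mul_sum]
        exact sum_congr rfl fun n _ => by ring
      rw [this]
      refine (abs_sum_le_sum_abs _ _).trans (le_trans ?_ hcK)
      rw [hK, sum_mul]
      refine sum_le_sum fun n _ => ?_
      rw [abs_mul]
      exact mul_le_mul_of_nonneg_left (hν _ (hpow φ hφ n)) (abs_nonneg _)
    have h2 : (avg fun z => (ν z - 1) * (max (φ z) 0 - p.eval (φ z))) ≤
        avg fun z => (ν z + 1) * (ε / 8) := by
      refine avg_mono fun z => ?_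
      have h3 := hp (φ z) (abs_le.1 (hbd φ hφ z))
      have h4 : |ν z - 1| ≤ ν z + 1 := by
        rw [abs_le]; constructor <;> linarith [hν0 z]
      calc _ ≤ |ν z - 1| * |max (φ z) 0 - p.eval (φ z)| := by
            rw [← abs_mul]; exact le_abs_self _
        _ ≤ _ := by
            refine mul_le_mul h4 ?_ (abs_nonneg _) (by linarith [hν0 z])
            rw [abs_sub_comm]; exact h3.le
    rw [avg_mul_right, avg_add, avg_const] at h2
    have h5 : (avg fun z => (ν z - 1) * max (φ z) 0) = (avg fun z => (ν z - 1) * p.eval (φ z)) +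
        avg fun z => (ν z - 1) * (max (φ z) 0 - p.eval (φ z)) := by
      rw [← avg_add]
      congr 1; funext z; ring
    rw [h5]
    have h6 : (avg ν + 1) * (ε / 8) ≤ 3 * (ε / 8) :=
      mul_le_mul_of_nonneg_right (by linarith) (by positivity)
    linarith [(abs_le.1 h1).2]
  let B : Set (X → ℝ) := Set.pi Set.univ fun _ => Set.Icc 0 1
  have hBmem : ∀ g : X → ℝ, g ∈ B ↔ ∀ z, 0 ≤ g z ∧ g z ≤ 1 := fun g => by
    simp only [B, Set.mem_pi, Set.mem_univ, true_imp_iff, Set.mem_Icc]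
  obtain ⟨a, ha, b, hb, hab⟩ := Sion.exists_isSaddlePointOn (X := B) (Y := Φ)
    (f := fun g φ => avg fun z => (f z - g z) * φ z)
    ⟨0, (hBmem _).2 fun z => ⟨le_rfl, zero_le_one⟩⟩
    (convex_pi fun _ _ => convex_Icc 0 1) (isCompact_univ_pi fun _ => isCompact_Icc)
    (fun φ _ => by
      refine Continuous.lowerSemicontinuous ?_ |>.lowerSemicontinuousOn _
      unfold avg; fun_prop)
    (fun φ _ => by
      refine ConvexOn.quasiconvexOn ⟨convex_pi fun _ _ => convex_Icc 0 1, ?_⟩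
      intro g _ g' _ s t _ _ hst
      refine le_of_eq ?_
      simp only [smul_eq_mul, ← avg_mul_left]
      rw [← avg_add]
      congr 1; funext z
      simp only [Pi.add_apply, Pi.smul_apply, smul_eq_mul]
      linear_combination (-(f z) * φ z) * hst)
    hconv ⟨_, hone⟩ hcomp
    (fun g _ => (continuous_avg_mul _).upperSemicontinuous.upperSemicontinuousOn _)
    (fun g _ => by
      refine ConcaveOn.quasiconcaveOn ⟨hconv, ?_⟩
      intro φ _ ψ _ s t _ _ hst
      refine le_of_eq ?_
      simp only [smul_eq_mul, ← avg_mul_left]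
      rw [← avg_add]
      congr 1; funext z
      simp only [Pi.add_apply, Pi.smul_apply, smul_eq_mul]
      ring)
  refine ⟨a, (hBmem a).1 ha, fun φ hφ => ?_⟩
  have h1 := hab (fun z => if 0 < b z then 1 else 0) ((hBmem _).2 fun z => by
    split_ifs <;> norm_num) φ hφ
  refine h1.trans (le_trans (avg_mono fun z => ?_) (hpos b hb))
  beta_reduce
  by_cases hz : 0 < b z
  · rw [if_pos hz, max_eq_left hz.le]
    exact mul_le_mul_of_nonneg_right (by linarith [(hf z).2]) hz.le
  · rw [if_neg hz, max_eq_right (not_lt.1 hz), mul_zero, sub_zero]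
    exact mul_nonpos_of_nonneg_of_nonpos (hf z).1 (not_lt.1 hz)

end Model

section Dual
variable {N : ℕ} [NeZero N] {κ : Type*} [Fintype κ] [DecidableEq κ]

/-- The functions bounded by `1` multiplication by which does not increase the cut norm. -/
def Mult (κ : Type*) [Fintype κ] [DecidableEq κ] (N M : ℕ) [NeZero N] : Set (ZMod N → ℝ) :=
  {φ | (∀ z, |φ z| ≤ 1) ∧ ∀ (h : ZMod N → ℝ) (c : ℝ), Nle κ M h c → Nle κ M (fun z => h z * φ z) c}

lemma Mult_convex (M : ℕ) : Convex ℝ (Mult κ N M) := by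
  intro φ hφ ψ hψ s t hs ht hst
  refine ⟨fun z => ?_, fun h c hc g hg hgi => ?_⟩
  · simp only [Pi.add_apply, Pi.smul_apply, smul_eq_mul]
    calc _ ≤ |s * φ z| + |t * ψ z| := abs_add_le _ _
      _ = s * |φ z| + t * |ψ z| := by rw [abs_mul, abs_mul, abs_of_nonneg hs, abs_of_nonneg ht]
      _ ≤ s * 1 + t * 1 := by
        have := hφ.1 z
        have := hψ.1 z
        gcongr
      _ = 1 := by linarith
  · have h1 := hφ.2 h c hc g hg hgi
    have h2 := hψ.2 h c hc g hg hgi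
    have : (avg fun p : ZMod N × (κ → ZMod N) =>
        h (p.1 + M * ∑ i, p.2 i) * (s • φ + t • ψ) (p.1 + M * ∑ i, p.2 i) * ∏ i, g i p.1 p.2) =
        s * (avg fun p : ZMod N × (κ → ZMod N) =>
          h (p.1 + M * ∑ i, p.2 i) * φ (p.1 + M * ∑ i, p.2 i) * ∏ i, g i p.1 p.2) +
        t * (avg fun p : ZMod N × (κ → ZMod N) =>
          h (p.1 + M * ∑ i, p.2 i) * ψ (p.1 + M * ∑ i, p.2 i) * ∏ i, g i p.1 p.2) := by
      rw [← avg_mul_left, ← avg_mul_left, ← avg_add]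
      congr 1; funext p
      simp only [Pi.add_apply, Pi.smul_apply, smul_eq_mul]
      ring
    rw [this]
    calc _ ≤ s * c + t * c := by gcongr
      _ = c := by rw [← add_mul, hst, one_mul]

lemma Mult_compact (M : ℕ) : IsCompact (Mult κ N M) := by
  have h1 : IsCompact (Set.pi Set.univ fun _ : ZMod N => Set.Icc (-1 : ℝ) 1) :=
    isCompact_univ_pi fun _ => isCompact_Icc
  refine h1.of_isClosed_subset ?_ fun φ hφ z _ => abs_le.1 (hφ.1 z)
  have : Mult κ N M = (⋂ z, {φ | |φ z| ≤ 1}) ∩ ⋂ (h : ZMod N → ℝ) (c : ℝ) (_ : Nle κ M h c)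
      (g : κ → ZMod N → (κ → ZMod N) → ℝ) (_ : ∀ i y x, |g i y x| ≤ 1)
      (_ : ∀ i y x t, g i y (Function.update x i t) = g i y x),
      {φ : ZMod N → ℝ | (avg fun p : ZMod N × (κ → ZMod N) =>
        h (p.1 + M * ∑ i, p.2 i) * φ (p.1 + M * ∑ i, p.2 i) * ∏ i, g i p.1 p.2) ≤ c} := by
    ext φ
    simp only [Mult, Nle, Set.mem_ofPred_eq, Set.mem_inter_iff, Set.mem_iInter]
  rw [this]
  refine IsClosed.inter (isClosed_iInter fun z => isClosed_le (by fun_prop) continuous_const) ?_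
  refine isClosed_iInter fun h => isClosed_iInter fun c => isClosed_iInter fun _ =>
    isClosed_iInter fun g => isClosed_iInter fun _ => isClosed_iInter fun _ => ?_
  refine isClosed_le ?_ continuous_const
  unfold avg
  fun_prop

lemma Mult_one (M : ℕ) : (fun _ => 1) ∈ Mult κ N M :=
  ⟨fun z => by simp, fun h c hc => by simpa using hc⟩

lemma Mult_mul (M : ℕ) : ∀ φ ∈ Mult κ N M, ∀ ψ ∈ Mult κ N M, (fun z => φ z * ψ z) ∈ Mult κ N M := by
  intro φ hφ ψ hψ
  refine ⟨fun z => ?_, fun h c hc => ?_⟩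
  · rw [abs_mul]
    exact mul_le_one₀ (hφ.1 z) (abs_nonneg _) (hψ.1 z)
  · simpa only [mul_assoc] using hψ.2 _ _ (hφ.2 h c hc)

lemma Nle_neg [Nonempty κ] {M : ℕ} {h : ZMod N → ℝ} {c : ℝ} (hN : Nle κ M h c) :
    Nle κ M (fun z => - h z) c := by
  intro g hg hgi
  obtain ⟨i₀⟩ := ‹Nonempty κ›
  -- the sign is moved into one of the test functions
  have h1 := hN (fun i y x => (if i = i₀ then -1 else 1) * g i y x) (fun i y x => by
    split_ifs <;> simpa using hg i y x) (fun i y x t => by rw [hgi])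
  refine le_trans (le_of_eq ?_) h1
  congr 1; funext p
  rw [prod_mul_distrib, prod_ite_eq' univ i₀]
  simp

lemma avg_le_of_Nle {M : ℕ} {h : ZMod N → ℝ} {c : ℝ} (hN : Nle κ M h c) : avg h ≤ c := by
  have h1 := hN (fun _ _ _ => 1) (fun _ _ _ => by simp) (fun _ _ _ _ => rfl)
  refine le_trans (le_of_eq ?_) h1
  rw [avg_prod, avg_comm]
  simp only [prod_const_one, mul_one, avg_add_right, avg_const]

lemma abs_avg_le_of_Nle [Nonempty κ] {M : ℕ} {h : ZMod N → ℝ} {c : ℝ} (hN : Nle κ M h c) :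
    |avg h| ≤ c := by
  refine abs_le.2 ⟨?_, avg_le_of_Nle hN⟩
  have := avg_le_of_Nle (Nle_neg hN)
  rw [avg_neg] at this
  linarith

/-- Dual functions are multipliers of the cut norm. -/
lemma dual_mem_Mult (M : ℕ) (g : κ → ZMod N → (κ → ZMod N) → ℝ) (hg : ∀ i y x, |g i y x| ≤ 1)
    (hgi : ∀ i y x t, g i y (Function.update x i t) = g i y x) :
    (fun z => avg fun x : κ → ZMod N => ∏ i, g i (z - M * ∑ i, x i) x) ∈ Mult κ N M := by
  refine ⟨fun z => abs_avg_le fun x => ?_, fun h c hc g' hg' hgi' => ?_⟩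
  · rw [abs_prod]
    exact prod_le_one (fun _ _ => abs_nonneg _) fun i _ => hg _ _ _
  · have e1 : (avg fun p : ZMod N × (κ → ZMod N) => h (p.1 + M * ∑ i, p.2 i) *
        (avg fun x : κ → ZMod N => ∏ i, g i (p.1 + M * ∑ i, p.2 i - M * ∑ i, x i) x) *
          ∏ i, g' i p.1 p.2) = avg fun w : κ → ZMod N => avg fun p : ZMod N × (κ → ZMod N) =>
        h (p.1 + M * ∑ i, p.2 i) * ∏ i, (g i (p.1 - M * ∑ i, w i) (w + p.2) * g' i p.1 p.2) := by
      rw [avg_comm]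
      congr 1; funext p
      rw [← avg_add_right p.2 (fun x : κ → ZMod N =>
        ∏ i, g i (p.1 + M * ∑ i, p.2 i - M * ∑ i, x i) x), ← avg_mul_left, ← avg_mul_right]
      congr 1; funext w
      rw [prod_mul_distrib, ← mul_assoc]
      congr 2
      refine prod_congr rfl fun i _ => ?_
      congr 1
      simp only [Pi.add_apply, sum_add_distrib]; ring
    rw [e1]
    refine avg_le_of_le fun w => ?_
    refine hc (fun i y x => g i (y - M * ∑ i, w i) (w + x) * g' i y x) (fun i y x => ?_)
      (fun i y x t => ?_)
    · rw [abs_mul]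
      exact mul_le_one₀ (hg _ _ _) (abs_nonneg _) (hg' _ _ _)
    · rw [hgi' i y x t]
      congr 1
      refine eq_of_indep (hgi i (y - M * ∑ i, w i)) fun j hj => ?_
      simp [hj]

/-- **Dense model theorem** for the cut norm. -/
lemma dense_model (ε : ℝ) (hε : 0 < ε) : ∃ c : ℝ, 0 < c ∧ ∀ (κ : Type) [Fintype κ] [DecidableEq κ]
    [Nonempty κ] (M N : ℕ) [NeZero N] (ν f : ZMod N → ℝ), (∀ z, 0 ≤ f z ∧ f z ≤ ν z) →
    Nle κ M (fun z => ν z - 1) c → ∃ f' : ZMod N → ℝ, (∀ z, 0 ≤ f' z ∧ f' z ≤ 1) ∧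
      Nle κ M (fun z => f z - f' z) ε := by
  obtain ⟨c, hc, H⟩ := dense_model_abstract ε hε
  refine ⟨c, hc, fun κ _ _ _ M N _ ν f hf hN => ?_⟩
  obtain ⟨f', hf', h1⟩ := H (ZMod N) (Mult κ N M) (Mult_convex M) (Mult_compact M) (Mult_one M)
    (Mult_mul M) (fun φ hφ => hφ.1) ν f hf (fun φ hφ => abs_avg_le_of_Nle (hφ.2 _ _ hN))
  refine ⟨f', hf', fun g hg hgi => ?_⟩
  refine le_trans (le_of_eq ?_) (h1 _ (dual_mem_Mult M g hg hgi))
  simp only [← avg_mul_left]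
  rw [avg_prod, avg_comm, avg_comm (fun z x => (f z - f' z) * ∏ i, g i (z - M * ∑ i, x i) x)]
  congr 1; funext x
  rw [← avg_add_right (M * ∑ i, x i)
    (fun z => (f z - f' z) * ∏ i, g i (z - M * ∑ i, x i) x)]
  simp only [add_sub_cancel_right]

end Dual

end RelSz

/-! ### Strong linear forms estimates -/

namespace RelSz

set_option linter.unusedSectionVars false

section Forms
variable {k N : ℕ} [NeZero N]

/-- A parameter `p` that occurs separately from the unused coordinate `s` of `x₁` can be renamed to
that coordinate. -/
lemma avg_param_eq {ι X : Type*} [Fintype ι] [DecidableEq ι] [Fintype X] [Nonempty X] (s : ι)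
    (H : X × (ι → X) × (ι → X) → ℝ)
    (hH : ∀ p x₀ x₁ t, H (p, x₀, Function.update x₁ s t) = H (p, x₀, x₁)) :
    avg H = avg fun q : (ι → X) × (ι → X) => H (q.2 s, q.1, q.2) := by
  rw [avg_prod, avg_comm, avg_prod (fun q : (ι → X) × (ι → X) => H (q.2 s, q.1, q.2)), avg_prod]
  congr 1; funext x₀
  rw [avg_update s (fun x₁ => H (x₁ s, x₀, x₁))]
  simp only [hH, Function.update_self]

/-- The product of the averages of two functions over the coordinate `s`, tested against a function
not depending on that coordinate. -/
lemma avg_mul_avg_update {ι X : Type*} [Fintype ι] [DecidableEq ι] [Fintype X] [Nonempty X] (s : ι)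
    (K W₁ W₂ : (ι → X) → ℝ) (hK : ∀ x t, K (Function.update x s t) = K x) :
    (avg fun x => K x * ((avg fun t => W₁ (Function.update x s t)) *
      avg fun t => W₂ (Function.update x s t))) =
    avg fun q : X × (ι → X) => K q.2 * (W₁ q.2 * W₂ (Function.update q.2 s q.1)) := by
  rw [avg_prod, avg_comm, avg_update s (fun x => avg fun p => K x * (W₁ x * W₂ (Function.update x s p)))]
  simp only [hK, Function.update_idem, avg_mul_left, avg_mul_right]

/-- The weight `ν (Lf j x)` if `j ∈ S`, and `1` otherwise. -/
noncomputable def wt (ν : ZMod N → ℝ) (S : Finset (Fin k)) (j : Fin k) (x : Fin k → ZMod N) : ℝ :=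
  if j ∈ S then ν (Lf j x) else 1

lemma wt_update (ν : ZMod N → ℝ) (S : Finset (Fin k)) (j : Fin k) (x : Fin k → ZMod N) (t : ZMod N) :
    wt ν S j (Function.update x j t) = wt ν S j x := by
  simp only [wt, Lf_update]

lemma wt_nonneg {ν : ZMod N → ℝ} (hν : ∀ z, 0 ≤ ν z) (S : Finset (Fin k)) (j : Fin k)
    (x : Fin k → ZMod N) : 0 ≤ wt ν S j x := by
  unfold wt
  split_ifs
  · exact hν _
  · exact zero_le_one

/-- The sets `V` of doubled coordinates for which the factor `ν (Lf j x^V)` occurs in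
`prod_wt_eq`. -/
def fam (s : Fin k) (S₁ S₂ : Finset (Fin k)) (T : Finset (Fin k)) (j : Fin k) :
    Finset (Finset (Fin k)) :=
  (insert s T).powerset.filter fun V => (s ∉ V ∧ j ∈ S₁) ∨ (s ∈ V ∧ j ∈ S₂)

lemma prod_wt_eq (ν : ZMod N → ℝ) (s : Fin k) (S₁ S₂ T : Finset (Fin k)) (hT : s ∉ T) (j : Fin k)
    (x₀ x₁ : Fin k → ZMod N) :
    ∏ U ∈ T.powerset, wt ν S₁ j (U.piecewise x₁ x₀) *
      wt ν S₂ j (Function.update (U.piecewise x₁ x₀) s (x₁ s)) =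
    ∏ V ∈ fam s S₁ S₂ T j, ν (Lf j (V.piecewise x₁ x₀)) := by
  unfold fam
  rw [prod_filter, prod_powerset_insert hT, prod_mul_distrib]
  congr 1
  · refine prod_congr rfl fun U hU => ?_
    have hs : s ∉ U := fun h => hT (mem_powerset.1 hU h)
    simp [wt, hs]
  · refine prod_congr rfl fun U hU => ?_
    rw [piecewise_insert]
    simp [wt]

/-- **Strong linear forms estimate**: `ν (Lf s x) - 1` is nearly orthogonal to products of functions
that do not depend on `x_s` and are averages over the coordinate `s` of functions dominated by
products of `ν` over the other forms. -/
lemma strong_linear_forms (k : ℕ) (τ : ℝ) (hτ : 0 < τ) : ∃ ρ : ℝ, 0 < ρ ∧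
    ∀ (N : ℕ) [NeZero N] (ν : ZMod N → ℝ) (η : ℝ), (∀ z, 0 ≤ ν z) → η ≤ ρ →
    kLinearFormsCondition k N ν η → ∀ (s : Fin k) (S₁ S₂ : Finset (Fin k))
    (A B : Fin k → (Fin k → ZMod N) → ℝ),
    (∀ j ∈ univ.erase s, ∀ x, |A j x| ≤ wt ν S₁ j x) →
    (∀ j ∈ univ.erase s, ∀ x, |B j x| ≤ wt ν S₂ j x) →
    (∀ j x t, A j (Function.update x j t) = A j x) →
    (∀ j x t, B j (Function.update x j t) = B j x) →
    |avg fun x => (ν (Lf s x) - 1) *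
      ((avg fun t => ∏ j ∈ univ.erase s, A j (Function.update x s t)) *
        avg fun t => ∏ j ∈ univ.erase s, B j (Function.update x s t))| ≤ τ := by
  set m := 2 ^ (k - 1) with hm
  refine ⟨min 1 (τ ^ m / (2 ^ (m - 1) * 2 ^ m)), by positivity, ?_⟩
  intro N _ ν η hν hη hlfc s S₁ S₂ A B hA hB hAi hBi
  set J : Finset (Fin k) := univ.erase s with hJ
  have hJcard : 2 ^ #J = m := by rw [hJ, card_erase_of_mem (mem_univ _), card_univ, Fintype.card_fin]
  have hη1 : η ≤ 1 := hη.trans (min_le_left _ _)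
  have hη2 : η ≤ τ ^ m / (2 ^ (m - 1) * 2 ^ m) := hη.trans (min_le_right _ _)
  have hupd : ∀ (S : Finset (Fin k)) (g : Fin k → (Fin k → ZMod N) → ℝ),
      (∀ j x t, g j (Function.update x j t) = g j x) → ∀ j ∈ J, ∀ (p : ZMod N) x t,
      g j (Function.update (Function.update x j t) s p) = g j (Function.update x s p) := by
    intro S g hg j hj p x t
    rw [Function.update_comm (ne_of_mem_erase hj), hg]
  rw [avg_mul_avg_update s (fun x => ν (Lf s x) - 1) (fun x => ∏ j ∈ J, A j x)
    (fun x => ∏ j ∈ J, B j x) (fun x t => by rw [Lf_update])]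
  have hsub : ∀ j ∈ J, ∀ T ⊆ J.erase j, s ∉ T := fun j _ T hT hs =>
    notMem_erase s univ (mem_of_mem_erase (hT hs))
  have hnotV : ∀ j ∈ J, ∀ T ⊆ J.erase j, ∀ V ∈ fam s S₁ S₂ T j, j ∉ V := by
    intro j hj T hT V hV hjV
    rcases mem_insert.1 (mem_powerset.1 (mem_filter.1 hV).1 hjV) with h | h
    · exact ne_of_mem_erase hj h
    · exact notMem_erase j J (hT h)
  have h1 := gcs (P := ZMod N) J
    (fun j p x => wt ν S₁ j x * wt ν S₂ j (Function.update x s p)) 2 zero_le_two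
    (fun j hj p x t => by rw [wt_update, hupd S₂ (wt ν S₂) (wt_update ν S₂) j hj])
    (fun j hj T hT => by
      rw [avg_param_eq s _ (fun p x₀ x₁ t => prod_congr rfl fun U hU => by
        rw [piecewise_update_left (fun h => hsub j hj T hT (mem_powerset.1 hU h))])]
      simp only [prod_wt_eq ν s S₁ S₂ T (hsub j hj T hT) j]
      have h2 := lfc hlfc ({j} ×ˢ fam s S₁ S₂ T j) (by
        rintro ⟨j', V⟩ hp
        obtain ⟨h3, h4⟩ := mem_product.1 hp
        obtain rfl := mem_singleton.1 h3
        exact hnotV _ hj T hT V h4)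
      simp only [prod_product, prod_singleton] at h2
      linarith [(abs_le.1 h2).2])
    (fun _ x => ν (Lf s x) - 1) (fun j p x => A j x * B j (Function.update x s p))
    (fun j hj p x => by
      rw [abs_mul]
      exact mul_le_mul (hA j hj x) (hB j hj _) (abs_nonneg _) (wt_nonneg hν _ _ _))
    (fun j hj p x t => by rw [hAi, hupd S₂ B hBi j hj])
  have hl : (avg fun q : ZMod N × (Fin k → ZMod N) => (ν (Lf s q.2) - 1) *
      ∏ j ∈ J, A j q.2 * B j (Function.update q.2 s q.1)) =
      avg fun q : ZMod N × (Fin k → ZMod N) => (ν (Lf s q.2) - 1) *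
        ((∏ j ∈ J, A j q.2) * ∏ j ∈ J, B j (Function.update q.2 s q.1)) := by
    simp only [prod_mul_distrib]
  have hsJ : s ∉ J := notMem_erase s univ
  beta_reduce at h1
  rw [hl, avg_param_eq s _ (fun p x₀ x₁ t => by
    congr 1
    · refine prod_congr rfl fun U hU => ?_
      rw [piecewise_update_left (fun h => hsJ (mem_powerset.1 hU h))]
    · refine prod_congr rfl fun j hj => prod_congr rfl fun U hU => ?_
      rw [piecewise_update_left (fun h => hsJ (mem_of_mem_erase (mem_powerset.1 hU h)))])] at h1
  set Bset : Finset (Fin k × Finset (Fin k)) :=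
    univ.filter fun p => p.1 ∈ J ∧ p.2 ∈ fam s S₁ S₂ (J.erase p.1) p.1 with hBset
  have hr : ∀ q : (Fin k → ZMod N) × (Fin k → ZMod N),
      (∏ U ∈ J.powerset, (ν (Lf s (U.piecewise q.2 q.1)) - 1)) *
        ∏ j ∈ J, ∏ U ∈ (J.erase j).powerset, (wt ν S₁ j (U.piecewise q.2 q.1) *
          wt ν S₂ j (Function.update (U.piecewise q.2 q.1) s (q.2 s))) =
      (∏ p ∈ {s} ×ˢ J.powerset, (ν (Lf p.1 (p.2.piecewise q.2 q.1)) - 1)) *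
        ∏ p ∈ Bset, ν (Lf p.1 (p.2.piecewise q.2 q.1)) := by
    intro q
    rw [prod_product, prod_singleton]
    congr 1
    rw [prod_finset_product Bset J (fun j => fam s S₁ S₂ (J.erase j) j) (by simp [hBset])]
    exact prod_congr rfl fun j hj => prod_wt_eq ν s S₁ S₂ _ (hsub j hj _ subset_rfl) j q.1 q.2
  simp only [hr] at h1
  have h2 := lfc_sub_one hlfc ({s} ×ˢ J.powerset) Bset
    ⟨(s, ∅), by simp⟩
    (by
      rintro ⟨j, V⟩ hp
      obtain ⟨h3, h4⟩ := mem_product.1 hp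
      obtain rfl := mem_singleton.1 h3
      exact fun h => hsJ (mem_powerset.1 h4 h))
    (by
      rintro ⟨j, V⟩ hp
      obtain ⟨-, h3, h4⟩ := mem_filter.1 hp
      exact hnotV j h3 _ subset_rfl V h4)
    (by
      rw [disjoint_left]
      rintro ⟨j, V⟩ hp hq
      obtain ⟨h3, -⟩ := mem_product.1 hp
      obtain rfl := mem_singleton.1 h3
      exact hsJ (mem_filter.1 hq).2.1)
  rw [card_product, card_singleton, one_mul, card_powerset, hJcard] at h2
  rw [hJcard] at h1
  have hm0 : m ≠ 0 := by positivity
  refine le_of_pow_le_pow_left₀ hm0 hτ.le (h1.trans ?_)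
  calc _ ≤ 2 ^ (m - 1) * (2 ^ m * η) := by gcongr
    _ = η * (2 ^ (m - 1) * 2 ^ m) := by ring
    _ ≤ τ ^ m := (le_div_iff₀ (by positivity)).1 hη2

end Forms

end RelSz

/-! ### The relative counting lemma -/

namespace RelSz

set_option linter.unusedSectionVars false

section Forms
variable {k N : ℕ} [NeZero N]

lemma abs_avg_prod_nu_sub_one_le {ν : ZMod N → ℝ} {η : ℝ} (h : kLinearFormsCondition k N ν η)
    (S : Finset (Fin k)) :
    |(avg fun x : Fin k → ZMod N => ∏ j ∈ S, ν (Lf j x)) - 1| ≤ η := by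
  have h1 := lfc h (S ×ˢ {∅}) (by simp)
  rw [avg_prod] at h1
  simpa [prod_product, avg_const] using h1

/-- Averaging the product of the weights for `j ∈ S` over the coordinate `s ∉ S` gives a function
close to `1` in mean square. -/
lemma avg_dev_sq_le {ν : ZMod N → ℝ} {η : ℝ} (h : kLinearFormsCondition k N ν η) (s : Fin k)
    (S : Finset (Fin k)) (hs : s ∉ S) :
    (avg fun x : Fin k → ZMod N =>
      ((avg fun t => ∏ j ∈ S, ν (Lf j (Function.update x s t))) - 1) ^ 2) ≤ 3 * η := by
  set W : (Fin k → ZMod N) → ℝ := fun x => ∏ j ∈ S, ν (Lf j x) with hW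
  have h1 : |avg W - 1| ≤ η := abs_avg_prod_nu_sub_one_le h S
  have h2 := lfc h (S ×ˢ {∅, {s}}) (by
    rintro ⟨j, V⟩ hp
    obtain ⟨h3, h4⟩ := mem_product.1 hp
    rcases mem_insert.1 h4 with h5 | h5
    · simp only at h5
      simp [h5]
    · simp only [mem_singleton] at h5
      rw [h5, mem_singleton]
      exact ne_of_mem_of_not_mem h3 hs)
  have h3 : ∀ q : (Fin k → ZMod N) × (Fin k → ZMod N),
      ∏ p ∈ S ×ˢ ({∅, {s}} : Finset (Finset (Fin k))), ν (Lf p.1 (p.2.piecewise q.2 q.1)) =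
      W q.1 * W (Function.update q.1 s (q.2 s)) := by
    intro q
    rw [prod_product, hW, ← prod_mul_distrib]
    refine prod_congr rfl fun j _ => ?_
    rw [prod_pair (singleton_ne_empty s).symm]
    simp [piecewise_singleton]
  simp only [h3] at h2
  have h4 : (avg fun x => (avg fun t => W (Function.update x s t)) *
      avg fun t => W (Function.update x s t)) =
      avg fun q : (Fin k → ZMod N) × (Fin k → ZMod N) =>
        W q.1 * W (Function.update q.1 s (q.2 s)) := by
    have h5 := avg_mul_avg_update s (fun _ => 1) W W (fun _ _ => rfl)
    simp only [one_mul] at h5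
    rw [h5, ← avg_param_eq s (fun q : ZMod N × (Fin k → ZMod N) × (Fin k → ZMod N) =>
      W q.2.1 * W (Function.update q.2.1 s q.1)) (fun _ _ _ _ => rfl), avg_prod, avg_prod]
    congr 1; funext p
    rw [avg_prod]
    simp only [avg_const]
  have h6 : (avg fun x => ((avg fun t => W (Function.update x s t)) - 1) ^ 2) =
      (avg fun x => (avg fun t => W (Function.update x s t)) *
        avg fun t => W (Function.update x s t)) - 2 * avg W + 1 := by
    rw [avg_update s W, ← avg_mul_left, ← avg_sub, ← avg_const (α := Fin k → ZMod N) 1, ← avg_add]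
    congr 1; funext x
    rw [avg_const]
    ring
  rw [h6, h4]
  linarith [(abs_le.1 h1).1, (abs_le.1 h2).2]

/-- The `j`-th factor `h (Lf j x)` if `j ∈ S`, and the given bounded function `u j` otherwise. -/
noncomputable def mix (S : Finset (Fin k)) (h : ZMod N → ℝ) (u : Fin k → (Fin k → ZMod N) → ℝ)
    (j : Fin k) (x : Fin k → ZMod N) : ℝ :=
  if j ∈ S then h (Lf j x) else u j x

lemma mix_update (S : Finset (Fin k)) (h : ZMod N → ℝ) {u : Fin k → (Fin k → ZMod N) → ℝ}
    (hu : ∀ j x t, u j (Function.update x j t) = u j x) (j : Fin k) (x : Fin k → ZMod N)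
    (t : ZMod N) : mix S h u j (Function.update x j t) = mix S h u j x := by
  simp only [mix, Lf_update, hu]

lemma abs_mix_le_wt (S : Finset (Fin k)) {ν h : ZMod N → ℝ} (hh : ∀ z, 0 ≤ h z ∧ h z ≤ ν z)
    {u : Fin k → (Fin k → ZMod N) → ℝ} (hu : ∀ j x, |u j x| ≤ 1) (j : Fin k) (x : Fin k → ZMod N) :
    |mix S h u j x| ≤ wt ν S j x := by
  unfold mix wt
  split_ifs
  · rw [abs_of_nonneg (hh _).1]; exact (hh _).2
  · exact hu j x

lemma abs_mix_le_one (S : Finset (Fin k)) {h : ZMod N → ℝ} (hh : ∀ z, 0 ≤ h z ∧ h z ≤ 1)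
    {u : Fin k → (Fin k → ZMod N) → ℝ} (hu : ∀ j x, |u j x| ≤ 1) (j : Fin k) (x : Fin k → ZMod N) :
    |mix S h u j x| ≤ 1 := by
  unfold mix
  split_ifs
  · rw [abs_of_nonneg (hh _).1]; exact (hh _).2
  · exact hu j x

lemma prod_mix_insert {s : Fin k} {S : Finset (Fin k)} (h : ZMod N → ℝ)
    (u : Fin k → (Fin k → ZMod N) → ℝ) (x : Fin k → ZMod N) :
    ∏ j, mix (insert s S) h u j x = h (Lf s x) * ∏ j ∈ univ.erase s, mix S h u j x := by
  rw [← mul_prod_erase univ _ (mem_univ s)]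
  congr 1
  · simp [mix]
  · refine prod_congr rfl fun j hj => ?_
    simp [mix, mem_insert, ne_of_mem_erase hj]

lemma prod_mix_update {s : Fin k} {S : Finset (Fin k)} (hs : s ∉ S) (h : ZMod N → ℝ)
    (u : Fin k → (Fin k → ZMod N) → ℝ) (g : (Fin k → ZMod N) → ℝ) (x : Fin k → ZMod N) :
    ∏ j, mix S h (Function.update u s g) j x = g x * ∏ j ∈ univ.erase s, mix S h u j x := by
  rw [← mul_prod_erase univ _ (mem_univ s)]
  congr 1
  · simp [mix, hs]
  · refine prod_congr rfl fun j hj => ?_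
    simp [mix, ne_of_mem_erase hj]

lemma prod_wt_erase {s : Fin k} {S : Finset (Fin k)} (hs : s ∉ S) (ν : ZMod N → ℝ)
    (x : Fin k → ZMod N) : ∏ j ∈ univ.erase s, wt ν S j x = ∏ j ∈ S, ν (Lf j x) := by
  unfold wt
  rw [prod_ite_mem, inter_eq_right.2]
  exact fun j hj => mem_erase.2 ⟨ne_of_mem_of_not_mem hj hs, mem_univ j⟩

end Forms

/-- A function `G` with a majorant `V` close to `1` is close in mean square to a bounded function
`G'` as soon as `G - G'` does not correlate with the difference of `G'` and the truncation
of `G`. -/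
lemma avg_sub_sq_le {Ω : Type*} [Fintype Ω] [Nonempty Ω] (V G G' : Ω → ℝ) (θ : ℝ) (hθ : 0 ≤ θ)
    (hG : ∀ x, |G x| ≤ V x) (hG' : ∀ x, |G' x| ≤ 1) (h1 : (avg fun x => (V x - 1) ^ 2) ≤ θ)
    (h2 : (avg fun x => (V x - 1) ^ 2) ≤ θ ^ 2)
    (h3 : (avg fun x => ((max (-1) (min 1 (G x)) - G' x) / 2) * (G x - G' x)) ≤ θ) :
    (avg fun x => (G x - G' x) ^ 2) ≤ 5 * θ := by
  have h4 : (avg fun x => |V x - 1|) ≤ θ := by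
    refine le_of_pow_le_pow_left₀ two_ne_zero hθ ?_
    refine (avg_sq_le _).trans ?_
    simpa only [sq_abs] using h2
  have h5 : ∀ x, (G x - G' x) ^ 2 ≤ 2 * (((max (-1) (min 1 (G x)) - G' x) / 2) * (G x - G' x)) +
      ((V x - 1) ^ 2 + 2 * |V x - 1|) := by
    intro x
    have a1 : |G x - max (-1) (min 1 (G x))| ≤ |V x - 1| := by
      have := hG x
      have h6 := le_abs_self (V x - 1)
      have h7 := abs_nonneg (V x - 1)
      obtain ⟨h8, h9⟩ := abs_le.1 this
      rcases le_total 1 (G x) with h | h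
      · rw [min_eq_left h, max_eq_right (by norm_num), abs_of_nonneg (by linarith)]
        linarith
      · rw [min_eq_right h]
        rcases le_total (-1) (G x) with h' | h'
        · rw [max_eq_right h', sub_self, abs_zero]; exact h7
        · rw [max_eq_left h', abs_of_nonpos (by linarith)]
          linarith
    have a2 : |G x - G' x| ≤ |V x - 1| + 2 := by
      have := abs_sub (G x) (G' x)
      have := hG x
      have := hG' x
      have := le_abs_self (V x - 1)
      linarith
    have a3 : (G x - max (-1) (min 1 (G x))) * (G x - G' x) ≤ |V x - 1| * (|V x - 1| + 2) := by
      refine (le_abs_self _).trans ?_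
      rw [abs_mul]
      gcongr
    have a4 := sq_abs (V x - 1)
    nlinarith
  have h6 := avg_mono h5
  rw [avg_add, avg_mul_left, avg_add, avg_mul_left] at h6
  linarith

/-- **Relative counting lemma**: if `0 ≤ f ≤ ν` is close in cut norm to `0 ≤ f' ≤ 1`, then `f` can
be replaced by `f'` in averages over the `r + 1` forms. The induction over the set `S` of forms that
carry `f` is the densification argument: averaging the other factors over the coordinate unseen
by a form produces a weight that is essentially bounded, so that this form may be dealt
with as if its factor were bounded. -/
lemma relative_counting (r : ℕ) (hr : 1 ≤ r) (S : Finset (Fin (r + 1))) : ∀ τ : ℝ, 0 < τ →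
    ∃ ρ : ℝ, 0 < ρ ∧ ∀ (N : ℕ) [NeZero N] (ν f f' : ZMod N → ℝ) (η : ℝ), η ≤ ρ →
      (∀ z, 0 ≤ f z ∧ f z ≤ ν z) → (∀ z, 0 ≤ f' z ∧ f' z ≤ 1) →
      kLinearFormsCondition (r + 1) N ν η →
      Nle (Fin r) r.factorial (fun z => f z - f' z) ρ →
      ∀ u : Fin (r + 1) → (Fin (r + 1) → ZMod N) → ℝ, (∀ j x, |u j x| ≤ 1) →
      (∀ j x t, u j (Function.update x j t) = u j x) →
      |(avg fun x => ∏ j, mix S f u j x) - avg fun x => ∏ j, mix S f' u j x| ≤ τ := by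
  have : Nonempty (Fin r) := ⟨⟨0, hr⟩⟩
  induction S using Finset.induction_on with
  | empty =>
    intro τ hτ
    refine ⟨1, one_pos, fun N _ ν f f' η _ _ _ _ _ u _ _ => ?_⟩
    simpa [mix] using hτ.le
  | insert s S hs ih =>
    intro τ hτ
    -- the final bound for the square of the main term is `18 θ ≤ (τ / 2) ^ 2`
    set θ : ℝ := τ ^ 2 / 128 with hθ
    have hθ0 : 0 < θ := by positivity
    obtain ⟨ρ₁, hρ₁, ih⟩ := ih θ hθ0
    obtain ⟨ρ₂, hρ₂, slf⟩ := strong_linear_forms (r + 1) θ hθ0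
    refine ⟨min (min ρ₁ ρ₂) (min (min 1 (τ / 2)) (min (θ / 3) (θ ^ 2 / 3))), by positivity, ?_⟩
    intro N _ ν f f' η hη hf hf' hlfc hN u hu hui
    simp only [le_min_iff] at hη
    obtain ⟨⟨hη1, hη2⟩, ⟨hη3, -⟩, hη5, hη6⟩ := hη
    set ρ := min (min ρ₁ ρ₂) (min (min 1 (τ / 2)) (min (θ / 3) (θ ^ 2 / 3)))
    have hρa : ρ ≤ ρ₁ := (min_le_left _ _).trans (min_le_left _ _)
    have hρb : ρ ≤ τ / 2 := (min_le_right _ _).trans ((min_le_left _ _).trans (min_le_right _ _))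
    have hν : ∀ z, 0 ≤ ν z := fun z => (hf z).1.trans (hf z).2
    set W : (Fin (r + 1) → ZMod N) → ℝ := fun x => ∏ j ∈ univ.erase s, mix S f u j x with hW
    set W' : (Fin (r + 1) → ZMod N) → ℝ := fun x => ∏ j ∈ univ.erase s, mix S f' u j x with hW'
    set G : (Fin (r + 1) → ZMod N) → ℝ := fun x => avg fun t => W (Function.update x s t) with hG
    set G' : (Fin (r + 1) → ZMod N) → ℝ := fun x => avg fun t => W' (Function.update x s t) with hG'
    have hGu : ∀ x t, G (Function.update x s t) = G x := fun x t => by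
      simp only [hG, Function.update_idem]
    have hGu' : ∀ x t, G' (Function.update x s t) = G' x := fun x t => by
      simp only [hG', Function.update_idem]
    -- functions of the coordinates other than `s` may be averaged over `s` against `W - W'`
    have hproj : ∀ K : (Fin (r + 1) → ZMod N) → ℝ, (∀ x t, K (Function.update x s t) = K x) →
        (avg fun x => K x * (G x - G' x)) = (avg fun x => K x * W x) - avg fun x => K x * W' x := by
      intro K hK
      rw [avg_update s (fun x => K x * W x), avg_update s (fun x => K x * W' x), ← avg_sub]
      congr 1; funext x
      simp only [hK, avg_mul_left, hG, hG']
      ring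
    have hWW : ∀ x, |W' x| ≤ 1 := fun x => by
      rw [hW', abs_prod]
      exact prod_le_one (fun _ _ => abs_nonneg _) fun j _ => abs_mix_le_one S hf' hu j x
    have hG1 : ∀ x, |G' x| ≤ 1 := fun x => abs_avg_le fun t => hWW _
    have hGV : ∀ x, |G x| ≤ avg fun t => ∏ j ∈ S, ν (Lf j (Function.update x s t)) := fun x => by
      refine (abs_avg_le_avg_abs _).trans (avg_mono fun t => ?_)
      rw [hW, abs_prod, ← prod_wt_erase hs]
      exact prod_le_prod (fun _ _ => abs_nonneg _) fun j _ => abs_mix_le_wt S hf hu j _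
    have hD : (avg fun x => (G x - G' x) ^ 2) ≤ 5 * θ := by
      have hV := avg_dev_sq_le hlfc s S hs
      refine avg_sub_sq_le _ G G' θ hθ0.le hGV hG1 (by linarith) (by linarith) ?_
      rw [hproj (fun x => (max (-1) (min 1 (G x)) - G' x) / 2) (fun x t => by rw [hGu, hGu'])]
      have h1 := ih N ν f f' η hη1 hf hf' hlfc (fun g hg hgi => (hN g hg hgi).trans hρa)
        (Function.update u s fun x => (max (-1) (min 1 (G x)) - G' x) / 2)
        (fun j x => by
          by_cases hj : j = s
          · subst hj
            have h2 := abs_le.1 (hG1 x)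
            have h3 : max (-1) (min 1 (G x)) ≤ 1 := max_le (by norm_num) (min_le_left _ _)
            have h4 : -1 ≤ max (-1) (min 1 (G x)) := le_max_left _ _
            rw [Function.update_self, abs_le]
            constructor <;> linarith
          · rw [Function.update_of_ne hj]; exact hu j x)
        (fun j x t => by
          by_cases hj : j = s
          · subst hj
            simp only [Function.update_self, hGu, hGu']
          · simp only [Function.update_of_ne hj, hui])
      simp only [prod_mix_update hs] at h1
      exact (le_abs_self _).trans h1
    have hwt0 : ∀ (j : Fin (r + 1)) (x : Fin (r + 1) → ZMod N), wt ν ∅ j x = 1 := fun j x => by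
      simp [wt]
    have hA : ∀ j ∈ univ.erase s, ∀ x, |mix S f u j x| ≤ wt ν S j x :=
      fun j _ x => abs_mix_le_wt S hf hu j x
    have hB : ∀ j ∈ univ.erase s, ∀ x, |mix S f' u j x| ≤ wt ν ∅ j x :=
      fun j _ x => (abs_mix_le_one S hf' hu j x).trans_eq (hwt0 j x).symm
    have s1 := slf N ν η hν hη2 hlfc s S S _ _ hA hA (mix_update S f hui) (mix_update S f hui)
    have s2 := slf N ν η hν hη2 hlfc s S ∅ _ _ hA hB (mix_update S f hui) (mix_update S f' hui)
    have s3 := slf N ν η hν hη2 hlfc s ∅ ∅ _ _ hB hB (mix_update S f' hui) (mix_update S f' hui)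
    have hνD : (avg fun x => ν (Lf s x) * (G x - G' x) ^ 2) ≤ 9 * θ := by
      have h1 : (avg fun x => ν (Lf s x) * (G x - G' x) ^ 2) =
          (avg fun x => (ν (Lf s x) - 1) * (G x * G x)) -
          2 * (avg fun x => (ν (Lf s x) - 1) * (G x * G' x)) +
          (avg fun x => (ν (Lf s x) - 1) * (G' x * G' x)) + avg fun x => (G x - G' x) ^ 2 := by
        rw [← avg_mul_left, ← avg_sub, ← avg_add, ← avg_add]
        congr 1; funext x; ring
      rw [h1]
      have t1 : (avg fun x => (ν (Lf s x) - 1) * (G x * G x)) ≤ θ := (abs_le.1 s1).2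
      have t2 : -θ ≤ avg fun x => (ν (Lf s x) - 1) * (G x * G' x) := (abs_le.1 s2).1
      have t3 : (avg fun x => (ν (Lf s x) - 1) * (G' x * G' x)) ≤ θ := (abs_le.1 s3).2
      linarith
    have hmain : |avg fun x => f (Lf s x) * (G x - G' x)| ≤ τ / 2 := by
      refine abs_le_of_sq_le_sq ?_ (by positivity)
      refine (avg_weight_sq_le (fun x => ν (Lf s x)) (fun x => f (Lf s x)) _ (fun x => by
        rw [abs_of_nonneg (hf _).1]; exact (hf _).2)).trans ?_
      have h1 := abs_avg_prod_nu_sub_one_le hlfc {s}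
      simp only [prod_singleton] at h1
      have h2 : (avg fun x => ν (Lf s x)) ≤ 2 := by linarith [(abs_le.1 h1).2]
      calc _ ≤ 2 * (9 * θ) := mul_le_mul h2 hνD
            (avg_nonneg fun x => mul_nonneg (hν _) (sq_nonneg _)) zero_le_two
        _ ≤ (τ / 2) ^ 2 := by rw [hθ]; nlinarith [sq_nonneg τ]
    have hrest : |avg fun x => (f (Lf s x) - f' (Lf s x)) * W' x| ≤ τ / 2 := by
      have h1 := cut_bound hr s _ ρ hN (mix S f' u) (abs_mix_le_one S hf' hu) (mix_update S f' hui)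
      have h2 := cut_bound hr s _ ρ (Nle_neg hN) (mix S f' u) (abs_mix_le_one S hf' hu)
        (mix_update S f' hui)
      simp only [neg_mul, avg_neg] at h2
      rw [abs_le]
      constructor
      · linarith
      · linarith
    simp only [prod_mix_insert]
    have hsplit : (avg fun x => f (Lf s x) * W x) - (avg fun x => f' (Lf s x) * W' x) =
        (avg fun x => f (Lf s x) * (G x - G' x)) +
          avg fun x => (f (Lf s x) - f' (Lf s x)) * W' x := by
      rw [hproj (fun x => f (Lf s x)) (fun x t => by rw [Lf_update])]
      simp only [sub_mul, avg_sub]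
      ring
    calc _ = |(avg fun x => f (Lf s x) * (G x - G' x)) +
          avg fun x => (f (Lf s x) - f' (Lf s x)) * W' x| := congrArg abs hsplit
      _ ≤ τ / 2 + τ / 2 := (abs_add_le _ _).trans (add_le_add hmain hrest)
      _ = τ := by ring

end RelSz

/-- **Relative Szemerédi theorem.** For every `k ≥ 3` and `δ > 0` there exist `c > 0`,
`η > 0` and `N₀` such that for all `N ≥ N₀`: if `ν : ZMod N → ℝ≥0` satisfies the
`k`-linear forms condition within `η` and `0 ≤ f ≤ ν` pointwise with `E[f] ≥ δ`, then
`E[f(x) f(x+d) ⋯ f(x+(k-1)d) | x, d ∈ ZMod N] ≥ c`. -/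
theorem relative_szemeredi (k : ℕ) (hk : 3 ≤ k) (δ : ℝ) (hδ : 0 < δ) :
    ∃ c : ℝ, 0 < c ∧ ∃ η : ℝ, 0 < η ∧ ∃ N₀ : ℕ, ∀ N : ℕ, N₀ ≤ N → ∀ [NeZero N],
      ∀ ν : ZMod N → ℝ, (∀ x, 0 ≤ ν x) → kLinearFormsCondition k N ν η →
      ∀ f : ZMod N → ℝ, (∀ x, 0 ≤ f x ∧ f x ≤ ν x) → δ ≤ avg f →
      c ≤ avg (fun p : ZMod N × ZMod N =>
        ∏ i ∈ Finset.range k, f (p.1 + (i : ZMod N) * p.2)) := by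
  obtain ⟨r, rfl⟩ : ∃ r, k = r + 1 := ⟨k - 1, by omega⟩
  have hr : 2 ≤ r := by omega
  have : Nonempty (Fin r) := ⟨⟨0, by omega⟩⟩
  obtain ⟨c₀, hc₀, hsz⟩ := RelSz.szemeredi (r + 1) (by omega) (δ / 2) (by positivity)
  obtain ⟨ρ, hρ, hcount⟩ := RelSz.relative_counting r (by omega) univ (c₀ / 2) (by positivity)
  obtain ⟨c, hc, hdense⟩ := RelSz.dense_model (min ρ (δ / 2)) (by positivity)
  obtain ⟨ρ', hρ', hnu⟩ := RelSz.exists_Nle_nu_sub_one r hr c hc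
  refine ⟨c₀ / 2, by positivity, min ρ ρ', by positivity, 0, ?_⟩
  intro N _ _ ν hν hlfc f hf hδf
  obtain ⟨f', hf', hN⟩ := hdense (Fin r) r.factorial N ν f hf (hnu N ν _ (min_le_right _ _) hlfc)
  have h1 : δ / 2 ≤ avg f' := by
    have h2 := RelSz.avg_le_of_Nle hN
    rw [RelSz.avg_sub] at h2
    linarith [min_le_right ρ (δ / 2)]
  have h3 := hsz N f' hf' h1
  have h4 := hcount N ν f f' _ (min_le_left _ _) hf hf' hlfc
    (fun g hg hgi => (hN g hg hgi).trans (min_le_left _ _)) (fun _ _ => 0) (by simp) (by simp)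
  simp only [RelSz.mix, mem_univ, if_true] at h4
  rw [RelSz.avg_Lf (by omega), RelSz.avg_Lf (by omega)] at h4
  linarith [(abs_le.1 h4).1]
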